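/- arXiv:2411.14138 — 3 statements merged into one kernel-verified Lean document; each statement's English description precedes it below -/
import Mathlib

section
/- Let F be a strictly 1-balanced graph with s = e(F) ≥ 1 edges on r = v(F) ≥ 2 vertices, and set p* = ((aut(F)/r!) · ln(n) / C(n−1, r−1))^{1/s}. Then p* is a sharp threshold for the disappearance of F-isolated vertices in G(n,p): for every fixed ε > 0, if p = p(n) ≤ (1−ε)p* then with probability tending to 1 as n → ∞ some vertex of G(n,p) is contained in no copy of F, and if p = p(n) ≥ (1+ε)p* then with probability tending to 1 every vertex of G(n,p) is contained in a copy of F. -/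
open scoped Classical
open Filter Asymptotics

noncomputable section

/-! ### Basic graph quantities -/

/-- The number of edges of a simple graph. -/
def edgeCnt {V : Type*} (G : SimpleGraph V) : ℕ := G.edgeSet.ncard

/-- The 1-density `e(F)/(v(F)-1)` of a graph `F` on `r` vertices. -/
def d1 {r : ℕ} (F : SimpleGraph (Fin r)) : ℝ := (edgeCnt F : ℝ) / ((r : ℝ) - 1)

/-- `F` is strictly 1-balanced: every proper subgraph `S` with at least 2 vertices and at
least one edge satisfies `d₁(S) < d₁(F)`. -/
def Strictly1Balanced {r : ℕ} (F : SimpleGraph (Fin r)) : Prop :=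
  ∀ S : F.Subgraph, S ≠ ⊤ → 2 ≤ S.verts.ncard → 1 ≤ S.edgeSet.ncard →
    (S.edgeSet.ncard : ℝ) / ((S.verts.ncard : ℝ) - 1) < d1 F

/-- The number of automorphisms of `F`. -/
def autCard {r : ℕ} (F : SimpleGraph (Fin r)) : ℕ := Nat.card (F ≃g F)

/-! ### Copies of `F` in a graph, `F`-factors, `F`-isolated vertices -/

/-- `φ` is a copy of `F` in `G` (an embedding of `F` as a not necessarily induced subgraph). -/
def IsCopyIn {r n : ℕ} (F : SimpleGraph (Fin r)) (G : SimpleGraph (Fin n))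
    (φ : Fin r ↪ Fin n) : Prop :=
  ∀ u v, F.Adj u v → G.Adj (φ u) (φ v)

/-- `G` contains an `F`-factor: pairwise vertex-disjoint copies of `F` covering all vertices. -/
def HasFFactor {r n : ℕ} (F : SimpleGraph (Fin r)) (G : SimpleGraph (Fin n)) : Prop :=
  ∃ Φ : Finset (Fin r ↪ Fin n),
    (∀ φ ∈ Φ, IsCopyIn F G φ) ∧
    (∀ φ ∈ Φ, ∀ ψ ∈ Φ, φ ≠ ψ → ∀ x : Fin n, ¬(x ∈ Set.range φ ∧ x ∈ Set.range ψ)) ∧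
    (∀ x : Fin n, ∃ φ ∈ Φ, x ∈ Set.range φ)

/-- Vertex `x` is `F`-isolated in `G`: no copy of `F` in `G` contains `x`. -/
def FIsolated {r n : ℕ} (F : SimpleGraph (Fin r)) (G : SimpleGraph (Fin n)) (x : Fin n) : Prop :=
  ∀ φ : Fin r ↪ Fin n, IsCopyIn F G φ → x ∉ Set.range φ

/-! ### The random graph `G(n,p)` -/

/-- Probability of the event `P` in the Erdős–Rényi random graph `G(n,p)`. -/
def gnpProb (n : ℕ) (p : ℝ) (P : SimpleGraph (Fin n) → Prop) : ℝ :=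
  ∑ G : SimpleGraph (Fin n),
    if P G then p ^ edgeCnt G * (1 - p) ^ (n.choose 2 - edgeCnt G) else 0

/-- The sharp threshold `p* = ((aut F / r!) · ln n / C(n-1, r-1))^(1/e(F))`. -/
def pstar {r : ℕ} (F : SimpleGraph (Fin r)) (n : ℕ) : ℝ :=
  ((autCard F : ℝ) / (r.factorial : ℝ) * Real.log n / ((n - 1).choose (r - 1) : ℝ)) ^
    ((1 : ℝ) / (edgeCnt F : ℝ))

/-! ### `F`-edges and `F`-graphs -/

/-- An `F`-edge: a pair (vertex set, edge set); the copies of `F` among these are singled out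
by `FEdge.IsCopyOf`. -/
abbrev FEdge (V : Type*) := Finset V × Finset (Sym2 V)

/-- `h` is a copy of `F` with vertices in `V`. -/
def FEdge.IsCopyOf {r : ℕ} {V : Type*} (h : FEdge V) (F : SimpleGraph (Fin r)) : Prop :=
  ∃ φ : Fin r → V, Function.Injective φ ∧ (↑h.1 : Set V) = Set.range φ ∧
    (↑h.2 : Set (Sym2 V)) = Sym2.map φ '' F.edgeSet

/-- An `F`-graph: a vertex set together with a set of `F`-edges. -/
abbrev FGraph (V : Type*) := Finset V × Finset (FEdge V)

/-- Well-formedness of an `F`-graph w.r.t. `F`: every `F`-edge is a copy of `F` with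
vertices inside the vertex set. -/
def FGraph.Wf {r : ℕ} {V : Type*} (H : FGraph V) (F : SimpleGraph (Fin r)) : Prop :=
  ∀ h ∈ H.2, FEdge.IsCopyOf h F ∧ h.1 ⊆ H.1

/-- The edge set of the shadow graph of an `F`-graph. -/
def shadowEdges {V : Type*} [DecidableEq V] (H : FGraph V) : Finset (Sym2 V) :=
  H.2.sup Prod.snd

/-- The shadow graph of an `F`-graph. -/
def shadow {V : Type*} [DecidableEq V] (H : FGraph V) : SimpleGraph V :=
  SimpleGraph.fromEdgeSet ↑(shadowEdges H)

/-- Number of connected components of the shadow graph of `H` (on the vertex set of `H`). -/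
def compCount {V : Type*} [DecidableEq V] (H : FGraph V) : ℕ :=
  Nat.card ((shadow H).induce (↑H.1 : Set V)).ConnectedComponent

/-- An `F`-graph is connected if its shadow graph is. -/
def FGraphConnected {V : Type*} [DecidableEq V] (H : FGraph V) : Prop :=
  ((shadow H).induce (↑H.1 : Set V)).Connected

/-- The nullity `n(H) = (r-1)e(H) + c(H) - v(H)` of an `F`-graph. -/
def nullity (r : ℕ) {V : Type*} [DecidableEq V] (H : FGraph V) : ℤ :=
  ((r : ℤ) - 1) * H.2.card + compCount H - H.1.card

/-- An avoidable configuration: a connected `F`-graph of nullity at least 2. -/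
def Avoidable {r : ℕ} {V : Type*} [DecidableEq V] (F : SimpleGraph (Fin r))
    (H : FGraph V) : Prop :=
  FGraph.Wf H F ∧ FGraphConnected H ∧ 2 ≤ nullity r H

/-- The `F`-edge `h` is induced by the `F`-graph `H`: it is a copy of `F`, not an `F`-edge of
`H`, but all its edges lie in the shadow graph of `H`. -/
def InducedBy {r : ℕ} {V : Type*} [DecidableEq V] (F : SimpleGraph (Fin r)) (h : FEdge V)
    (H : FGraph V) : Prop :=
  FEdge.IsCopyOf h F ∧ h ∉ H.2 ∧ h.2 ⊆ shadowEdges H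

/-- `C` is a clean `F`-cycle of length `k`. -/
def IsCleanCycleOfLen {r : ℕ} {V : Type*} [DecidableEq V] (F : SimpleGraph (Fin r))
    (C : FGraph V) (k : ℕ) : Prop :=
  FGraph.Wf C F ∧ C.1 = C.2.sup Prod.fst ∧
  ((k = 2 ∧ ∃ h₁ h₂ : FEdge V, h₁ ≠ h₂ ∧ C.2 = {h₁, h₂} ∧ (h₁.1 ∩ h₂.1).card = 2) ∨
   (3 ≤ k ∧ ∃ h : Fin k → FEdge V, Function.Injective h ∧ C.2 = Finset.image h Finset.univ ∧
     ∃ v : Fin k → V, Function.Injective v ∧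
       (∀ i j : Fin k, ((i : ℕ) + 1) % k = (j : ℕ) → (h i).1 ∩ (h j).1 = {v i}) ∧
       (∀ i j : Fin k, i ≠ j → ((i : ℕ) + 1) % k ≠ (j : ℕ) → ((j : ℕ) + 1) % k ≠ (i : ℕ) →
         (h i).1 ∩ (h j).1 = ∅)))

/-- `C` is a clean `F`-cycle (of some length `k ≥ 2`). -/
def IsCleanCycle {r : ℕ} {V : Type*} [DecidableEq V] (F : SimpleGraph (Fin r))
    (C : FGraph V) : Prop :=
  ∃ k, IsCleanCycleOfLen F C k

/-- `C` is a sparse clean `F`-cycle: a clean `F`-cycle of length 2 whose two overlap vertices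
form an edge of both of its `F`-edges. -/
def IsSparse {r : ℕ} {V : Type*} [DecidableEq V] (F : SimpleGraph (Fin r))
    (C : FGraph V) : Prop :=
  IsCleanCycleOfLen F C 2 ∧ ∃ h₁ h₂ : FEdge V, h₁ ≠ h₂ ∧ C.2 = {h₁, h₂} ∧
    ∃ x y : V, x ≠ y ∧ h₁.1 ∩ h₂.1 = {x, y} ∧ s(x, y) ∈ h₁.2 ∧ s(x, y) ∈ h₂.2

/-! ### The random `F`-graph `H_F(n,π)` -/

/-- All potential `F`-edges on the vertex set `Fin n`. -/
def allFEdges (r n : ℕ) (F : SimpleGraph (Fin r)) : Finset (FEdge (Fin n)) :=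
  Finset.univ.filter fun h => FEdge.IsCopyOf h F

/-- Expectation of `X` under the random `F`-graph `H_F(n,π)`, whose `F`-edge set is a random
subset of `allFEdges r n F`, each `F`-edge present independently with probability `π`. -/
def hfExp (r n : ℕ) (F : SimpleGraph (Fin r)) (π : ℝ)
    (X : Finset (FEdge (Fin n)) → ℝ) : ℝ :=
  ∑ S ∈ (allFEdges r n F).powerset,
    π ^ S.card * (1 - π) ^ ((allFEdges r n F).card - S.card) * X S

/-- Probability of `P` under the random `F`-graph `H_F(n,π)`. -/
def hfProb (r n : ℕ) (F : SimpleGraph (Fin r)) (π : ℝ)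
    (P : Finset (FEdge (Fin n)) → Prop) : ℝ :=
  hfExp r n F π fun S => if P S then 1 else 0

/-! ### Maps, isomorphisms and copies of `F`-graphs -/

/-- Image of an `F`-edge under a vertex map. -/
def FEdge.map {V W : Type*} [DecidableEq W] (ψ : V → W) (h : FEdge V) : FEdge W :=
  (h.1.image ψ, h.2.image (Sym2.map ψ))

/-- Image of an `F`-graph under a vertex map. -/
def FGraph.map {V W : Type*} [DecidableEq V] [DecidableEq W] (ψ : V → W)
    (H : FGraph V) : FGraph W :=
  (H.1.image ψ, H.2.image (FEdge.map ψ))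

/-- `H` is isomorphic to `K` via a vertex bijection mapping `F`-edges to `F`-edges. -/
def FGraph.IsoTo {V W : Type*} [DecidableEq V] [DecidableEq W] (H : FGraph V)
    (K : FGraph W) : Prop :=
  ∃ ψ : V → W, Set.InjOn ψ ↑H.1 ∧ FGraph.map ψ H = K

/-- The number of copies of the `F`-graph `H` among a set `S` of `F`-edges on `Fin n`. -/
def copyCount {V : Type*} [DecidableEq V] (H : FGraph V) {n : ℕ}
    (S : Finset (FEdge (Fin n))) : ℕ :=
  Nat.card {K : FGraph (Fin n) // K.2 ⊆ S ∧ FGraph.IsoTo H K}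

/-- Union of two `F`-graphs. -/
def FGraph.union {V : Type*} [DecidableEq V] (H K : FGraph V) : FGraph V :=
  (H.1 ∪ K.1, H.2 ∪ K.2)

/-! ### d-graphs and the random d-graph `G*(n,p)` -/

/-- A d-graph: vertices, usual edges, and dummy edges (identified with sparse clean
`F`-cycles). -/
abbrev DGraph (V : Type*) := Finset V × Finset (Sym2 V) × Finset (FGraph V)

/-- All potential usual edges on `Fin n`. -/
def allUsual (n : ℕ) : Finset (Sym2 (Fin n)) := Finset.univ.filter fun e => ¬e.IsDiag

/-- All potential dummy edges on `Fin n`: the sparse clean `F`-cycles. -/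
def allDummies (r n : ℕ) (F : SimpleGraph (Fin r)) : Finset (FGraph (Fin n)) :=
  Finset.univ.filter fun C => IsSparse F C

/-- Expectation of `X` under the random d-graph `G*(n,p)`: each usual edge and each dummy
edge is included independently with probability `p`. -/
def dgExp (r n : ℕ) (F : SimpleGraph (Fin r)) (p : ℝ)
    (X : Finset (Sym2 (Fin n)) → Finset (FGraph (Fin n)) → ℝ) : ℝ :=
  ∑ U ∈ (allUsual n).powerset, ∑ D ∈ (allDummies r n F).powerset,
    p ^ (U.card + D.card) *
      (1 - p) ^ (((allUsual n).card - U.card) + ((allDummies r n F).card - D.card)) * X U D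

/-- Probability of `P` under the random d-graph `G*(n,p)`. -/
def dgProb (r n : ℕ) (F : SimpleGraph (Fin r)) (p : ℝ)
    (P : Finset (Sym2 (Fin n)) → Finset (FGraph (Fin n)) → Prop) : ℝ :=
  dgExp r n F p fun U D => if P U D then 1 else 0

/-- Image of a d-graph under a vertex map. -/
def DGraph.map {V W : Type*} [DecidableEq V] [DecidableEq W] (ψ : V → W)
    (K : DGraph V) : DGraph W :=
  (K.1.image ψ, K.2.1.image (Sym2.map ψ), K.2.2.image (FGraph.map ψ))

/-- `K` is isomorphic to `L` as a d-graph. -/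
def DGraph.IsoTo {V W : Type*} [DecidableEq V] [DecidableEq W] (K : DGraph V)
    (L : DGraph W) : Prop :=
  ∃ ψ : V → W, Set.InjOn ψ ↑K.1 ∧ DGraph.map ψ K = L

/-- The number of copies of the d-graph `K` inside the d-graph on `Fin n` with usual edges
`U` and dummy edges `D`. -/
def dCopyCount {V : Type*} [DecidableEq V] (K : DGraph V) {n : ℕ}
    (U : Finset (Sym2 (Fin n))) (D : Finset (FGraph (Fin n))) : ℕ :=
  Nat.card {L : DGraph (Fin n) // L.2.1 ⊆ U ∧ L.2.2 ⊆ D ∧ DGraph.IsoTo K L}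

/-- Union of two d-graphs. -/
def DGraph.union {V : Type*} [DecidableEq V] (K L : DGraph V) : DGraph V :=
  (K.1 ∪ L.1, K.2.1 ∪ L.2.1, K.2.2 ∪ L.2.2)

/-- `G` is the clean d-cycle corresponding to the clean `F`-cycle `C`: the shadow graph of
`C` if `C` is dense, together with the dummy edge `C` if `C` is sparse. -/
def IsCleanDCycleOf {r : ℕ} {V : Type*} [DecidableEq V] (F : SimpleGraph (Fin r))
    (G : DGraph V) (C : FGraph V) : Prop :=
  (IsCleanCycle F C ∧ ¬IsSparse F C ∧ G = (C.1, shadowEdges C, (∅ : Finset (FGraph V)))) ∨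
  (IsSparse F C ∧ G = (C.1, shadowEdges C, ({C} : Finset (FGraph V))))

namespace RG

/-- real indicator of a proposition -/
def ind (Q : Prop) : ℝ := if Q then 1 else 0

lemma ind_nonneg (Q : Prop) : 0 ≤ ind Q := by unfold ind; split_ifs <;> norm_num
lemma ind_le_one (Q : Prop) : ind Q ≤ 1 := by unfold ind; split_ifs <;> norm_num
lemma ind_mono {P Q : Prop} (h : P → Q) : ind P ≤ ind Q := by
  unfold ind; by_cases hP : P <;> by_cases hQ : Q <;> simp [hP, hQ]; exact absurd (h hP) hQ
lemma ind_and (P Q : Prop) : ind (P ∧ Q) = ind P * ind Q := by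
  unfold ind; by_cases hP : P <;> by_cases hQ : Q <;> simp [hP, hQ]
lemma ind_not (P : Prop) : ind (¬ P) = 1 - ind P := by
  unfold ind; by_cases hP : P <;> simp [hP]

section
variable {α : Type*} [Fintype α] [DecidableEq α]

def wt (p : ℝ) (A : Finset α) : ℝ := ∏ a, if a ∈ A then p else 1 - p

def Ex (p : ℝ) (f : Finset α → ℝ) : ℝ := ∑ A, wt p A * f A

lemma wt_eq (p : ℝ) (A : Finset α) :
    wt p A = p ^ A.card * (1 - p) ^ (Fintype.card α - A.card) := by
  unfold wt
  rw [Finset.prod_ite]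
  simp only [Finset.prod_const]
  congr 2
  · congr 1; ext; simp
  · rw [← Finset.card_compl]; congr 1; ext; simp

lemma wt_nonneg {p : ℝ} (h0 : 0 ≤ p) (h1 : p ≤ 1) (A : Finset α) : 0 ≤ wt p A :=
  Finset.prod_nonneg fun a _ => by split_ifs <;> linarith

lemma sum_wt (p : ℝ) : ∑ A : Finset α, wt p A = 1 := by
  simp only [wt_eq]
  rw [Fintype.sum_pow_mul_eq_add_pow]; simp

lemma Ex_one (p : ℝ) : Ex p (fun _ : Finset α => (1 : ℝ)) = 1 := by
  simp [Ex, sum_wt]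

lemma Ex_add (p : ℝ) (f g : Finset α → ℝ) : Ex p (fun A => f A + g A) = Ex p f + Ex p g := by
  simp [Ex, mul_add, Finset.sum_add_distrib]
lemma Ex_sub (p : ℝ) (f g : Finset α → ℝ) : Ex p (fun A => f A - g A) = Ex p f - Ex p g := by
  simp [Ex, mul_sub, Finset.sum_sub_distrib]
lemma Ex_mul (p c : ℝ) (f : Finset α → ℝ) : Ex p (fun A => c * f A) = c * Ex p f := by
  simp only [Ex, Finset.mul_sum]; refine Finset.sum_congr rfl fun A _ => by ring
lemma Ex_sum {ι : Type*} (p : ℝ) (I : Finset ι) (f : ι → Finset α → ℝ) :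
    Ex p (fun A => ∑ i ∈ I, f i A) = ∑ i ∈ I, Ex p (f i) := by
  simp only [Ex, Finset.mul_sum]; rw [Finset.sum_comm]
lemma Ex_mono {p : ℝ} (h0 : 0 ≤ p) (h1 : p ≤ 1) {f g : Finset α → ℝ} (h : ∀ A, f A ≤ g A) :
    Ex p f ≤ Ex p g :=
  Finset.sum_le_sum fun A _ => mul_le_mul_of_nonneg_left (h A) (wt_nonneg h0 h1 A)
lemma Ex_nonneg {p : ℝ} (h0 : 0 ≤ p) (h1 : p ≤ 1) {f : Finset α → ℝ} (h : ∀ A, 0 ≤ f A) :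
    0 ≤ Ex p f :=
  Finset.sum_nonneg fun A _ => mul_nonneg (wt_nonneg h0 h1 A) (h A)

lemma wt_insert (p : ℝ) (e : α) (A : Finset α) (he : e ∉ A) :
    (1 - p) * wt p (insert e A) = p * wt p A := by
  unfold wt
  rw [← Finset.mul_prod_erase Finset.univ _ (Finset.mem_univ e),
    ← Finset.mul_prod_erase Finset.univ (fun a => if a ∈ A then p else 1 - p) (Finset.mem_univ e)]
  have : ∏ x ∈ Finset.univ.erase e, (if x ∈ insert e A then p else 1 - p)
      = ∏ x ∈ Finset.univ.erase e, (if x ∈ A then p else 1 - p) := by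
    refine Finset.prod_congr rfl fun x hx => ?_
    have : x ≠ e := Finset.ne_of_mem_erase hx
    simp [this]
  rw [this]
  simp [he]; ring

lemma Ex_edge (p : ℝ) (e : α) (g : Finset α → ℝ) (hg : ∀ A, g (insert e A) = g A) :
    Ex p (fun A => ind (e ∈ A) * g A) = p * Ex p g := by
  have h1 : Ex p (fun A => ind (e ∈ A) * g A)
      = ∑ A ∈ Finset.univ.filter (fun A : Finset α => e ∈ A), wt p A * g A := by
    unfold Ex ind
    rw [Finset.sum_filter]
    refine Finset.sum_congr rfl fun A _ => ?_
    by_cases h : e ∈ A <;> simp [h]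
  have h2 : ∑ A ∈ Finset.univ.filter (fun A : Finset α => e ∈ A), wt p A * g A
      = ∑ A ∈ Finset.univ.filter (fun A : Finset α => e ∉ A), wt p (insert e A) * g A := by
    symm
    refine Finset.sum_bij' (fun A _ => insert e A) (fun A _ => A.erase e) ?_ ?_ ?_ ?_ ?_
    · intro A _; simp
    · intro A _; simp
    · intro A hA; simp at hA; simp [hA]
    · intro A hA; simp at hA; simp [hA]
    · intro A hA; rw [hg]
  have h3 : Ex p g = ∑ A ∈ Finset.univ.filter (fun A : Finset α => e ∈ A), wt p A * g A
      + ∑ A ∈ Finset.univ.filter (fun A : Finset α => e ∉ A), wt p A * g A := by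
    unfold Ex
    rw [Finset.sum_filter_add_sum_filter_not]
  have h4 : (1 - p) * ∑ A ∈ Finset.univ.filter (fun A : Finset α => e ∉ A), wt p (insert e A) * g A
      = p * ∑ A ∈ Finset.univ.filter (fun A : Finset α => e ∉ A), wt p A * g A := by
    rw [Finset.mul_sum, Finset.mul_sum]
    refine Finset.sum_congr rfl fun A hA => ?_
    have := wt_insert p e A (by simpa using hA)
    rw [← mul_assoc, this, mul_assoc]
  rw [h1, h3]
  rw [← h2] at h4
  linarith

lemma Ex_subset (p : ℝ) (S : Finset α) (g : Finset α → ℝ)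
    (hg : ∀ e ∈ S, ∀ A, g (insert e A) = g A) :
    Ex p (fun A => ind (S ⊆ A) * g A) = p ^ S.card * Ex p g := by
  induction S using Finset.induction_on with
  | empty => simp [ind]
  | insert e S he ih =>
    have h1 : (fun A => ind (insert e S ⊆ A) * g A)
        = fun A => ind (e ∈ A) * (ind (S ⊆ A) * g A) := by
      funext A
      rw [Finset.insert_subset_iff, ind_and, mul_assoc]
    rw [h1, Ex_edge, ih (fun a ha => hg a (Finset.mem_insert_of_mem ha)),
      Finset.card_insert_of_notMem he]
    · ring
    · intro A
      rw [hg e (Finset.mem_insert_self _ _)]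
      congr 2
      apply propext
      constructor
      · intro h x hx
        have := h hx
        rw [Finset.mem_insert] at this
        rcases this with rfl | h
        · exact absurd hx he
        · exact h
      · intro h; exact h.trans (Finset.subset_insert _ _)

lemma Ex_subset' (p : ℝ) (S : Finset α) : Ex p (fun A => ind (S ⊆ A)) = p ^ S.card := by
  have := Ex_subset p S (fun _ => 1) (by simp)
  simpa [Ex_one] using this

lemma harris {p : ℝ} (h0 : 0 ≤ p) (h1 : p ≤ 1) {f g : Finset α → ℝ} (hf0 : ∀ A, 0 ≤ f A)
    (hg0 : ∀ A, 0 ≤ g A) (hf : Monotone f) (hg : Monotone g) :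
    Ex p f * Ex p g ≤ Ex p (fun A => f A * g A) := by
  have := fkg (μ := wt (α := α) p) (f := f) (g := g) (fun A => wt_nonneg h0 h1 A) hf0 hg0 hf hg ?_
  · rw [sum_wt, one_mul] at this
    exact this
  · intro A B
    apply le_of_eq
    unfold wt
    rw [← Finset.prod_mul_distrib, ← Finset.prod_mul_distrib]
    refine Finset.prod_congr rfl fun a _ => ?_
    by_cases ha : a ∈ A <;> by_cases hb : a ∈ B <;> simp [ha, hb, mul_comm]

/-- increasing `f`, decreasing `g` -/
lemma harris_anti {p : ℝ} (h0 : 0 ≤ p) (h1 : p ≤ 1) {f g : Finset α → ℝ} (hf0 : ∀ A, 0 ≤ f A)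
    (hg1 : ∀ A, g A ≤ 1) (hf : Monotone f) (hg : Antitone g) :
    Ex p (fun A => f A * g A) ≤ Ex p f * Ex p g := by
  have := harris h0 h1 (f := f) (g := fun A => 1 - g A) hf0 (fun A => by linarith [hg1 A]) hf
    (fun A B h => by have := hg h; simp only; linarith)
  have e1 : (fun A => f A * (1 - g A)) = fun A => f A - f A * g A := by funext A; ring
  rw [e1, Ex_sub, Ex_sub, Ex_one] at this
  linarith

/-- both decreasing -/
lemma harris_dec {p : ℝ} (h0 : 0 ≤ p) (h1 : p ≤ 1) {f g : Finset α → ℝ} 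
    (hf1 : ∀ A, f A ≤ 1) (hg1 : ∀ A, g A ≤ 1) (hf : Antitone f) (hg : Antitone g) :
    Ex p f * Ex p g ≤ Ex p (fun A => f A * g A) := by
  have := harris_anti h0 h1 (f := fun A => 1 - f A) (g := g) (fun A => by linarith [hf1 A]) hg1
    (fun A B h => by have := hf h; simp only; linarith) hg
  have e1 : (fun A => (1 - f A) * g A) = fun A => g A - f A * g A := by funext A; ring
  rw [e1, Ex_sub, Ex_sub, Ex_one] at this
  linarith

lemma Ex_anti_p {p q : ℝ} (h0 : 0 < p) (hpq : p ≤ q) (hp1 : p < 1) (hq : q ≤ 1)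
    {f : Finset α → ℝ} (hf1 : ∀ A, f A ≤ 1) (hf : Antitone f) : Ex q f ≤ Ex p f := by
  set ρ : Finset α → ℝ := fun A => ∏ a, if a ∈ A then q / p else (1 - q) / (1 - p) with hρ
  have hw : ∀ A, wt p A * ρ A = wt q A := by
    intro A
    simp only [wt, hρ]
    rw [← Finset.prod_mul_distrib]
    refine Finset.prod_congr rfl fun a _ => ?_
    have : 1 - p ≠ 0 := by linarith
    split_ifs <;> field_simp
  have hE : ∀ g : Finset α → ℝ, Ex q g = Ex p (fun A => ρ A * g A) := by
    intro g
    unfold Ex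
    refine Finset.sum_congr rfl fun A _ => ?_
    rw [← hw]; ring
  have hq1 : 0 ≤ (1 - q) / (1 - p) := div_nonneg (by linarith) (by linarith)
  have hqp : (1 - q) / (1 - p) ≤ q / p := by
    have a : (1 - q) / (1 - p) ≤ 1 := by rw [div_le_one (by linarith)]; linarith
    have b : 1 ≤ q / p := by rw [le_div_iff₀ h0]; linarith
    linarith
  have := harris_anti h0.le hp1.le (f := ρ) (g := f) ?_ hf1 ?_ hf
  · rw [← hE] at this
    have h1 : Ex p ρ = 1 := by
      have := hE (fun _ => 1)
      simp only [mul_one] at this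
      rw [← this, Ex_one]
    rw [h1, one_mul] at this
    exact this
  · intro A
    exact Finset.prod_nonneg fun a _ => by split_ifs <;> linarith
  · intro A B h
    refine Finset.prod_le_prod (fun a _ => by split_ifs <;> linarith) fun a _ => ?_
    by_cases ha : a ∈ A
    · simp [ha, h ha]
    · simp only [ha, if_false]; split_ifs <;> linarith

/-- none of the sets in `I` is contained in `A` -/
def noneIn (I : Finset (Finset α)) (A : Finset α) : Prop := ∀ S ∈ I, ¬ S ⊆ A

lemma noneIn_anti (I : Finset (Finset α)) : Antitone (fun A => ind (noneIn I A)) := by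
  intro A B h
  exact ind_mono fun hB S hS hSA => hB S hS (hSA.trans h)

lemma noneIn_insert (I : Finset (Finset α)) (S : Finset α) (A : Finset α) :
    noneIn (insert S I) A ↔ ¬ S ⊆ A ∧ noneIn I A := by
  simp [noneIn]

lemma lower {p : ℝ} (h0 : 0 ≤ p) (h1 : p ≤ 1) (I : Finset (Finset α)) :
    ∏ S ∈ I, (1 - p ^ S.card) ≤ Ex p (fun A => ind (noneIn I A)) := by
  induction I using Finset.induction_on with
  | empty => simp [noneIn, ind, Ex_one]
  | insert S I hS ih =>
    rw [Finset.prod_insert hS]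
    simp only [noneIn_insert, ind_and]
    have h2 := harris_dec h0 h1 (f := fun A => ind (¬ S ⊆ A)) (g := fun A => ind (noneIn I A))
      (fun _ => ind_le_one _) (fun _ => ind_le_one _)
      (fun A B h => ind_mono fun hB hSA => hB (hSA.trans h)) (noneIn_anti I)
    have h3 : Ex p (fun A => ind (¬ S ⊆ A)) = 1 - p ^ S.card := by
      simp only [ind_not]
      rw [Ex_sub, Ex_one, Ex_subset']
    rw [h3] at h2
    refine le_trans (mul_le_mul_of_nonneg_left ih ?_) h2
    have := pow_le_one₀ h0 h1 (n := S.card)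
    linarith

def Del (p : ℝ) (S T : Finset α) : ℝ :=
  if S ≠ T ∧ ¬ Disjoint S T then p ^ (S ∪ T).card else 0

lemma Del_nonneg {p : ℝ} (h0 : 0 ≤ p) (S T : Finset α) : 0 ≤ Del p S T := by
  unfold Del; split_ifs <;> positivity

lemma janson_step {p : ℝ} (h0 : 0 ≤ p) (h1 : p ≤ 1) (I : Finset (Finset α)) (S : Finset α)
    (hS : S ∉ I) :
    Ex p (fun A => ind (noneIn (insert S I) A)) ≤
      Real.exp (-(p ^ S.card) + ∑ T ∈ I, Del p S T) * Ex p (fun A => ind (noneIn I A)) := by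
  set q := p ^ S.card - ∑ T ∈ I, Del p S T with hq
  set J := I.filter (fun T => Disjoint S T) with hJ
  have hle : Ex p (fun A => ind (noneIn I A)) ≤ Ex p (fun A => ind (noneIn J A)) := by
    refine Ex_mono h0 h1 fun A => ind_mono fun h T hT => h T (Finset.mem_filter.1 hT).1
  have hnn : 0 ≤ Ex p (fun A => ind (noneIn I A)) := Ex_nonneg h0 h1 fun A => ind_nonneg _
  -- key
  have key : q * Ex p (fun A => ind (noneIn J A)) ≤ Ex p (fun A => ind (S ⊆ A) * ind (noneIn I A)) := by
    have a1 : ∀ A, ind (S ⊆ A) * ind (noneIn J A)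
        - ∑ T ∈ I, (if S ≠ T ∧ ¬ Disjoint S T then ind (S ∪ T ⊆ A) * ind (noneIn J A) else 0)
        ≤ ind (S ⊆ A) * ind (noneIn I A) := by
      intro A
      have hnn' : ∀ T ∈ I, 0 ≤ (if S ≠ T ∧ ¬ Disjoint S T then ind (S ∪ T ⊆ A) * ind (noneIn J A) else 0) := by
        intro T _
        split_ifs
        · exact mul_nonneg (ind_nonneg _) (ind_nonneg _)
        · exact le_rfl
      have hsn := Finset.sum_nonneg hnn'
      by_cases hSA : S ⊆ A
      · by_cases hJA : noneIn J A
        · by_cases hIA : noneIn I A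
          · have : ind (noneIn I A) = 1 := by simp [ind, hIA]
            have : ind (noneIn J A) = 1 := by simp [ind, hJA]
            simp_all
          · have hIA' := hIA
            unfold noneIn at hIA'
            push Not at hIA'
            obtain ⟨T, hT, hTA⟩ := hIA'
            have hd : ¬ Disjoint S T := fun hd => hJA T (Finset.mem_filter.2 ⟨hT, hd⟩) hTA
            have hne : S ≠ T := fun h => hS (h ▸ hT)
            have h5 := Finset.single_le_sum hnn' hT
            rw [if_pos ⟨hne, hd⟩] at h5
            have i1 : ind (S ∪ T ⊆ A) = 1 := by simp [ind, Finset.union_subset hSA hTA]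
            have i2 : ind (noneIn J A) = 1 := by simp [ind, hJA]
            have i3 : ind (S ⊆ A) = 1 := by simp [ind, hSA]
            have i4 : ind (noneIn I A) = 0 := by simp [ind, hIA]
            rw [i1, i2] at h5
            rw [i3, i2, i4]
            simp only [i2] at h5 hsn ⊢
            linarith
        · have : ind (noneIn J A) = 0 := by simp [ind, hJA]
          simp only [this]
          have := mul_nonneg (ind_nonneg (S ⊆ A)) (ind_nonneg (noneIn I A))
          simpa using this
      · have : ind (S ⊆ A) = 0 := by simp [ind, hSA]
        rw [this]
        linarith
    have a2 := Ex_mono h0 h1 a1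
    rw [Ex_sub, Ex_sum] at a2
    have a3 : Ex p (fun A => ind (S ⊆ A) * ind (noneIn J A))
        = p ^ S.card * Ex p (fun A => ind (noneIn J A)) := by
      apply Ex_subset
      intro e he A
      congr 1
      apply propext
      constructor
      · intro h T hT hTA
        exact h T hT (hTA.trans (Finset.subset_insert _ _))
      · intro h T hT hTA
        apply h T hT
        intro x hx
        have h6 := hTA hx
        rw [Finset.mem_insert] at h6
        rcases h6 with rfl | h6
        · exact absurd hx (Finset.disjoint_left.1 (Finset.mem_filter.1 hT).2 he)
        · exact h6
    have a4 : ∀ T ∈ I, Ex p (fun A => if S ≠ T ∧ ¬ Disjoint S T then ind (S ∪ T ⊆ A) * ind (noneIn J A) else 0)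
        ≤ Del p S T * Ex p (fun A => ind (noneIn J A)) := by
      intro T _
      unfold Del
      split_ifs
      · have := harris_anti h0 h1 (f := fun A => ind (S ∪ T ⊆ A)) (g := fun A => ind (noneIn J A))
          (fun _ => ind_nonneg _) (fun _ => ind_le_one _)
          (fun A B h => ind_mono fun hA => Finset.Subset.trans hA h) (noneIn_anti J)
        rwa [Ex_subset'] at this
      · simp [Ex]
    have a5 := Finset.sum_le_sum a4
    rw [← Finset.sum_mul] at a5
    rw [a3] at a2
    rw [hq, sub_mul]
    linarith
  have key2 : q * Ex p (fun A => ind (noneIn I A)) ≤ Ex p (fun A => ind (S ⊆ A) * ind (noneIn I A)) := by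
    rcases le_total 0 q with h | h
    · exact (mul_le_mul_of_nonneg_left hle h).trans key
    · refine le_trans (mul_nonpos_of_nonpos_of_nonneg h hnn) ?_
      exact Ex_nonneg h0 h1 fun A => mul_nonneg (ind_nonneg _) (ind_nonneg _)
  have e1 : (fun A => ind (noneIn (insert S I) A))
      = fun A => ind (noneIn I A) - ind (S ⊆ A) * ind (noneIn I A) := by
    funext A
    rw [noneIn_insert, ind_and, ind_not]; ring
  rw [e1, Ex_sub]
  have h7 : 1 - q ≤ Real.exp (-(p ^ S.card) + ∑ T ∈ I, Del p S T) := by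
    have := Real.add_one_le_exp (-(p ^ S.card) + ∑ T ∈ I, Del p S T)
    linarith
  have := mul_le_mul_of_nonneg_right h7 hnn
  linarith

lemma janson {p : ℝ} (h0 : 0 ≤ p) (h1 : p ≤ 1) (I : Finset (Finset α)) :
    Ex p (fun A => ind (noneIn I A)) ≤
      Real.exp (-(∑ S ∈ I, p ^ S.card) + ∑ S ∈ I, ∑ T ∈ I, Del p S T) := by
  induction I using Finset.induction_on with
  | empty => simp [noneIn, ind, Ex_one]
  | insert S I hS ih =>
    refine (janson_step h0 h1 I S hS).trans ?_
    refine (mul_le_mul_of_nonneg_left ih (Real.exp_pos _).le).trans ?_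
    rw [← Real.exp_add]
    apply Real.exp_le_exp.2
    rw [Finset.sum_insert hS, Finset.sum_insert hS, Finset.sum_insert hS]
    have : ∑ T ∈ I, ∑ U ∈ I, Del p T U ≤ ∑ T ∈ I, ∑ U ∈ insert S I, Del p T U := by
      refine Finset.sum_le_sum fun T _ => ?_
      rw [Finset.sum_insert hS]
      linarith [Del_nonneg h0 T S]
    have := Del_nonneg h0 S S
    linarith

end
end RG

namespace RG

abbrev Ed (n : ℕ) := {e : Sym2 (Fin n) // ¬ e.IsDiag}

def gOf {n : ℕ} (A : Finset (Ed n)) : SimpleGraph (Fin n) :=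
  SimpleGraph.fromEdgeSet (Subtype.val '' (A : Set (Ed n)))

lemma gOf_edgeSet {n : ℕ} (A : Finset (Ed n)) :
    (gOf A).edgeSet = Subtype.val '' (A : Set (Ed n)) := by
  unfold gOf
  rw [SimpleGraph.edgeSet_fromEdgeSet]
  ext e
  simp only [Set.mem_diff, Set.mem_image]
  constructor
  · exact fun h => h.1
  · rintro ⟨a, ha, rfl⟩
    exact ⟨⟨a, ha, rfl⟩, a.2⟩

lemma edgeCnt_gOf {n : ℕ} (A : Finset (Ed n)) : edgeCnt (gOf A) = A.card := by
  unfold edgeCnt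
  rw [gOf_edgeSet, Set.ncard_image_of_injective _ Subtype.val_injective, Set.ncard_coe_finset]

lemma gOf_bij (n : ℕ) : Function.Bijective (gOf (n := n)) := by
  constructor
  · intro A B h
    have h2 := congrArg SimpleGraph.edgeSet h
    rw [gOf_edgeSet, gOf_edgeSet] at h2
    exact Finset.coe_injective (Subtype.val_injective.image_injective h2)
  · intro G
    refine ⟨Finset.univ.filter (fun e => e.1 ∈ G.edgeSet), ?_⟩
    apply SimpleGraph.edgeSet_injective
    rw [gOf_edgeSet]
    ext e
    simp only [Finset.coe_filter, Finset.mem_univ, true_and, Set.mem_image, Set.mem_setOf_eq]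
    constructor
    · rintro ⟨a, ha, rfl⟩; exact ha
    · intro h; exact ⟨⟨e, G.not_isDiag_of_mem_edgeSet h⟩, h, rfl⟩

lemma gnp_eq (n : ℕ) (p : ℝ) (P : SimpleGraph (Fin n) → Prop) :
    gnpProb n p P = Ex p (fun A : Finset (Ed n) => ind (P (gOf A))) := by
  unfold gnpProb Ex
  rw [← (gOf_bij n).sum_comp]
  refine Finset.sum_congr rfl fun A _ => ?_
  rw [edgeCnt_gOf, wt_eq, Sym2.card_subtype_not_diag, Fintype.card_fin]
  unfold ind
  by_cases h : P (gOf A) <;> simp [h]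

section
variable {r n : ℕ} (F : SimpleGraph (Fin r))

def eI (φ : Fin r ↪ Fin n) : Finset (Ed n) :=
  Finset.univ.filter (fun e => ∃ f ∈ F.edgeSet, Sym2.map φ f = e.1)

lemma mem_eI (φ : Fin r ↪ Fin n) (e : Ed n) :
    e ∈ eI F φ ↔ ∃ f ∈ F.edgeSet, Sym2.map φ f = e.1 := by simp [eI]

lemma map_not_diag (φ : Fin r ↪ Fin n) (f : Sym2 (Fin r)) (hf : f ∈ F.edgeSet) :
    ¬ (Sym2.map φ f).IsDiag := by
  induction f using Sym2.ind with
  | _ u v =>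
    simp only [Sym2.map_mk, Sym2.mk_isDiag_iff]
    intro h
    have := φ.injective h
    subst this
    exact F.loopless.irrefl _ hf

lemma isCopy_iff (φ : Fin r ↪ Fin n) (A : Finset (Ed n)) :
    IsCopyIn F (gOf A) φ ↔ eI F φ ⊆ A := by
  constructor
  · intro h e he
    rw [mem_eI] at he
    obtain ⟨f, hf, hfe⟩ := he
    induction f using Sym2.ind with
    | _ u v =>
      have h1 := h u v hf
      rw [← SimpleGraph.mem_edgeSet, gOf_edgeSet] at h1
      obtain ⟨a, ha, hae⟩ := h1
      have : a = e := Subtype.ext (by rw [hae, ← hfe]; rfl)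
      rw [← this]; exact ha
  · intro h u v huv
    rw [← SimpleGraph.mem_edgeSet, gOf_edgeSet]
    refine ⟨⟨s(φ u, φ v), ?_⟩, h ?_, rfl⟩
    · exact map_not_diag F φ s(u, v) huv
    · rw [mem_eI]
      exact ⟨s(u, v), huv, rfl⟩

lemma eI_image (φ : Fin r ↪ Fin n) :
    Subtype.val '' (eI F φ : Set (Ed n)) = Sym2.map φ '' F.edgeSet := by
  ext e
  simp only [Set.mem_image, Finset.mem_coe, mem_eI]
  constructor
  · rintro ⟨a, ⟨f, hf, h⟩, rfl⟩; exact ⟨f, hf, h⟩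
  · rintro ⟨f, hf, rfl⟩; exact ⟨⟨_, map_not_diag F φ f hf⟩, ⟨f, hf, rfl⟩, rfl⟩

lemma card_eI (φ : Fin r ↪ Fin n) : (eI F φ).card = edgeCnt F := by
  rw [← Set.ncard_coe_finset, ← Set.ncard_image_of_injective _ Subtype.val_injective, eI_image,
    Set.ncard_image_of_injective _ (Sym2.map.injective φ.injective)]
  rfl

/-- copies containing `x` or `y` -/
def Im (x y : Fin n) : Finset (Finset (Ed n)) :=
  (Finset.univ.filter (fun φ : Fin r ↪ Fin n => x ∈ Set.range φ ∨ y ∈ Set.range φ)).image (eI F)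

lemma mem_Im (x y : Fin n) (S : Finset (Ed n)) :
    S ∈ Im F x y ↔ ∃ φ : Fin r ↪ Fin n, (x ∈ Set.range φ ∨ y ∈ Set.range φ) ∧ eI F φ = S := by
  simp only [Im, Finset.mem_image, Finset.mem_filter, Finset.mem_univ, true_and]

lemma card_of_mem_Im {x y : Fin n} {S : Finset (Ed n)} (h : S ∈ Im F x y) :
    S.card = edgeCnt F := by
  obtain ⟨φ, -, rfl⟩ := (mem_Im F x y S).1 h
  exact card_eI F φ

lemma iso_iff (x y : Fin n) (A : Finset (Ed n)) :
    (FIsolated F (gOf A) x ∧ FIsolated F (gOf A) y) ↔ noneIn (Im F x y) A := by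
  simp only [FIsolated, isCopy_iff, noneIn, mem_Im]
  constructor
  · rintro ⟨h1, h2⟩ S ⟨φ, h, rfl⟩ hS
    rcases h with h | h
    · exact h1 φ hS h
    · exact h2 φ hS h
  · intro h
    exact ⟨fun φ hφ hx => h _ ⟨φ, Or.inl hx, rfl⟩ hφ, fun φ hφ hx => h _ ⟨φ, Or.inr hx, rfl⟩ hφ⟩

lemma iso_iff_one (x : Fin n) (A : Finset (Ed n)) :
    FIsolated F (gOf A) x ↔ noneIn (Im F x x) A := by
  rw [← iso_iff]; simp

variable {F}

lemma noiso (hs : 1 ≤ edgeCnt F) (hF : Strictly1Balanced F) (v : Fin r) :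
    ∃ w, F.Adj v w := by
  by_contra! hv
  have hs' : F.edgeSet.Nonempty := by
    rw [← Set.ncard_pos]; exact hs
  obtain ⟨f, hf⟩ := hs'
  have hr3 : 3 ≤ r := by
    induction f using Sym2.ind with
    | _ u w =>
      have huw : F.Adj u w := hf
      have h1 : u ≠ w := huw.ne
      have h2 : v ≠ u := by rintro rfl; exact hv _ huw
      have h3 : v ≠ w := by rintro rfl; exact hv _ huw.symm
      have : ({v, u, w} : Finset (Fin r)).card = 3 := Finset.card_eq_three.2 ⟨v, u, w, h2, h3, h1, rfl⟩
      rw [← this]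
      exact (Finset.card_le_univ _).trans (by simp)
  let S : F.Subgraph :=
    { verts := {v}ᶜ
      Adj := F.Adj
      adj_sub := fun h => h
      edge_vert := by
        intro a b hab
        simp only [Set.mem_compl_iff, Set.mem_singleton_iff]
        rintro rfl
        exact hv _ hab
      symm := F.symm }
  have hSe : S.edgeSet = F.edgeSet := by
    ext e
    induction e using Sym2.ind with
    | _ a b => rfl
  have hSv : S.verts.ncard = r - 1 := by
    have : S.verts = {v}ᶜ := rfl
    rw [this, Set.ncard_compl]; simp
  have h := hF S (by
    intro h
    have : v ∈ S.verts := by rw [h]; trivial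
    exact this rfl) (by omega) (by rw [hSe]; exact hs)
  rw [hSe, hSv] at h
  unfold d1 edgeCnt at h
  rw [Nat.cast_sub (by omega)] at h
  have h3 : (3 : ℝ) ≤ r := by exact_mod_cast hr3
  have : (F.edgeSet.ncard : ℝ) / ((r : ℝ) - 1) ≤ F.edgeSet.ncard / (((r : ℝ) - (1 : ℕ)) - 1) := by
    push_cast
    apply div_le_div_of_nonneg_left <;> first | positivity | linarith
  linarith

lemma adj_of_mem (φ : Fin r ↪ Fin n) (u v : Fin r) (h : ¬ s(φ u, φ v).IsDiag) :
    (⟨s(φ u, φ v), h⟩ : Ed n) ∈ eI F φ ↔ F.Adj u v := by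
  rw [mem_eI]
  constructor
  · rintro ⟨f, hf, h⟩
    have : Sym2.map φ f = Sym2.map φ s(u, v) := h
    rw [(Sym2.map.injective φ.injective) this] at hf
    exact hf
  · intro h
    exact ⟨s(u, v), h, rfl⟩

lemma range_sub (hs : 1 ≤ edgeCnt F) (hF : Strictly1Balanced F) {φ ψ : Fin r ↪ Fin n}
    (h : eI F φ = eI F ψ) : Set.range φ ⊆ Set.range ψ := by
  rintro _ ⟨u, rfl⟩
  obtain ⟨w, hw⟩ := noiso hs hF u
  have hd := map_not_diag F φ s(u, w) hw
  have h1 : (⟨s(φ u, φ w), hd⟩ : Ed n) ∈ eI F φ := (adj_of_mem φ u w hd).2 hw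
  rw [h, mem_eI] at h1
  obtain ⟨f, hf, hfe⟩ := h1
  have : φ u ∈ Sym2.map ψ f := by
    rw [hfe]; simp
  rw [Sym2.mem_map] at this
  obtain ⟨a, -, ha⟩ := this
  exact ⟨a, ha⟩

lemma range_eq (hs : 1 ≤ edgeCnt F) (hF : Strictly1Balanced F) {φ ψ : Fin r ↪ Fin n}
    (h : eI F φ = eI F ψ) : Set.range φ = Set.range ψ :=
  (range_sub hs hF h).antisymm (range_sub hs hF h.symm)

lemma fiber_card (hs : 1 ≤ edgeCnt F) (hF : Strictly1Balanced F) (φ : Fin r ↪ Fin n) :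
    (Finset.univ.filter (fun ψ : Fin r ↪ Fin n => eI F ψ = eI F φ)).card = autCard F := by
  unfold autCard
  rw [← Fintype.card_subtype, ← Nat.card_eq_fintype_card]
  symm
  have key : ∀ σ : F ≃g F, eI F (σ.toEquiv.toEmbedding.trans φ) = eI F φ := by
    intro σ
    apply Finset.coe_injective
    apply Subtype.val_injective.image_injective
    rw [eI_image, eI_image]
    ext e
    simp only [Set.mem_image]
    constructor
    · rintro ⟨f, hf, rfl⟩
      induction f using Sym2.ind with
      | _ a b =>
        refine ⟨s(σ a, σ b), ?_, rfl⟩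
        exact σ.map_rel_iff.2 hf
    · rintro ⟨f, hf, rfl⟩
      induction f using Sym2.ind with
      | _ a b =>
        refine ⟨s(σ.symm a, σ.symm b), ?_, ?_⟩
        · exact σ.symm.map_rel_iff.2 hf
        · simp [Sym2.map_mk]
  refine Nat.card_congr (Equiv.ofBijective
    (fun σ : F ≃g F => (⟨σ.toEquiv.toEmbedding.trans φ, key σ⟩ :
      {ψ : Fin r ↪ Fin n // eI F ψ = eI F φ})) ⟨?_, ?_⟩)
  · intro σ τ h
    have h1 := congrArg Subtype.val h
    ext a
    have h2 := DFunLike.congr_fun h1 a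
    have h3 : φ (σ a) = φ (τ a) := h2
    rw [φ.injective h3]
  · rintro ⟨ψ, hψ⟩
    have hr := range_eq hs hF hψ
    have hex : ∀ a, ∃ b, φ b = ψ a := by
      intro a
      have : ψ a ∈ Set.range φ := hr ▸ ⟨a, rfl⟩
      exact this
    choose g hg using hex
    have ginj : Function.Injective g := by
      intro a b hab
      apply ψ.injective
      rw [← hg, ← hg, hab]
    have gbij : Function.Bijective g := Finite.injective_iff_bijective.1 ginj
    have hadj : ∀ a b, F.Adj (g a) (g b) ↔ F.Adj a b := by
      intro a b
      by_cases hab : a = b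
      · subst hab; simp
      · have hd : ¬ (s(ψ a, ψ b)).IsDiag := by
          simp only [Sym2.mk_isDiag_iff]; exact fun h => hab (ψ.injective h)
        rw [← adj_of_mem ψ a b hd, hψ]
        have hd' : ¬ (s(φ (g a), φ (g b))).IsDiag := by rw [hg, hg]; exact hd
        rw [← adj_of_mem φ (g a) (g b) hd']
        simp only [hg]
    refine ⟨⟨Equiv.ofBijective g gbij, ?_⟩, ?_⟩
    · intro a b; exact hadj a b
    · apply Subtype.ext
      ext a
      simp only [Function.Embedding.trans_apply]
      exact congrArg _ (hg a)

lemma count_through (hr : 1 ≤ r) (x : Fin n) :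
    (Finset.univ.filter (fun φ : Fin r ↪ Fin n => x ∈ Set.range φ)).card
      = r.factorial * (n - 1).choose (r - 1) := by
  have h1 : (Finset.univ.filter (fun φ : Fin r ↪ Fin n => ¬ x ∈ Set.range φ)).card
      = (n - 1).descFactorial r := by
    have e : {φ : Fin r ↪ Fin n // ¬ x ∈ Set.range φ} ≃ (Fin r ↪ {y : Fin n // y ≠ x}) :=
      { toFun := fun φ => ⟨fun i => ⟨φ.1 i, fun h => φ.2 ⟨i, h⟩⟩, fun a b h =>
          φ.1.injective (congrArg Subtype.val h)⟩
        invFun := fun ψ => ⟨ψ.trans (Function.Embedding.subtype _), by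
          rintro ⟨i, hi⟩; exact (ψ i).2 hi⟩
        left_inv := fun φ => by ext; rfl
        right_inv := fun ψ => by ext; rfl }
    rw [← Fintype.card_subtype, Fintype.card_congr e, Fintype.card_embedding_eq]
    simp
  have h2 := Finset.card_filter_add_card_filter_not (s := (Finset.univ : Finset (Fin r ↪ Fin n)))
    (fun φ => x ∈ Set.range φ)
  rw [h1, Finset.card_univ, Fintype.card_embedding_eq] at h2
  simp only [Fintype.card_fin] at h2
  have hn : 0 < n := x.pos
  obtain ⟨m, rfl⟩ : ∃ m, n = m + 1 := ⟨n - 1, by omega⟩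
  obtain ⟨k, rfl⟩ : ∃ k, r = k + 1 := ⟨r - 1, by omega⟩
  rw [Nat.descFactorial_eq_factorial_mul_choose, Nat.descFactorial_eq_factorial_mul_choose,
    Nat.choose_succ_succ] at h2
  simp only [Nat.add_sub_cancel, Nat.succ_eq_add_one] at h2 ⊢
  rw [mul_add] at h2
  omega

lemma card_Im_self (hr : 1 ≤ r) (hs : 1 ≤ edgeCnt F) (hF : Strictly1Balanced F) (x : Fin n) :
    (Im F x x).card * autCard F = r.factorial * (n - 1).choose (r - 1) := by
  rw [← count_through hr x]
  unfold Im
  simp only [or_self]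
  rw [Finset.card_eq_sum_card_image (eI F) (Finset.univ.filter (fun φ : Fin r ↪ Fin n => x ∈ Set.range φ))]
  rw [Finset.sum_const_nat (m := autCard F)]
  intro S hS
  obtain ⟨φ, hφ, rfl⟩ := Finset.mem_image.1 hS
  rw [← fiber_card hs hF φ]
  congr 1
  ext ψ
  simp only [Finset.mem_filter, Finset.mem_univ, true_and] at hφ ⊢
  constructor
  · exact fun h => h.2
  · intro h; exact ⟨by rw [range_eq hs hF h]; exact hφ, h⟩

end
end RG

namespace RG

lemma sum_image_le' {ι κ : Type*} [DecidableEq κ] (s : Finset ι) (f : ι → κ) (h : κ → ℝ) (hh : ∀ k, 0 ≤ h k) :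
    ∑ k ∈ s.image f, h k ≤ ∑ i ∈ s, h (f i) := by
  induction s using Finset.induction_on with
  | empty => simp
  | insert a s ha ih =>
    rw [Finset.image_insert, Finset.sum_insert ha]
    by_cases hm : f a ∈ s.image f
    · rw [Finset.insert_eq_of_mem hm]; linarith [hh (f a)]
    · rw [Finset.sum_insert hm]; linarith

lemma term_bound {p L : ℝ} {n r s j e : ℕ} (hp : 0 ≤ p) (hL : 1 ≤ L) (hn : 1 ≤ n) (hs : 1 ≤ s)
    (hr : 2 ≤ r) (hj : 2 ≤ j) (hjr : j ≤ r) (hes : e ≤ s)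
    (hpL : p ^ s * (n : ℝ) ^ (r - 1) ≤ L) (hb : (r - 1) * e + 1 ≤ s * (j - 1)) :
    p ^ (2 * s - e) * (n : ℝ) ^ (2 * r - 1 - j) ≤ L ^ 2 * (n : ℝ) ^ (-(1 : ℝ) / s) := by
  have hn0 : (1 : ℝ) ≤ n := by exact_mod_cast hn
  have hnpos : (0 : ℝ) < n := by linarith
  have hexp : s * (2 * r - 1 - j) + 1 ≤ (r - 1) * (2 * s - e) := by
    obtain ⟨a, rfl⟩ : ∃ a, r = a + 1 := ⟨r - 1, by omega⟩
    obtain ⟨b, rfl⟩ : ∃ b, j = b + 1 := ⟨j - 1, by omega⟩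
    obtain ⟨c, rfl⟩ : ∃ c, s = e + c := ⟨s - e, by omega⟩
    obtain ⟨d, rfl⟩ : ∃ d, a = b + d := ⟨a - b, by omega⟩
    have h1 : 2 * (b + d + 1) - 1 - (b + 1) = b + 2 * d := by omega
    have h2 : 2 * (e + c) - e = e + 2 * c := by omega
    rw [h1, h2]
    simp only [Nat.add_sub_cancel] at hb ⊢
    nlinarith
  apply le_of_pow_le_pow_left₀ (n := s) (by omega) (by positivity)
  have h1 : (p ^ (2 * s - e) * (n : ℝ) ^ (2 * r - 1 - j)) ^ s * n ≤ L ^ (2 * s) := by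
    calc (p ^ (2 * s - e) * (n : ℝ) ^ (2 * r - 1 - j)) ^ s * n
        = (p ^ s) ^ (2 * s - e) * (n : ℝ) ^ (s * (2 * r - 1 - j) + 1) := by
          rw [mul_pow, ← pow_mul, ← pow_mul, ← pow_mul, pow_succ, mul_comm (2 * s - e) s,
            mul_comm (2 * r - 1 - j) s]; ring
      _ ≤ (p ^ s) ^ (2 * s - e) * (n : ℝ) ^ ((r - 1) * (2 * s - e)) := by
          gcongr
      _ = (p ^ s * (n : ℝ) ^ (r - 1)) ^ (2 * s - e) := by
          rw [mul_pow, ← pow_mul (n : ℝ)]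
      _ ≤ L ^ (2 * s - e) := by gcongr
      _ ≤ L ^ (2 * s) := pow_le_pow_right₀ hL (by omega)
  have h2 : (L ^ 2 * (n : ℝ) ^ (-(1 : ℝ) / s)) ^ s = L ^ (2 * s) / n := by
    rw [mul_pow, ← pow_mul, ← Real.rpow_natCast ((n : ℝ) ^ (-(1 : ℝ) / s)), ← Real.rpow_mul hnpos.le]
    have : (s : ℝ) ≠ 0 := by positivity
    rw [div_mul_cancel₀ _ this, Real.rpow_neg_one]
    rfl
  rw [h2, le_div_iff₀ hnpos]
  exact h1

section
variable {r n : ℕ} {F : SimpleGraph (Fin r)}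

def jn (φ ψ : Fin r ↪ Fin n) : ℕ := (Finset.univ.filter (fun i => ψ i ∈ Set.range φ)).card

lemma overlap (hr : 2 ≤ r) (hF : Strictly1Balanced F) (φ ψ : Fin r ↪ Fin n)
    (hne : eI F φ ≠ eI F ψ) (hd : ¬ Disjoint (eI F φ) (eI F ψ)) :
    2 ≤ jn φ ψ ∧ (r - 1) * (eI F φ ∩ eI F ψ).card + 1 ≤ edgeCnt F * (jn φ ψ - 1) := by
  let J : F.Subgraph :=
    { verts := {i | ψ i ∈ Set.range φ}
      Adj := fun u v => F.Adj u v ∧ s(ψ u, ψ v) ∈ Sym2.map φ '' F.edgeSet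
      adj_sub := fun h => h.1
      edge_vert := by
        rintro u v ⟨h, f, hf, hfe⟩
        have : ψ u ∈ Sym2.map φ f := by rw [hfe]; simp
        rw [Sym2.mem_map] at this
        obtain ⟨a, -, ha⟩ := this
        exact ⟨a, ha⟩
      symm := by
        constructor
        rintro u v ⟨h, h2⟩
        refine ⟨h.symm, ?_⟩
        rw [Sym2.eq_swap]; exact h2 }
  have hJv : J.verts.ncard = jn φ ψ := by
    unfold jn
    rw [← Set.ncard_coe_finset]
    congr 1
    ext i; simp [J]
  have hJe0 : Sym2.map ψ '' J.edgeSet = Subtype.val '' ((eI F φ ∩ eI F ψ : Finset (Ed n)) : Set (Ed n)) := by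
    rw [Finset.coe_inter, Set.image_inter Subtype.val_injective, eI_image, eI_image]
    ext e
    constructor
    · rintro ⟨f, hf, rfl⟩
      induction f using Sym2.ind with
      | _ a b =>
        have hf' : F.Adj a b ∧ s(ψ a, ψ b) ∈ Sym2.map φ '' F.edgeSet := hf
        exact ⟨hf'.2, s(a, b), hf'.1, rfl⟩
    · rintro ⟨h1, f, hf, rfl⟩
      induction f using Sym2.ind with
      | _ a b =>
        exact ⟨s(a, b), ⟨hf, h1⟩, rfl⟩
  have hJe : J.edgeSet.ncard = (eI F φ ∩ eI F ψ).card := by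
    rw [← Set.ncard_image_of_injective _ (Sym2.map.injective ψ.injective), hJe0,
      Set.ncard_image_of_injective _ Subtype.val_injective, Set.ncard_coe_finset]
  have he1 : 1 ≤ (eI F φ ∩ eI F ψ).card := by
    rw [Nat.one_le_iff_ne_zero]
    intro h
    exact hd (Finset.disjoint_iff_inter_eq_empty.2 (Finset.card_eq_zero.1 h))
  have hj2 : 2 ≤ jn φ ψ := by
    rw [← hJe] at he1
    have : J.edgeSet.Nonempty := (Set.ncard_pos (Set.toFinite _)).1 he1
    obtain ⟨f, hf⟩ := this
    induction f using Sym2.ind with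
    | _ a b =>
      have hab : J.Adj a b := hf
      have h1 := J.edge_vert hab
      have h2 := J.edge_vert hab.symm
      rw [← hJv]
      have : ({a, b} : Set (Fin r)) ⊆ J.verts := by
        rintro x (rfl | rfl)
        · exact h1
        · exact h2
      rw [← Set.ncard_pair hab.ne]
      exact Set.ncard_le_ncard this
  refine ⟨hj2, ?_⟩
  have hJt : J ≠ ⊤ := by
    intro h
    apply hne
    have h1 : (eI F φ ∩ eI F ψ).card = (eI F ψ).card := by
      rw [← hJe, h, card_eI]
      simp [edgeCnt]
    have h2 : eI F φ ∩ eI F ψ = eI F ψ := Finset.eq_of_subset_of_card_le Finset.inter_subset_right h1.ge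
    have h3 : eI F φ ∩ eI F ψ = eI F φ := Finset.eq_of_subset_of_card_le Finset.inter_subset_left
      (by rw [h1, card_eI, card_eI])
    rw [← h3, h2]
  have h := hF J hJt (by rw [hJv]; exact hj2) (by rw [hJe]; exact he1)
  rw [hJv, hJe, d1] at h
  have hr' : (0 : ℝ) < (r : ℝ) - 1 := by
    have : (2 : ℝ) ≤ r := by exact_mod_cast hr
    linarith
  have hj' : (0 : ℝ) < (jn φ ψ : ℝ) - 1 := by
    have : (2 : ℝ) ≤ jn φ ψ := by exact_mod_cast hj2
    linarith
  rw [div_lt_div_iff₀ hj' hr'] at h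
  have h4 : (((r - 1) * (eI F φ ∩ eI F ψ).card : ℕ) : ℝ) < ((edgeCnt F * (jn φ ψ - 1) : ℕ) : ℝ) := by
    push_cast [Nat.cast_sub (show 1 ≤ r by omega), Nat.cast_sub (show 1 ≤ jn φ ψ by omega)]
    linarith
  exact_mod_cast h4

lemma Del_bound {p L : ℝ} (hr : 2 ≤ r) (hs : 1 ≤ edgeCnt F) (hF : Strictly1Balanced F)
    (hp : 0 ≤ p) (hL : 1 ≤ L) (hn : 1 ≤ n) (hpL : p ^ edgeCnt F * (n : ℝ) ^ (r - 1) ≤ L)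
    (φ ψ : Fin r ↪ Fin n) :
    Del p (eI F φ) (eI F ψ) ≤
      L ^ 2 * (n : ℝ) ^ (-(1 : ℝ) / edgeCnt F) / (n : ℝ) ^ (2 * r - 1) * (n : ℝ) ^ (jn φ ψ) := by
  have hnpos : (0 : ℝ) < n := by exact_mod_cast hn
  unfold Del
  split_ifs with h
  · obtain ⟨h1, h2⟩ := overlap hr hF φ ψ h.1 h.2
    have hjr : jn φ ψ ≤ r := by
      unfold jn; exact (Finset.card_le_univ _).trans (by simp)
    have hes : (eI F φ ∩ eI F ψ).card ≤ edgeCnt F := by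
      rw [← card_eI F φ]; exact Finset.card_le_card Finset.inter_subset_left
    have h3 := term_bound hp hL hn hs hr h1 hjr hes hpL h2
    have h4 : (eI F φ ∪ eI F ψ).card = 2 * edgeCnt F - (eI F φ ∩ eI F ψ).card := by
      have := Finset.card_union_add_card_inter (eI F φ) (eI F ψ)
      rw [card_eI, card_eI] at this
      omega
    rw [h4, div_mul_eq_mul_div, le_div_iff₀ (by positivity)]
    calc _ = p ^ (2 * edgeCnt F - (eI F φ ∩ eI F ψ).card) * (n : ℝ) ^ (2 * r - 1 - jn φ ψ) *
          (n : ℝ) ^ jn φ ψ := by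
            rw [mul_assoc, ← pow_add]; congr 2; omega
      _ ≤ _ := by gcongr
  · positivity

lemma sum_jn (hn : 1 ≤ n) (φ : Fin r ↪ Fin n) :
    ∑ ψ : Fin r ↪ Fin n, (n : ℝ) ^ jn φ ψ ≤ (((r : ℝ) + 1) * n) ^ r := by
  let c : Fin n → ℝ := fun v => if v ∈ Set.range φ then (n : ℝ) else 1
  have hc : ∀ v, 0 ≤ c v := fun v => by simp only [c]; split_ifs <;> positivity
  have h1 : ∀ ψ : Fin r ↪ Fin n, (n : ℝ) ^ jn φ ψ = ∏ i, c (ψ i) := by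
    intro ψ
    simp only [c]
    rw [Finset.prod_ite]
    simp [jn]
  have h2 : ∑ ψ : Fin r ↪ Fin n, ∏ i, c (ψ i) ≤ ∑ f : Fin r → Fin n, ∏ i, c (f i) := by
    have h := Finset.sum_image (s := (Finset.univ : Finset (Fin r ↪ Fin n)))
      (g := fun ψ : Fin r ↪ Fin n => (ψ : Fin r → Fin n)) (f := fun f => ∏ i, c (f i))
      (fun a _ b _ h => DFunLike.coe_injective h)
    rw [← h]
    exact Finset.sum_le_sum_of_subset_of_nonneg (Finset.subset_univ _)
      (fun f _ _ => Finset.prod_nonneg fun i _ => hc _)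
  have h3 : ∑ f : Fin r → Fin n, ∏ i, c (f i) = (∑ v, c v) ^ r := by
    have := Finset.prod_univ_sum (fun _ : Fin r => (Finset.univ : Finset (Fin n))) (fun _ v => c v)
    simp only [Finset.prod_const, Finset.card_univ, Fintype.card_fin, Fintype.piFinset_univ] at this
    exact this.symm
  have h4 : ∑ v, c v ≤ ((r : ℝ) + 1) * n := by
    simp only [c]
    rw [Finset.sum_ite]
    simp only [Finset.sum_const, nsmul_eq_mul, mul_one]
    have a1 : ((Finset.univ.filter (fun v => v ∈ Set.range φ)).card : ℝ) ≤ r := by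
      have : (Finset.univ.filter (fun v => v ∈ Set.range φ)) = Finset.univ.image φ := by
        ext; simp
      rw [this]
      exact_mod_cast Finset.card_image_le.trans (by simp)
    have a2 : ((Finset.univ.filter (fun v => ¬ v ∈ Set.range φ)).card : ℝ) ≤ n := by
      exact_mod_cast (Finset.card_le_univ _).trans (by simp)
    have hn0 : (0 : ℝ) ≤ n := by positivity
    nlinarith
  calc _ = ∑ ψ : Fin r ↪ Fin n, ∏ i, c (ψ i) := Finset.sum_congr rfl fun ψ _ => h1 ψ
    _ ≤ _ := h2
    _ = _ := h3
    _ ≤ _ := pow_le_pow_left₀ (Finset.sum_nonneg fun v _ => hc v) h4 r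

lemma card_or (hr : 2 ≤ r) (x y : Fin n) :
    ((Finset.univ.filter (fun φ : Fin r ↪ Fin n => x ∈ Set.range φ ∨ y ∈ Set.range φ)).card : ℝ)
      ≤ 2 * r.factorial * (n : ℝ) ^ (r - 1) := by
  rw [Finset.filter_or]
  have h := Finset.card_union_le (Finset.univ.filter (fun φ : Fin r ↪ Fin n => x ∈ Set.range φ))
    (Finset.univ.filter (fun φ : Fin r ↪ Fin n => y ∈ Set.range φ))
  rw [count_through (by omega), count_through (by omega)] at h
  have h2 : (n - 1).choose (r - 1) ≤ n ^ (r - 1) :=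
    (Nat.choose_le_pow _ _).trans (Nat.pow_le_pow_left (by omega) _)
  have h3 := Nat.mul_le_mul_left r.factorial h2
  have : ((Finset.univ.filter (fun φ : Fin r ↪ Fin n => x ∈ Set.range φ)) ∪
    (Finset.univ.filter (fun φ : Fin r ↪ Fin n => y ∈ Set.range φ))).card ≤ 2 * r.factorial * n ^ (r - 1) := by
    rw [mul_assoc]; omega
  exact_mod_cast this

lemma Delta_bound {p L : ℝ} (hr : 2 ≤ r) (hs : 1 ≤ edgeCnt F) (hF : Strictly1Balanced F)
    (hp : 0 ≤ p) (hL : 1 ≤ L) (hn : 1 ≤ n) (hpL : p ^ edgeCnt F * (n : ℝ) ^ (r - 1) ≤ L)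
    (x y : Fin n) :
    ∑ S ∈ Im F x y, ∑ T ∈ Im F x y, Del p S T ≤
      (2 * r.factorial * ((r : ℝ) + 1) ^ r) * (L ^ 2 * (n : ℝ) ^ (-(1 : ℝ) / edgeCnt F)) := by
  have hnpos : (0 : ℝ) < n := by exact_mod_cast hn
  set E := Finset.univ.filter (fun φ : Fin r ↪ Fin n => x ∈ Set.range φ ∨ y ∈ Set.range φ) with hE
  set B := L ^ 2 * (n : ℝ) ^ (-(1 : ℝ) / edgeCnt F) with hB
  have hB0 : 0 ≤ B := by positivity
  have hin : ∀ φ : Fin r ↪ Fin n, ∑ T ∈ Im F x y, Del p (eI F φ) T ≤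
      B / (n : ℝ) ^ (2 * r - 1) * (((r : ℝ) + 1) * n) ^ r := by
    intro φ
    calc ∑ T ∈ Im F x y, Del p (eI F φ) T ≤ ∑ ψ ∈ E, Del p (eI F φ) (eI F ψ) := sum_image_le' _ _ _ (fun k => Del_nonneg hp _ _)
      _ ≤ ∑ ψ : Fin r ↪ Fin n, Del p (eI F φ) (eI F ψ) :=
          Finset.sum_le_sum_of_subset_of_nonneg (Finset.subset_univ _) (fun _ _ _ => Del_nonneg hp _ _)
      _ ≤ ∑ ψ : Fin r ↪ Fin n, B / (n : ℝ) ^ (2 * r - 1) * (n : ℝ) ^ (jn φ ψ) :=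
          Finset.sum_le_sum fun ψ _ => Del_bound hr hs hF hp hL hn hpL φ ψ
      _ = B / (n : ℝ) ^ (2 * r - 1) * ∑ ψ : Fin r ↪ Fin n, (n : ℝ) ^ (jn φ ψ) := by
          rw [Finset.mul_sum]
      _ ≤ _ := by
          apply mul_le_mul_of_nonneg_left (sum_jn hn φ); positivity
  calc ∑ S ∈ Im F x y, ∑ T ∈ Im F x y, Del p S T ≤ ∑ φ ∈ E, ∑ T ∈ Im F x y, Del p (eI F φ) T :=
        sum_image_le' _ _ (fun S => ∑ T ∈ Im F x y, Del p S T)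
          (fun k => Finset.sum_nonneg fun _ _ => Del_nonneg hp _ _)
    _ ≤ ∑ φ ∈ E, B / (n : ℝ) ^ (2 * r - 1) * (((r : ℝ) + 1) * n) ^ r :=
        Finset.sum_le_sum fun φ _ => hin φ
    _ = E.card * (B / (n : ℝ) ^ (2 * r - 1) * (((r : ℝ) + 1) * n) ^ r) := by
        rw [Finset.sum_const, nsmul_eq_mul]
    _ ≤ (2 * r.factorial * (n : ℝ) ^ (r - 1)) *
        (B / (n : ℝ) ^ (2 * r - 1) * (((r : ℝ) + 1) * n) ^ r) := by
        apply mul_le_mul_of_nonneg_right (card_or hr x y); positivity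
    _ = _ := by
        have : (n : ℝ) ^ (2 * r - 1) = (n : ℝ) ^ (r - 1) * (n : ℝ) ^ r := by
          rw [← pow_add]; congr 1; omega
        rw [this, mul_pow]
        field_simp

lemma card_both (hr : 2 ≤ r) {x y : Fin n} (hxy : x ≠ y) :
    (Finset.univ.filter (fun φ : Fin r ↪ Fin n => x ∈ Set.range φ ∧ y ∈ Set.range φ)).card
      ≤ r ^ 2 * n ^ (r - 2) := by
  let P : Fin r × Fin r → Finset (Fin r → Fin n) := fun ik =>
    Fintype.piFinset (fun m => if m = ik.1 then {x} else if m = ik.2 then {y} else Finset.univ)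
  have hP : ∀ ik : Fin r × Fin r, ik.1 ≠ ik.2 → (P ik).card = n ^ (r - 2) := by
    rintro ⟨i, k⟩ hik
    simp only [P, Fintype.card_piFinset]
    have : ∀ m : Fin r, (if m = i then ({x} : Finset (Fin n)) else if m = k then {y} else Finset.univ).card
        = if m ∈ ({i, k} : Finset (Fin r)) then 1 else n := by
      intro m
      by_cases h1 : m = i
      · simp [h1]
      · by_cases h2 : m = k
        · subst h2; simp [h1]
        · simp [h1, h2]
    simp only [this]
    rw [Finset.prod_ite]
    simp only [Finset.prod_const, one_pow, one_mul]
    congr 1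
    have h3 : (Finset.univ.filter (fun m => ¬ m ∈ ({i, k} : Finset (Fin r)))) = ({i, k} : Finset (Fin r))ᶜ := by
      ext; simp
    rw [h3, Finset.card_compl, Finset.card_pair hik, Fintype.card_fin]
  have hsub : (Finset.univ.filter (fun φ : Fin r ↪ Fin n => x ∈ Set.range φ ∧ y ∈ Set.range φ)).image
      (fun φ : Fin r ↪ Fin n => (φ : Fin r → Fin n)) ⊆
      (Finset.univ.filter (fun ik : Fin r × Fin r => ik.1 ≠ ik.2)).biUnion P := by
    intro f hf
    rw [Finset.mem_image] at hf
    obtain ⟨φ, hφ, rfl⟩ := hf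
    obtain ⟨⟨i, hi⟩, ⟨k, hk⟩⟩ := (Finset.mem_filter.1 hφ).2
    rw [Finset.mem_biUnion]
    refine ⟨(i, k), ?_, ?_⟩
    · simp only [Finset.mem_filter, Finset.mem_univ, true_and]
      rintro rfl
      exact hxy (hi.symm.trans hk)
    · simp only [P, Fintype.mem_piFinset]
      intro m
      split_ifs with h1 h2
      · subst h1; simp [hi]
      · subst h2; simp [hk]
      · simp
  have h1 := Finset.card_le_card hsub
  rw [Finset.card_image_of_injective _ DFunLike.coe_injective] at h1
  refine h1.trans (Finset.card_biUnion_le.trans ?_)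
  rw [Finset.sum_congr rfl (fun ik hik => hP ik (Finset.mem_filter.1 hik).2), Finset.sum_const,
    smul_eq_mul]
  apply Nat.mul_le_mul_right
  refine (Finset.card_le_univ _).trans ?_
  simp [sq]

lemma card_Im_pair (hr : 2 ≤ r) (hs : 1 ≤ edgeCnt F) (hF : Strictly1Balanced F) {x y : Fin n}
    (hxy : x ≠ y) :
    (Im F x x).card + (Im F y y).card ≤ (Im F x y).card + r ^ 2 * n ^ (r - 2) := by
  have h1 : Im F x y = Im F x x ∪ Im F y y := by
    unfold Im
    rw [← Finset.image_union, ← Finset.filter_or]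
    simp only [or_self]
  have h2 : (Im F x x ∩ Im F y y).card ≤ r ^ 2 * n ^ (r - 2) := by
    refine le_trans ?_ (card_both hr hxy)
    refine le_trans (Finset.card_le_card ?_) (Finset.card_image_le (f := eI F))
    intro S hS
    rw [Finset.mem_inter, mem_Im, mem_Im] at hS
    obtain ⟨⟨φ, h, rfl⟩, ⟨ψ, h', hψ⟩⟩ := hS
    simp only [or_self] at h h'
    refine Finset.mem_image.2 ⟨φ, ?_, rfl⟩
    simp only [Finset.mem_filter, Finset.mem_univ, true_and]
    exact ⟨h, range_eq hs hF hψ ▸ h'⟩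
  rw [h1, ← Finset.card_union_add_card_inter]
  omega

end
end RG

namespace RG

lemma tendsto_log_sq {s : ℕ} (hs : 1 ≤ s) :
    Tendsto (fun n : ℕ => Real.log n ^ 2 * (n : ℝ) ^ (-(1 : ℝ) / s)) atTop (nhds 0) := by
  have hs' : (0 : ℝ) < (1 : ℝ) / s := by positivity
  have h := (isLittleO_log_rpow_rpow_atTop (2 : ℝ) hs').tendsto_div_nhds_zero
  have h2 := h.comp tendsto_natCast_atTop_atTop
  refine h2.congr' ?_
  filter_upwards [eventually_ge_atTop 1] with n hn
  simp only [Function.comp]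
  rw [neg_div, Real.rpow_neg (by positivity), div_eq_mul_inv]
  norm_num

lemma one_sub_ge {t : ℝ} (h0 : 0 ≤ t) (h1 : t ≤ 1 / 2) : Real.exp (-(t + 2 * t ^ 2)) ≤ 1 - t := by
  have hpos : 0 < 1 - t := by linarith
  have h2 := Real.add_one_le_exp (t / (1 - t))
  have h3 : t / (1 - t) + 1 = (1 - t)⁻¹ := by field_simp; ring
  rw [h3] at h2
  have h4 : t / (1 - t) ≤ t + 2 * t ^ 2 := by
    rw [div_le_iff₀ hpos]; nlinarith [mul_nonneg h0 h0, mul_nonneg (mul_nonneg h0 h0) (by linarith : 0 ≤ 1 - 2 * t)]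
  have h5 : (1 - t)⁻¹ ≤ Real.exp (t + 2 * t ^ 2) := h2.trans (Real.exp_le_exp.2 h4)
  rw [Real.exp_neg]
  exact inv_le_of_inv_le₀ hpos h5

section
variable {r : ℕ} {F : SimpleGraph (Fin r)}

lemma aut_pos (F : SimpleGraph (Fin r)) : 0 < autCard F := by
  unfold autCard
  haveI : Finite (F ≃g F) := Finite.of_injective (fun σ : F ≃g F => (σ : Fin r → Fin r)) DFunLike.coe_injective
  haveI : Nonempty (F ≃g F) := ⟨RelIso.refl _⟩
  exact Nat.card_pos

/-- number of copies through a vertex -/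
def NN (F : SimpleGraph (Fin r)) (n : ℕ) : ℝ :=
  (r.factorial : ℝ) * ((n - 1).choose (r - 1) : ℝ) / autCard F

lemma card_Im_eq {n : ℕ} (hr : 2 ≤ r) (hs : 1 ≤ edgeCnt F) (hF : Strictly1Balanced F) (x : Fin n) :
    ((Im F x x).card : ℝ) = NN F n := by
  have h := card_Im_self (by omega : 1 ≤ r) hs hF x
  have ha : (0 : ℝ) < autCard F := by exact_mod_cast aut_pos F
  unfold NN
  rw [eq_div_iff ha.ne']
  exact_mod_cast h

lemma pow_le_NN {n : ℕ} (hr : 2 ≤ r) (hn : 2 * r ≤ n) :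
    (n : ℝ) ^ (r - 1) ≤ (2 ^ (r - 1) * autCard F) * NN F n := by
  have ha : (0 : ℝ) < autCard F := by exact_mod_cast aut_pos F
  have h1 : (2 ^ (r - 1) * (autCard F : ℝ)) * NN F n
      = ((2 ^ (r - 1) * (r.factorial * (n - 1).choose (r - 1)) : ℕ) : ℝ) := by
    unfold NN; push_cast; field_simp
  rw [h1]
  have h2 : n ^ (r - 1) ≤ 2 ^ (r - 1) * (r.factorial * (n - 1).choose (r - 1)) := by
    calc n ^ (r - 1) ≤ (2 * (n - 1 + 1 - (r - 1))) ^ (r - 1) := Nat.pow_le_pow_left (by omega) _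
      _ = 2 ^ (r - 1) * (n - 1 + 1 - (r - 1)) ^ (r - 1) := mul_pow _ _ _
      _ ≤ 2 ^ (r - 1) * (n - 1).descFactorial (r - 1) :=
          Nat.mul_le_mul_left _ (Nat.pow_sub_le_descFactorial _ _)
      _ = 2 ^ (r - 1) * ((r - 1).factorial * (n - 1).choose (r - 1)) := by
          rw [Nat.descFactorial_eq_factorial_mul_choose]
      _ ≤ _ := by
          gcongr; omega
  exact_mod_cast h2

lemma NN_pos {n : ℕ} (hr : 2 ≤ r) (hn : 2 * r ≤ n) : 0 < NN F n := by
  have ha : (0 : ℝ) < autCard F := by exact_mod_cast aut_pos F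
  have : 0 < (n - 1).choose (r - 1) := Nat.choose_pos (by omega)
  unfold NN; positivity

lemma pstar_pow {n : ℕ} (hs : 1 ≤ edgeCnt F) :
    pstar F n ^ edgeCnt F * NN F n = Real.log n ∨ NN F n = 0 := by
  by_cases h0 : NN F n = 0
  · exact Or.inr h0
  left
  have ha : (0 : ℝ) < autCard F := by exact_mod_cast aut_pos F
  have hC : ((n - 1).choose (r - 1) : ℝ) ≠ 0 := by
    intro h; apply h0; unfold NN; rw [h]; simp
  have hf : (r.factorial : ℝ) ≠ 0 := by positivity
  have hlog : 0 ≤ Real.log n := Real.log_natCast_nonneg n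
  unfold pstar NN
  rw [← Real.rpow_natCast, ← Real.rpow_mul (by positivity)]
  have : (edgeCnt F : ℝ) ≠ 0 := by positivity
  rw [one_div_mul_cancel this, Real.rpow_one]
  field_simp

lemma pstar_pos {n : ℕ} (hr : 2 ≤ r) (hn : 2 * r ≤ n) : 0 < pstar F n := by
  have ha : (0 : ℝ) < autCard F := by exact_mod_cast aut_pos F
  have : 0 < (n - 1).choose (r - 1) := Nat.choose_pos (by omega)
  have hl : 0 < Real.log n := Real.log_pos (by exact_mod_cast (by omega : 1 < n))
  unfold pstar; positivity

set_option maxHeartbeats 2000000 in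
lemma core (hr : 2 ≤ r) (hs : 1 ≤ edgeCnt F) (hF : Strictly1Balanced F) (c : ℝ) (hc : 0 ≤ c) :
    ∃ η : ℕ → ℝ, Tendsto η atTop (nhds 0) ∧ ∀ᶠ n : ℕ in atTop, ∀ p : ℝ, 0 ≤ p → p ≤ 1 →
      NN F n * p ^ edgeCnt F ≤ c * Real.log n →
      (∀ x : Fin n, Real.exp (-(NN F n * p ^ edgeCnt F) - η n) ≤ Ex p (fun A => ind (noneIn (Im F x x) A))) ∧
      (∀ x : Fin n, Ex p (fun A => ind (noneIn (Im F x x) A)) ≤ Real.exp (-(NN F n * p ^ edgeCnt F) + η n)) ∧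
      (∀ x y : Fin n, x ≠ y → Ex p (fun A => ind (noneIn (Im F x y) A)) ≤
        Real.exp (-(2 * (NN F n * p ^ edgeCnt F)) + η n)) := by
  have ha : (0 : ℝ) < autCard F := by exact_mod_cast aut_pos F
  set s := edgeCnt F with hsdef
  set K : ℝ := (2 ^ (r - 1) * autCard F) * c + 1 with hK
  have hK1 : 1 ≤ K := by
    have : 0 ≤ (2 ^ (r - 1) * (autCard F : ℝ)) * c := by positivity
    linarith
  set C1 : ℝ := 2 * r.factorial * ((r : ℝ) + 1) ^ r with hC1
  set D : ℝ := C1 * K ^ 2 + r ^ 2 * K + 2 * c * K with hD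
  refine ⟨fun n => D * (Real.log n ^ 2 * (n : ℝ) ^ (-(1 : ℝ) / s)), ?_, ?_⟩
  · simpa using (tendsto_log_sq hs).const_mul D
  have hlim : Tendsto (fun n : ℕ => K * (Real.log n ^ 2 * (n : ℝ) ^ (-(1 : ℝ) / (1 : ℕ)))) atTop (nhds 0) := by
    simpa using (tendsto_log_sq (le_refl 1)).const_mul K
  have hev : ∀ᶠ n : ℕ in atTop, 1 ≤ Real.log n :=
    (Real.tendsto_log_atTop.comp tendsto_natCast_atTop_atTop).eventually_ge_atTop 1
  filter_upwards [hlim.eventually (gt_mem_nhds (by norm_num : (0 : ℝ) < 1 / 2)), hev,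
    eventually_ge_atTop (2 * r)] with n hn1 hlog hnr p hp0 hp1 hpc
  have hn0 : 1 ≤ n := by omega
  have hnR : (1 : ℝ) ≤ n := by exact_mod_cast hn0
  have hnpos : (0 : ℝ) < n := by linarith
  have hN := NN_pos (F := F) hr hnr
  set ℓ := Real.log n with hℓ
  set t := p ^ s with ht
  have ht0 : 0 ≤ t := by positivity
  set w := (n : ℝ) ^ (-(1 : ℝ) / s) with hw
  have hw0 : 0 < w := by positivity
  have hinv : (n : ℝ)⁻¹ ≤ w := by
    rw [hw, ← Real.rpow_neg_one]
    apply Real.rpow_le_rpow_of_exponent_le hnR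
    have : (1 : ℝ) ≤ s := by exact_mod_cast hs
    rw [neg_div, neg_le_neg_iff, div_le_one (by linarith)]
    exact this
  -- t n^{r-1} ≤ K ℓ
  have hL : t * (n : ℝ) ^ (r - 1) ≤ K * ℓ := by
    have h1 := mul_le_mul_of_nonneg_left (pow_le_NN (F := F) hr hnr) ht0
    have h2 : t * ((2 ^ (r - 1) * autCard F) * NN F n) ≤ (2 ^ (r - 1) * autCard F) * (c * ℓ) := by
      have := mul_le_mul_of_nonneg_left hpc (by positivity : (0 : ℝ) ≤ 2 ^ (r - 1) * autCard F)
      linarith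
    rw [hK]; nlinarith
  have hKl : 1 ≤ K * ℓ := by nlinarith
  have hll : ℓ ≤ ℓ ^ 2 := by nlinarith
  -- t n^{r-2} ≤ K ℓ² w
  have hsplit : (n : ℝ) ^ (r - 1) = (n : ℝ) ^ (r - 2) * n := by
    rw [← pow_succ]; congr 1; omega
  have hX : t * (n : ℝ) ^ (r - 2) ≤ K * ℓ * (n : ℝ)⁻¹ := by
    rw [hsplit, ← mul_assoc] at hL
    rw [← div_eq_mul_inv, le_div_iff₀ hnpos]; exact hL
  have hXw : t * (n : ℝ) ^ (r - 2) ≤ K * (ℓ ^ 2 * w) := by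
    refine hX.trans ?_
    rw [mul_assoc]
    gcongr
  have htX : t ≤ K * ℓ * (n : ℝ)⁻¹ := by
    refine le_trans ?_ hX
    have : (1 : ℝ) ≤ (n : ℝ) ^ (r - 2) := one_le_pow₀ hnR
    nlinarith
  have hthalf : t ≤ 1 / 2 := by
    have h3 : (n : ℝ) ^ (-(1 : ℝ) / (1 : ℕ)) = (n : ℝ)⁻¹ := by
      simp [Real.rpow_neg_one]
    rw [h3] at hn1
    refine htX.trans (le_trans ?_ hn1.le)
    rw [mul_assoc]
    gcongr
  have hDelta := fun x y : Fin n => Delta_bound (F := F) (p := p) (L := K * ℓ) hr hs hF hp0 hKl hn0 hL x y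
  have hsumc : ∀ x y : Fin n, ∑ S ∈ Im F x y, p ^ S.card = (Im F x y).card * t := by
    intro x y
    rw [Finset.sum_congr rfl (fun S hS => by rw [card_of_mem_Im F hS]), Finset.sum_const, nsmul_eq_mul]
  have hDel0 : C1 * ((K * ℓ) ^ 2 * w) = C1 * K ^ 2 * (ℓ ^ 2 * w) := by ring
  have hlw : 0 ≤ ℓ ^ 2 * w := by positivity
  have hC10 : 0 ≤ C1 := by positivity
  refine ⟨?_, ?_, ?_⟩
  · intro x
    refine le_trans ?_ (lower hp0 hp1 (Im F x x))
    rw [Finset.prod_congr rfl (fun S hS => by rw [card_of_mem_Im F hS]), Finset.prod_const]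
    have h1 := pow_le_pow_left₀ (Real.exp_pos _).le (one_sub_ge ht0 hthalf) (Im F x x).card
    refine le_trans ?_ h1
    rw [← Real.exp_nat_mul, card_Im_eq hr hs hF]
    apply Real.exp_le_exp.2
    have h2 : NN F n * t ^ 2 ≤ c * K * (ℓ ^ 2 * w) := by
      have e1 : NN F n * t ^ 2 = (NN F n * t) * t := by ring
      rw [e1]
      have e2 : t ≤ K * ℓ * w := htX.trans (by gcongr)
      calc (NN F n * t) * t ≤ (c * ℓ) * (K * ℓ * w) := by gcongr
        _ = _ := by ring
    have h3 : 2 * c * K * (ℓ ^ 2 * w) ≤ D * (ℓ ^ 2 * w) := by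
      apply mul_le_mul_of_nonneg_right _ hlw
      rw [hD]
      have : 0 ≤ C1 * K ^ 2 + r ^ 2 * K := by positivity
      linarith
    have h4 : NN F n * (-(t + 2 * t ^ 2)) = -(NN F n * t) - 2 * (NN F n * t ^ 2) := by ring
    have h5 : 2 * c * K * (ℓ ^ 2 * w) = 2 * (c * K * (ℓ ^ 2 * w)) := by ring
    rw [h5] at h3
    rw [h4]
    linarith only [h2, h3]
  · intro x
    refine (janson hp0 hp1 (Im F x x)).trans (Real.exp_le_exp.2 ?_)
    rw [hsumc, card_Im_eq hr hs hF]
    have h3 : C1 * K ^ 2 * (ℓ ^ 2 * w) ≤ D * (ℓ ^ 2 * w) := by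
      apply mul_le_mul_of_nonneg_right _ hlw
      rw [hD]
      have : 0 ≤ r ^ 2 * K + 2 * c * K := by positivity
      linarith
    have := hDelta x x
    rw [hDel0] at this
    linarith
  · intro x y hxy
    refine (janson hp0 hp1 (Im F x y)).trans (Real.exp_le_exp.2 ?_)
    rw [hsumc]
    have h1 := card_Im_pair hr hs hF hxy
    have h2 : NN F n + NN F n ≤ (Im F x y).card + (r : ℝ) ^ 2 * (n : ℝ) ^ (r - 2) := by
      have : ((Im F x x).card : ℝ) + (Im F y y).card ≤ (Im F x y).card + (r : ℝ) ^ 2 * (n : ℝ) ^ (r - 2) := by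
        exact_mod_cast h1
      rwa [card_Im_eq hr hs hF, card_Im_eq hr hs hF] at this
    have h4 := mul_le_mul_of_nonneg_right h2 ht0
    have h5 : (r : ℝ) ^ 2 * (n : ℝ) ^ (r - 2) * t ≤ r ^ 2 * K * (ℓ ^ 2 * w) := by
      calc (r : ℝ) ^ 2 * (n : ℝ) ^ (r - 2) * t = (r : ℝ) ^ 2 * (t * (n : ℝ) ^ (r - 2)) := by ring
        _ ≤ (r : ℝ) ^ 2 * (K * (ℓ ^ 2 * w)) := by gcongr
        _ = _ := by ring
    have h3 : (C1 * K ^ 2 + r ^ 2 * K) * (ℓ ^ 2 * w) ≤ D * (ℓ ^ 2 * w) := by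
      apply mul_le_mul_of_nonneg_right _ hlw
      rw [hD]
      have : 0 ≤ 2 * c * K := by positivity
      linarith
    have h6 := hDelta x y
    rw [hDel0] at h6
    rw [add_mul, add_mul] at h4
    rw [add_mul] at h3
    linarith only [h3, h4, h5, h6]

/-- Second moment bound. -/
lemma second_moment {n : ℕ} {p a b : ℝ} (hn : 1 ≤ n) (h0 : 0 ≤ p) (h1 : p ≤ 1) (ha : 0 < a) (hb : 0 ≤ b)
    (hA : ∀ x : Fin n, a ≤ Ex p (fun A => ind (noneIn (Im F x x) A)))
    (hB : ∀ x y : Fin n, x ≠ y → Ex p (fun A => ind (noneIn (Im F x y) A)) ≤ b) :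
    Ex p (fun A : Finset (Ed n) => ind (¬ ∃ x, FIsolated F (gOf A) x)) ≤ 1 / (n * a) + b / a ^ 2 - 1 := by
  have hnpos : (0 : ℝ) < n := by exact_mod_cast hn
  let X : Finset (Ed n) → ℝ := fun A => ∑ x : Fin n, ind (noneIn (Im F x x) A)
  set m := Ex p X with hm
  have hm1 : m = ∑ x : Fin n, Ex p (fun A => ind (noneIn (Im F x x) A)) := Ex_sum _ _ _
  have hmge : n * a ≤ m := by
    rw [hm1]
    have := Finset.sum_le_sum (s := Finset.univ) (fun x _ => hA x)
    simpa using this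
  have hmpos : 0 < m := lt_of_lt_of_le (by positivity) hmge
  have hX2 : Ex p (fun A => X A ^ 2) ≤ m + n ^ 2 * b := by
    have e1 : (fun A => X A ^ 2) = fun A => ∑ x : Fin n, ∑ y : Fin n, ind (noneIn (Im F x y) A) := by
      funext A
      simp only [X]
      rw [sq, Finset.sum_mul_sum]
      refine Finset.sum_congr rfl fun x _ => Finset.sum_congr rfl fun y _ => ?_
      rw [← iso_iff_one F x, ← iso_iff_one F y, ← iso_iff F x y, ind_and]
    rw [e1, Ex_sum, hm1]
    have e2 : ∀ x : Fin n, Ex p (fun A => ∑ y : Fin n, ind (noneIn (Im F x y) A)) ≤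
        Ex p (fun A => ind (noneIn (Im F x x) A)) + n * b := by
      intro x
      rw [Ex_sum]
      have e3 : ∀ y : Fin n, Ex p (fun A => ind (noneIn (Im F x y) A)) ≤
          (if y = x then Ex p (fun A => ind (noneIn (Im F x x) A)) else 0) + b := by
        intro y
        split_ifs with h
        · rw [h]; linarith
        · have := hB x y (Ne.symm h); linarith
      refine (Finset.sum_le_sum fun y _ => e3 y).trans ?_
      rw [Finset.sum_add_distrib]
      simp
    refine (Finset.sum_le_sum fun x _ => e2 x).trans ?_
    rw [Finset.sum_add_distrib]
    simp [sq, mul_assoc]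
  have hcheb : m ^ 2 * Ex p (fun A : Finset (Ed n) => ind (¬ ∃ x, FIsolated F (gOf A) x)) ≤
      m + n ^ 2 * b - m ^ 2 := by
    have e1 : ∀ A : Finset (Ed n), m ^ 2 * ind (¬ ∃ x, FIsolated F (gOf A) x) ≤
        (X A ^ 2 - 2 * m * X A) + m ^ 2 * 1 := by
      intro A
      by_cases h : ∃ x, FIsolated F (gOf A) x
      · have : ind (¬ ∃ x, FIsolated F (gOf A) x) = 0 := by simp only [ind, h, not_true, if_false]
        rw [this]
        nlinarith [sq_nonneg (X A - m)]
      · have hX0 : X A = 0 := by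
          apply Finset.sum_eq_zero
          intro x _
          rw [← iso_iff_one]
          have : ¬ FIsolated F (gOf A) x := fun hx => h ⟨x, hx⟩
          simp [ind, this]
        rw [hX0]
        have := ind_le_one (¬ ∃ x, FIsolated F (gOf A) x)
        nlinarith [sq_nonneg m]
    have e2 := Ex_mono h0 h1 e1
    rw [Ex_add, Ex_sub, Ex_mul, Ex_mul, Ex_mul, Ex_one, ← hm] at e2
    nlinarith
  have h3 : Ex p (fun A : Finset (Ed n) => ind (¬ ∃ x, FIsolated F (gOf A) x)) ≤
      1 / m + n ^ 2 * b / m ^ 2 - 1 := by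
    have : 1 / m + n ^ 2 * b / m ^ 2 - 1 = (m + n ^ 2 * b - m ^ 2) / m ^ 2 := by
      field_simp
    rw [this, le_div_iff₀ (by positivity)]
    linarith
  refine h3.trans ?_
  have h4 : 1 / m ≤ 1 / (n * a) := one_div_le_one_div_of_le (by positivity) hmge
  have h5 : n ^ 2 * b / m ^ 2 ≤ b / a ^ 2 := by
    rw [div_le_div_iff₀ (by positivity) (by positivity)]
    have : (n * a) ^ 2 ≤ m ^ 2 := pow_le_pow_left₀ (by positivity) hmge 2
    nlinarith
  linarith

lemma Ex_ind_not {n : ℕ} (p : ℝ) (Q : Finset (Ed n) → Prop) :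
    Ex p (fun A => ind (Q A)) = 1 - Ex p (fun A => ind (¬ Q A)) := by
  simp only [ind_not]
  rw [Ex_sub, Ex_one]; ring

lemma part1 (hr : 2 ≤ r) (hs : 1 ≤ edgeCnt F) (hF : Strictly1Balanced F) (ε : ℝ) (hε : 0 < ε)
    (p : ℕ → ℝ) (hp : ∀ n, 0 ≤ p n ∧ p n ≤ 1) (hpe : ∀ n, p n ≤ (1 - ε) * pstar F n) :
    Tendsto (fun n : ℕ => gnpProb n (p n) fun G => ∃ x, FIsolated F G x) atTop (nhds 1) := by
  have hε1 : 0 ≤ 1 - ε := by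
    by_contra h
    push Not at h
    have h1 := pstar_pos (F := F) hr (le_refl (2 * r))
    have h2 := hpe (2 * r)
    have h3 := (hp (2 * r)).1
    nlinarith
  set c := (1 - ε) ^ edgeCnt F with hc
  have hc0 : 0 ≤ c := by positivity
  have hc1 : c < 1 := pow_lt_one₀ hε1 (by linarith) (by omega)
  obtain ⟨η, hη, hcore⟩ := core hr hs hF c hc0
  have hlog : Tendsto (fun n : ℕ => Real.log n) atTop atTop :=
    Real.tendsto_log_atTop.comp tendsto_natCast_atTop_atTop
  have hg : Tendsto (fun n : ℕ => 1 - (Real.exp (-((1 - c) * Real.log n) + η n) + Real.exp (3 * η n) - 1))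
      atTop (nhds 1) := by
    have h1 : Tendsto (fun n : ℕ => Real.exp (-((1 - c) * Real.log n) + η n)) atTop (nhds 0) := by
      apply Real.tendsto_exp_atBot.comp
      apply Tendsto.atBot_add _ hη
      exact tendsto_neg_atTop_atBot.comp (hlog.const_mul_atTop (by linarith))
    have h2 : Tendsto (fun n : ℕ => Real.exp (3 * η n)) atTop (nhds 1) := by
      have := (Real.continuous_exp.tendsto _).comp (hη.const_mul 3)
      simpa [Function.comp_def] using this
    have := ((h1.add h2).sub_const 1).const_sub 1
    simpa using this
  refine tendsto_of_tendsto_of_tendsto_of_le_of_le' hg tendsto_const_nhds ?_ ?_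
  · filter_upwards [hcore, eventually_ge_atTop (2 * r)] with n hn hnr
    have hN := NN_pos (F := F) hr hnr
    have hpow : NN F n * p n ^ edgeCnt F ≤ c * Real.log n := by
      have h1 := pow_le_pow_left₀ (hp n).1 (hpe n) (edgeCnt F)
      rw [mul_pow] at h1
      rcases pstar_pow (F := F) (n := n) hs with h2 | h2
      · rw [← h2, hc]
        have := mul_le_mul_of_nonneg_left h1 hN.le
        linarith
      · exact absurd h2 hN.ne'
    obtain ⟨ha, -, hb⟩ := hn (p n) (hp n).1 (hp n).2 hpow
    set μ := NN F n * p n ^ edgeCnt F with hμ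
    have hnn : 1 ≤ n := by omega
    have hnpos : (0 : ℝ) < n := by exact_mod_cast hnn
    have h3 := second_moment hnn (hp n).1 (hp n).2 (Real.exp_pos _) (Real.exp_pos _).le ha hb
    rw [gnp_eq, Ex_ind_not]
    have h4 : 1 / (n * Real.exp (-μ - η n)) ≤ Real.exp (-((1 - c) * Real.log n) + η n) := by
      have e1 : (n : ℝ) * Real.exp (-μ - η n) = Real.exp (Real.log n + (-μ - η n)) := by
        rw [Real.exp_add, Real.exp_log hnpos]
      rw [e1, one_div, ← Real.exp_neg]
      apply Real.exp_le_exp.2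
      linarith
    have h5 : Real.exp (-(2 * μ) + η n) / Real.exp (-μ - η n) ^ 2 = Real.exp (3 * η n) := by
      rw [← Real.exp_nat_mul, ← Real.exp_sub]
      congr 1; push_cast; ring
    rw [h5] at h3
    linarith
  · filter_upwards with n
    rw [gnp_eq, Ex_ind_not]
    have := Ex_nonneg (hp n).1 (hp n).2 (f := fun A : Finset (Ed n) => ind (¬ ∃ x, FIsolated F (gOf A) x))
      (fun _ => ind_nonneg _)
    linarith

lemma part2 (hr : 2 ≤ r) (hs : 1 ≤ edgeCnt F) (hF : Strictly1Balanced F) (ε : ℝ) (hε : 0 < ε)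
    (p : ℕ → ℝ) (hp : ∀ n, 0 ≤ p n ∧ p n ≤ 1) (hpe : ∀ n, p n ≥ (1 + ε) * pstar F n) :
    Tendsto (fun n : ℕ => gnpProb n (p n) fun G => ∀ x, ¬ FIsolated F G x) atTop (nhds 1) := by
  set c := (1 + ε) ^ edgeCnt F with hc
  have hc0 : 0 ≤ c := by positivity
  have hc1 : 1 < c := one_lt_pow₀ (by linarith) (by omega)
  obtain ⟨η, hη, hcore⟩ := core hr hs hF c hc0
  have hlog : Tendsto (fun n : ℕ => Real.log n) atTop atTop :=
    Real.tendsto_log_atTop.comp tendsto_natCast_atTop_atTop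
  have hg : Tendsto (fun n : ℕ => 1 - Real.exp (-((c - 1) * Real.log n) + η n)) atTop (nhds 1) := by
    have h1 : Tendsto (fun n : ℕ => Real.exp (-((c - 1) * Real.log n) + η n)) atTop (nhds 0) := by
      apply Real.tendsto_exp_atBot.comp
      apply Tendsto.atBot_add _ hη
      exact tendsto_neg_atTop_atBot.comp (hlog.const_mul_atTop (by linarith))
    simpa using h1.const_sub 1
  refine tendsto_of_tendsto_of_tendsto_of_le_of_le' hg tendsto_const_nhds ?_ ?_
  · filter_upwards [hcore, eventually_ge_atTop (2 * r)] with n hn hnr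
    have hN := NN_pos (F := F) hr hnr
    set q := (1 + ε) * pstar F n with hq
    have hq0 : 0 < q := mul_pos (by linarith) (pstar_pos hr hnr)
    have hqp : q ≤ p n := hpe n
    have hq1 : q ≤ 1 := hqp.trans (hp n).2
    have hpow : NN F n * q ^ edgeCnt F = c * Real.log n := by
      rw [hq, mul_pow]
      rcases pstar_pow (F := F) (n := n) hs with h2 | h2
      · rw [← h2, hc]; ring
      · exact absurd h2 hN.ne'
    obtain ⟨-, hb, -⟩ := hn q hq0.le hq1 hpow.le
    rw [hpow] at hb
    have hnn : 1 ≤ n := by omega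
    have hnpos : (0 : ℝ) < n := by exact_mod_cast hnn
    rw [gnp_eq, Ex_ind_not]
    have h1 : Ex (p n) (fun A : Finset (Ed n) => ind (¬ ∀ x, ¬ FIsolated F (gOf A) x)) ≤
        n * Real.exp (-(c * Real.log n) + η n) := by
      calc Ex (p n) (fun A : Finset (Ed n) => ind (¬ ∀ x, ¬ FIsolated F (gOf A) x))
          ≤ Ex (p n) (fun A : Finset (Ed n) => ∑ x : Fin n, ind (noneIn (Im F x x) A)) := by
            refine Ex_mono (hp n).1 (hp n).2 fun A => ?_
            by_cases h : ∀ x, ¬ FIsolated F (gOf A) x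
            · have : ind (¬ ∀ x, ¬ FIsolated F (gOf A) x) = 0 := by
                unfold ind; rw [if_neg (not_not.2 h)]
              rw [this]
              exact Finset.sum_nonneg fun _ _ => ind_nonneg _
            · have h' := h
              push Not at h'
              obtain ⟨x, hx⟩ := h'
              refine (ind_le_one _).trans ?_
              have h2 : ind (noneIn (Im F x x) A) = 1 := by
                rw [← iso_iff_one]; unfold ind; rw [if_pos hx]
              rw [← h2]
              exact Finset.single_le_sum (f := fun x => ind (noneIn (Im F x x) A))
                (fun _ _ => ind_nonneg _) (Finset.mem_univ x)
        _ = ∑ x : Fin n, Ex (p n) (fun A => ind (noneIn (Im F x x) A)) := Ex_sum _ _ _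
        _ ≤ ∑ x : Fin n, Real.exp (-(c * Real.log n) + η n) := by
            refine Finset.sum_le_sum fun x _ => le_trans ?_ (hb x)
            rcases hqp.eq_or_lt with h | h
            · rw [h]
            · exact Ex_anti_p hq0 hqp (h.trans_le (hp n).2) (hp n).2 (fun _ => ind_le_one _) (noneIn_anti _)
        _ = _ := by simp
    have h2 : n * Real.exp (-(c * Real.log n) + η n) = Real.exp (-((c - 1) * Real.log n) + η n) := by
      nth_rewrite 1 [← Real.exp_log hnpos]
      rw [← Real.exp_add]; congr 1; ring
    linarith
  · filter_upwards with n
    rw [gnp_eq, Ex_ind_not]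
    have := Ex_nonneg (hp n).1 (hp n).2 (f := fun A : Finset (Ed n) => ind (¬ ∀ x, ¬ FIsolated F (gOf A) x))
      (fun _ => ind_nonneg _)
    linarith

end
end RG

/-- For a strictly 1-balanced graph `F` with `s ≥ 1` edges on `r ≥ 2`
vertices, `p* = ((aut F / r!)·ln n / C(n-1,r-1))^(1/s)` is a sharp threshold for the
disappearance of `F`-isolated vertices in `G(n,p)`. -/
theorem sharp_threshold_F_isolated {r s : ℕ} (hr : 2 ≤ r) (hs : 1 ≤ s)
    (F : SimpleGraph (Fin r)) (hFs : edgeCnt F = s) (hF : Strictly1Balanced F)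
    (ε : ℝ) (hε : 0 < ε) (p : ℕ → ℝ) (hp : ∀ n, 0 ≤ p n ∧ p n ≤ 1) :
    ((∀ n, p n ≤ (1 - ε) * pstar F n) →
      Filter.Tendsto (fun n : ℕ => gnpProb n (p n) fun G => ∃ x, FIsolated F G x)
        Filter.atTop (nhds 1)) ∧
    ((∀ n, p n ≥ (1 + ε) * pstar F n) →
      Filter.Tendsto (fun n : ℕ => gnpProb n (p n) fun G => ∀ x, ¬FIsolated F G x)
        Filter.atTop (nhds 1)) := by
  subst hFs
  exact ⟨fun h => RG.part1 hr hs hF ε hε p hp h, fun h => RG.part2 hr hs hF ε hε p hp h⟩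

end
end

section
/- Let F be a strictly 1-balanced graph on r ≥ 3 vertices, let ε > 0 be a constant, and let π = π(n) ≤ n^ε / ((r!/aut(F)) · C(n−1, r−1)). Let C_1 and C_2 be two distinct clean F-cycles with e(C_1), e(C_2) ≤ e(F) that are not vertex-disjoint, and let X be the number of copies of the F-graph C_1 ∪ C_2 in H_F(n,π). Then E[X] = O(n^{−1 + 2e(F)ε}) as n → ∞. -/
open scoped Classical
open Filter Asymptotics

noncomputable section

/-! ### Helper lemmas -/

lemma aux_copy_card {r : ℕ} {V : Type*} {F : SimpleGraph (Fin r)} {h : FEdge V}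
    (hh : FEdge.IsCopyOf h F) : h.1.card = r := by
  obtain ⟨φ, hφ, h1, -⟩ := hh
  have : (↑h.1 : Set V).ncard = r := by
    rw [h1, ← Set.image_univ, Set.ncard_image_of_injective _ hφ, Set.ncard_univ]
    simp
  rwa [Set.ncard_coe_finset] at this

lemma aux_copy_mem {r : ℕ} {V : Type*} {F : SimpleGraph (Fin r)} {h : FEdge V}
    (hh : FEdge.IsCopyOf h F) : ∀ e ∈ h.2, ∀ x ∈ e, x ∈ h.1 := by
  obtain ⟨φ, hφ, h1, h2⟩ := hh
  intro e he x hx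
  have he' : e ∈ (↑h.2 : Set (Sym2 V)) := he
  rw [h2] at he'
  obtain ⟨e', -, rfl⟩ := he'
  obtain ⟨y, -, rfl⟩ := Sym2.mem_map.1 hx
  have : φ y ∈ (↑h.1 : Set V) := by rw [h1]; exact ⟨y, rfl⟩
  exact this

lemma aux_sym2_map_congr {V W : Type*} {f g : V → W} {e : Sym2 V}
    (h : ∀ x ∈ e, f x = g x) : Sym2.map f e = Sym2.map g e := by
  induction e using Sym2.ind with
  | _ a b =>
    simp only [Sym2.map_mk]
    rw [h a (Sym2.mem_mk_left a b), h b (Sym2.mem_mk_right a b)]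

lemma aux_fedge_map_congr {r : ℕ} {V W : Type*} [DecidableEq W] {F : SimpleGraph (Fin r)}
    {h : FEdge V} (hh : FEdge.IsCopyOf h F) {f g : V → W} (hfg : ∀ x ∈ h.1, f x = g x) :
    FEdge.map f h = FEdge.map g h := by
  unfold FEdge.map
  ext1
  · exact Finset.image_congr hfg
  · exact Finset.image_congr fun e he =>
      aux_sym2_map_congr fun x hx => hfg x (aux_copy_mem hh e he x hx)

lemma aux_fgraph_map_congr {r : ℕ} {V W : Type*} [DecidableEq V] [DecidableEq W]
    {F : SimpleGraph (Fin r)}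
    {H : FGraph V} (hH : FGraph.Wf H F) {f g : V → W} (hfg : ∀ x ∈ H.1, f x = g x) :
    FGraph.map f H = FGraph.map g H := by
  unfold FGraph.map
  ext1
  · exact Finset.image_congr hfg
  · exact Finset.image_congr fun h hh =>
      aux_fedge_map_congr (hH h hh).1 fun x hx => hfg x ((hH h hh).2 hx)

lemma aux_fedge_map_map {V W U : Type*} [DecidableEq W] [DecidableEq U] (f : V → W) (g : W → U)
    (h : FEdge V) : FEdge.map g (FEdge.map f h) = FEdge.map (g ∘ f) h := by
  unfold FEdge.map
  simp only [Finset.image_image, Sym2.map_comp]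

lemma aux_fedge_map_id {V : Type*} [DecidableEq V] (h : FEdge V) : FEdge.map id h = h := by
  unfold FEdge.map
  simp

lemma aux_card_map {r : ℕ} {V W : Type*} [Nonempty V] [DecidableEq V] [DecidableEq W]
    {F : SimpleGraph (Fin r)}
    {H : FGraph V} (hH : FGraph.Wf H F) {ψ : V → W} (hψ : Set.InjOn ψ ↑H.1) :
    (FGraph.map ψ H).2.card = H.2.card := by
  unfold FGraph.map
  apply Finset.card_image_of_injOn
  have hl : Set.LeftInvOn (FEdge.map (Function.invFunOn ψ (↑H.1 : Set V)))
      (FEdge.map ψ) (↑H.2 : Set (FEdge V)) := by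
    intro h hh
    rw [aux_fedge_map_map]
    conv_rhs => rw [← aux_fedge_map_id h]
    apply aux_fedge_map_congr (hH h hh).1
    intro x hx
    exact hψ.leftInvOn_invFunOn ((hH h hh).2 hx)
  exact hl.injOn

lemma aux_copies_card {r : ℕ} {V : Type*} [DecidableEq V] {F : SimpleGraph (Fin r)}
    {H : FGraph V} (hH : FGraph.Wf H F) (n : ℕ) :
    (Finset.univ.filter fun K : FGraph (Fin n) => FGraph.IsoTo H K).card ≤ n ^ H.1.card := by
  have hc : Nat.card {K : FGraph (Fin n) // FGraph.IsoTo H K} ≤ Nat.card (H.1 → Fin n) := by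
    apply Nat.card_le_card_of_injective
      (fun K : {K : FGraph (Fin n) // FGraph.IsoTo H K} => fun x : H.1 => K.2.choose x)
    intro K L hKL
    apply Subtype.ext
    rw [← K.2.choose_spec.2, ← L.2.choose_spec.2]
    apply aux_fgraph_map_congr hH
    intro x hx
    exact congrFun hKL ⟨x, hx⟩
  rw [Nat.card_eq_fintype_card, Fintype.card_subtype] at hc
  simpa using hc

lemma aux_prob {α : Type*} [DecidableEq α] (A T : Finset α) (hT : T ⊆ A) (p : ℝ) :
    ∑ S ∈ A.powerset, p ^ S.card * (1 - p) ^ (A.card - S.card) * (if T ⊆ S then 1 else 0)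
      = p ^ T.card := by
  have h1 : ∑ S ∈ A.powerset, p ^ S.card * (1 - p) ^ (A.card - S.card) *
        (if T ⊆ S then (1 : ℝ) else 0)
      = ∑ S ∈ (A \ T).powerset,
        p ^ T.card * (p ^ S.card * (1 - p) ^ ((A \ T).card - S.card)) := by
    simp only [mul_ite, mul_one, mul_zero]
    rw [← Finset.sum_filter]
    symm
    apply Finset.sum_bij' (fun S _ => T ∪ S) (fun S _ => S \ T)
    · intro S hS
      rw [Finset.mem_powerset] at hS
      rw [Finset.mem_filter, Finset.mem_powerset]
      exact ⟨Finset.union_subset hT (hS.trans Finset.sdiff_subset), Finset.subset_union_left⟩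
    · intro S hS
      rw [Finset.mem_filter, Finset.mem_powerset] at hS
      rw [Finset.mem_powerset]
      exact Finset.sdiff_subset_sdiff hS.1 (Finset.Subset.refl _)
    · intro S hS
      rw [Finset.mem_powerset] at hS
      ext x
      have := @hS x
      simp only [Finset.mem_sdiff, Finset.mem_union] at *
      tauto
    · intro S hS
      rw [Finset.mem_filter, Finset.mem_powerset] at hS
      exact Finset.union_sdiff_of_subset hS.2
    · intro S hS
      rw [Finset.mem_powerset] at hS
      have hd : Disjoint T S := by
        rw [Finset.disjoint_left]
        intro x hx hxS
        exact (Finset.mem_sdiff.1 (hS hxS)).2 hx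
      rw [Finset.card_union_of_disjoint hd, Finset.card_sdiff_of_subset hT, pow_add, Nat.sub_sub,
        mul_assoc]
  rw [h1, ← Finset.mul_sum, Finset.sum_pow_mul_eq_add_pow]
  simp

lemma aux_exp_le {r : ℕ} {V : Type*} [Nonempty V] [DecidableEq V] {F : SimpleGraph (Fin r)}
    {H : FGraph V} (hH : FGraph.Wf H F) (n : ℕ) (p : ℝ) (hp : 0 ≤ p) :
    0 ≤ hfExp r n F p (fun S => (copyCount H S : ℝ)) ∧
    hfExp r n F p (fun S => (copyCount H S : ℝ)) ≤ (n : ℝ) ^ H.1.card * p ^ H.2.card := by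
  set A := allFEdges r n F with hA
  set I := Finset.univ.filter (fun K : FGraph (Fin n) => FGraph.IsoTo H K) with hI
  have hcc : ∀ S : Finset (FEdge (Fin n)),
      (copyCount H S : ℝ) = ∑ K ∈ I, if K.2 ⊆ S then (1 : ℝ) else 0 := by
    intro S
    unfold copyCount
    rw [Nat.card_eq_fintype_card, Fintype.card_subtype, Finset.sum_boole, hI, Finset.filter_filter]
    congr 2
    ext K
    simp [and_comm]
  have key : hfExp r n F p (fun S => (copyCount H S : ℝ))
      = ∑ K ∈ I, if K.2 ⊆ A then p ^ H.2.card else 0 := by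
    unfold hfExp
    simp only [hcc, Finset.mul_sum]
    rw [Finset.sum_comm]
    apply Finset.sum_congr rfl
    intro K hK
    split_ifs with hKA
    · rw [hI, Finset.mem_filter] at hK
      obtain ⟨-, ψ, hψ, hmap⟩ := hK
      have hcard : K.2.card = H.2.card := by
        rw [← hmap]; exact aux_card_map hH hψ
      rw [← hcard]
      exact aux_prob A K.2 hKA p
    · apply Finset.sum_eq_zero
      intro S hS
      rw [Finset.mem_powerset] at hS
      rw [if_neg (fun h => hKA (h.trans hS)), mul_zero]
  have hpp : 0 ≤ p ^ H.2.card := pow_nonneg hp _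
  rw [key]
  refine ⟨Finset.sum_nonneg fun K _ => by split_ifs <;> simp [hpp], ?_⟩
  calc _ ≤ ∑ K ∈ I, p ^ H.2.card := by
        apply Finset.sum_le_sum
        intro K _
        split_ifs
        · exact le_rfl
        · exact hpp
    _ = (I.card : ℝ) * p ^ H.2.card := by simp
    _ ≤ _ := by
        apply mul_le_mul_of_nonneg_right _ hpp
        exact_mod_cast aux_copies_card hH n

/-! ### Combinatorics of clean cycles -/

lemma aux_cycle_exit {k : ℕ} (hk : 0 < k) (I : Finset (Fin k)) (hne : I.Nonempty)
    (hI : I ≠ Finset.univ) :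
    ∃ i ∈ I, ∃ j ∉ I, ((i : ℕ) + 1) % k = (j : ℕ) := by
  by_contra hcon
  push Not at hcon
  apply hI
  obtain ⟨i0, hi0⟩ := hne
  have hstep : ∀ m : ℕ, (⟨((i0 : ℕ) + m) % k, Nat.mod_lt _ hk⟩ : Fin k) ∈ I := by
    intro m
    induction m with
    | zero =>
      have : (⟨((i0 : ℕ) + 0) % k, Nat.mod_lt _ hk⟩ : Fin k) = i0 := by
        apply Fin.ext
        simp [Nat.mod_eq_of_lt i0.2]
      rwa [this]
    | succ m ih =>
      by_contra hm
      apply hcon _ ih _ hm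
      simp [Nat.add_assoc]
  ext j
  simp only [Finset.mem_univ, iff_true]
  have := hstep (j + k - i0)
  have he : (⟨((i0 : ℕ) + (j + k - i0)) % k, Nat.mod_lt _ hk⟩ : Fin k) = j := by
    apply Fin.ext
    have h1 := i0.2
    have h2 : (i0 : ℕ) + (j + k - i0) = j + k := by omega
    simp [h2, Nat.mod_eq_of_lt j.2]
  rwa [he] at this

lemma aux_cycle_bounds {r : ℕ} (hr : 3 ≤ r) {V : Type*} [DecidableEq V] {F : SimpleGraph (Fin r)}
    {C : FGraph V} (hC : IsCleanCycle F C) :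
    C.1.card ≤ (r - 1) * C.2.card ∧
    ∀ M ⊆ C.2, M ≠ C.2 → M.Nonempty → (r - 1) * M.card + 1 ≤ (M.sup Prod.fst).card := by
  obtain ⟨k, hwf, hsup, hcase⟩ := hC
  rcases hcase with ⟨-, h₁, h₂, hne, hC2, hcap⟩ | ⟨hk, h, hinj, hC2, v, hv, hadj, hnon⟩
  · have c1 : h₁.1.card = r := aux_copy_card (hwf h₁ (by simp [hC2])).1
    have c2 : h₂.1.card = r := aux_copy_card (hwf h₂ (by simp [hC2])).1
    constructor
    · have hu : C.1 = h₁.1 ∪ h₂.1 := by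
        rw [hsup, hC2]; simp [Finset.sup_insert]
      have := Finset.card_union_add_card_inter h₁.1 h₂.1
      rw [← hu, hcap, c1, c2] at this
      rw [hC2, Finset.card_pair hne]
      omega
    · intro M hM hMne hMn
      have hlt : M.card < C.2.card := Finset.card_lt_card (hM.ssubset_of_ne hMne)
      rw [hC2, Finset.card_pair hne] at hlt
      have hpos := hMn.card_pos
      have h1 : M.card = 1 := by omega
      obtain ⟨a, rfl⟩ := Finset.card_eq_one.1 h1
      have ca : a.1.card = r := aux_copy_card (hwf a (hM (by simp))).1
      simp [ca]
      omega
  · have hk0 : 0 < k := by omega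
    have hcard : ∀ i, (h i).1.card = r := fun i =>
      aux_copy_card (hwf (h i) (by simp [hC2])).1
    have hnext : ∀ i : Fin k, ∃ j : Fin k, ((i : ℕ) + 1) % k = (j : ℕ) := fun i =>
      ⟨⟨_, Nat.mod_lt _ hk0⟩, rfl⟩
    have hvmem : ∀ i j : Fin k, ((i : ℕ) + 1) % k = (j : ℕ) → v i ∈ (h i).1 ∧ v i ∈ (h j).1 := by
      intro i j hij
      have : v i ∈ (h i).1 ∩ (h j).1 := by rw [hadj i j hij]; simp
      exact Finset.mem_inter.1 this
    have hvi : ∀ i, v i ∈ (h i).1 := fun i => by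
      obtain ⟨j, hj⟩ := hnext i
      exact (hvmem i j hj).1
    have hne_next : ∀ i j : Fin k, ((i : ℕ) + 1) % k = (j : ℕ) → i ≠ j := by
      rintro i j hij rfl
      have hi := i.2
      by_cases hlast : (i : ℕ) + 1 = k
      · rw [hlast, Nat.mod_self] at hij; omega
      · rw [Nat.mod_eq_of_lt (by omega)] at hij; omega
    have hgc : ∀ i, ((h i).1.erase (v i)).card = r - 1 := fun i => by
      rw [Finset.card_erase_of_mem (hvi i), hcard]
    have hcross : ∀ i j : Fin k, i ≠ j → ∀ x, x ∈ (h i).1 → x ∈ (h j).1 →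
        (x = v i ∧ ((i : ℕ) + 1) % k = (j : ℕ)) ∨ (x = v j ∧ ((j : ℕ) + 1) % k = (i : ℕ)) := by
      intro i j hij x hxi hxj
      have hx : x ∈ (h i).1 ∩ (h j).1 := Finset.mem_inter.2 ⟨hxi, hxj⟩
      by_cases h1 : ((i : ℕ) + 1) % k = (j : ℕ)
      · left
        rw [hadj i j h1] at hx
        exact ⟨Finset.mem_singleton.1 hx, h1⟩
      · by_cases h2 : ((j : ℕ) + 1) % k = (i : ℕ)
        · right
          rw [Finset.inter_comm, hadj j i h2] at hx
          exact ⟨Finset.mem_singleton.1 hx, h2⟩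
        · rw [hnon i j hij h1 h2] at hx
          simp at hx
    constructor
    · have hsub : C.1 ⊆ Finset.univ.biUnion (fun i => (h i).1.erase (v i)) := by
        intro x hx
        rw [hsup, hC2, Finset.mem_sup] at hx
        obtain ⟨a, ha, hxa⟩ := hx
        obtain ⟨i, -, rfl⟩ := Finset.mem_image.1 ha
        rw [Finset.mem_biUnion]
        by_cases hxv : x = v i
        · obtain ⟨j, hj⟩ := hnext i
          refine ⟨j, Finset.mem_univ _, Finset.mem_erase.2 ⟨?_, ?_⟩⟩
          · rw [hxv]; exact fun he => hne_next i j hj (hv he)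
          · rw [hxv]; exact (hvmem i j hj).2
        · exact ⟨i, Finset.mem_univ _, Finset.mem_erase.2 ⟨hxv, hxa⟩⟩
      calc C.1.card ≤ _ := Finset.card_le_card hsub
        _ ≤ ∑ i : Fin k, ((h i).1.erase (v i)).card := Finset.card_biUnion_le
        _ = (r - 1) * C.2.card := by
          simp only [hgc]
          rw [hC2, Finset.card_image_of_injective _ hinj]
          simp [mul_comm]
    · intro M hM hMne hMn
      set I : Finset (Fin k) := Finset.univ.filter (fun i => h i ∈ M) with hI
      have hMI : M = I.image h := by
        ext a
        constructor
        · intro ha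
          have := hM ha
          rw [hC2] at this
          obtain ⟨i, -, rfl⟩ := Finset.mem_image.1 this
          exact Finset.mem_image_of_mem _ (by simp [hI, ha])
        · intro ha
          obtain ⟨i, hi, rfl⟩ := Finset.mem_image.1 ha
          simpa [hI] using hi
      have hIne : I.Nonempty := by
        rw [hMI] at hMn
        exact Finset.image_nonempty.1 hMn
      have hIu : I ≠ Finset.univ := by
        intro hu
        apply hMne
        rw [hMI, hu, hC2]
      obtain ⟨i, hi, j, hj, hij⟩ := aux_cycle_exit hk0 I hIne hIu
      have hnot : v i ∉ I.biUnion (fun l => (h l).1.erase (v l)) := by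
        intro hmem
        obtain ⟨l, hl, hml⟩ := Finset.mem_biUnion.1 hmem
        obtain ⟨hne, hml⟩ := Finset.mem_erase.1 hml
        have hil : i ≠ l := by rintro rfl; exact hne rfl
        rcases hcross i l hil (v i) (hvi i) hml with ⟨-, hx⟩ | ⟨hx, -⟩
        · apply hj
          have : j = l := Fin.ext (hij.symm.trans hx)
          rwa [this]
        · exact hil (hv hx)
      have hdisj : (↑I : Set (Fin k)).PairwiseDisjoint (fun l => (h l).1.erase (v l)) := by
        intro a _ b _ hab
        rw [Function.onFun, Finset.disjoint_left]
        intro x hxa hxb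
        obtain ⟨hna, hxa⟩ := Finset.mem_erase.1 hxa
        obtain ⟨hnb, hxb⟩ := Finset.mem_erase.1 hxb
        rcases hcross a b hab x hxa hxb with ⟨hx, -⟩ | ⟨hx, -⟩
        · exact hna hx
        · exact hnb hx
      have hsub : insert (v i) (I.biUnion (fun l => (h l).1.erase (v l))) ⊆ M.sup Prod.fst := by
        intro x hx
        rw [Finset.mem_sup]
        rcases Finset.mem_insert.1 hx with rfl | hx
        · exact ⟨h i, by rw [hMI]; exact Finset.mem_image_of_mem _ hi, hvi i⟩
        · obtain ⟨l, hl, hxl⟩ := Finset.mem_biUnion.1 hx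
          exact ⟨h l, by rw [hMI]; exact Finset.mem_image_of_mem _ hl, Finset.mem_of_mem_erase hxl⟩
      have hle := Finset.card_le_card hsub
      rw [Finset.card_insert_of_notMem hnot, Finset.card_biUnion hdisj] at hle
      simp only [hgc] at hle
      have hMc : M.card = I.card := by rw [hMI, Finset.card_image_of_injective _ hinj]
      rw [hMc]
      simpa [mul_comm] using hle

lemma aux_union_bound {r : ℕ} (hr : 3 ≤ r) {V : Type*} [DecidableEq V] {F : SimpleGraph (Fin r)}
    {C₁ C₂ : FGraph V} (h₁ : IsCleanCycle F C₁) (h₂ : IsCleanCycle F C₂)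
    (hne : C₁ ≠ C₂) (hover : (C₁.1 ∩ C₂.1).Nonempty) :
    (FGraph.union C₁ C₂).1.card + 1 ≤ (r - 1) * (FGraph.union C₁ C₂).2.card := by
  obtain ⟨b₁, m₁⟩ := aux_cycle_bounds hr h₁
  obtain ⟨b₂, m₂⟩ := aux_cycle_bounds hr h₂
  have s₁ : C₁.1 = C₁.2.sup Prod.fst := by obtain ⟨k, -, h, -⟩ := h₁; exact h
  have s₂ : C₂.1 = C₂.2.sup Prod.fst := by obtain ⟨k, -, h, -⟩ := h₂; exact h
  have hsub : (C₁.2 ∩ C₂.2).sup Prod.fst ⊆ C₁.1 ∩ C₂.1 := by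
    rw [s₁, s₂]
    exact Finset.subset_inter (Finset.sup_mono Finset.inter_subset_left)
      (Finset.sup_mono Finset.inter_subset_right)
  have key : (r - 1) * (C₁.2 ∩ C₂.2).card + 1 ≤ (C₁.1 ∩ C₂.1).card := by
    rcases (C₁.2 ∩ C₂.2).eq_empty_or_nonempty with he | hn
    · rw [he]
      simpa using hover
    · refine le_trans ?_ (Finset.card_le_card hsub)
      by_cases hM : C₁.2 ∩ C₂.2 = C₁.2
      · apply m₂ _ Finset.inter_subset_right _ hn
        intro hM2
        apply hne
        have h12 : C₁.2 = C₂.2 := hM.symm.trans hM2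
        exact Prod.ext (by rw [s₁, s₂, h12]) h12
      · exact m₁ _ Finset.inter_subset_left hM hn
  have hv := Finset.card_union_add_card_inter C₁.1 C₂.1
  have he := Finset.card_union_add_card_inter C₁.2 C₂.2
  have he' : (r - 1) * (C₁.2 ∪ C₂.2).card + (r - 1) * (C₁.2 ∩ C₂.2).card
      = (r - 1) * C₁.2.card + (r - 1) * C₂.2.card := by
    rw [← Nat.mul_add, he, Nat.mul_add]
  unfold FGraph.union
  simp only
  omega

lemma aux_pi_bound {r : ℕ} (hr : 3 ≤ r) (c ε : ℝ) (hc : 0 ≤ c) (n : ℕ) (hn : 2 * r ≤ n) :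
    (n : ℝ) ^ ε / (c * ((n - 1).choose (r - 1) : ℝ)) ≤
      (2 ^ (r - 1) * ((r - 1).factorial : ℝ) / c) * (n : ℝ) ^ (ε - ((r : ℝ) - 1)) := by
  have hn0 : (0 : ℝ) < n := by exact_mod_cast (by omega : 0 < n)
  have h1 := Nat.pow_sub_le_descFactorial (n - 1) (r - 1)
  rw [Nat.descFactorial_eq_factorial_mul_choose] at h1
  have h2 : (n : ℝ) / 2 ≤ ((n - 1 + 1 - (r - 1) : ℕ) : ℝ) := by
    have : (n : ℝ) ≤ ((2 * (n - 1 + 1 - (r - 1)) : ℕ) : ℝ) := by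
      exact_mod_cast (by omega : n ≤ 2 * (n - 1 + 1 - (r - 1)))
    push_cast at this ⊢
    linarith
  have h3 : ((n : ℝ) / 2) ^ (r - 1) ≤ ((r - 1).factorial : ℝ) * ((n - 1).choose (r - 1) : ℝ) := by
    calc _ ≤ (((n - 1 + 1 - (r - 1) : ℕ) : ℝ)) ^ (r - 1) := by gcongr
      _ ≤ _ := by exact_mod_cast h1
  have hf : (0 : ℝ) < (r - 1).factorial := by exact_mod_cast Nat.factorial_pos _
  have hp : (0 : ℝ) < (n : ℝ) ^ (r - 1) := pow_pos hn0 _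
  have hch : (n : ℝ) ^ (r - 1) / (2 ^ (r - 1) * (r - 1).factorial)
      ≤ ((n - 1).choose (r - 1) : ℝ) := by
    rw [div_pow, div_le_iff₀ (by positivity)] at h3
    rw [div_le_iff₀ (by positivity)]
    linarith
  have hrp : (n : ℝ) ^ (ε - ((r : ℝ) - 1)) = (n : ℝ) ^ ε / (n : ℝ) ^ (r - 1) := by
    rw [Real.rpow_sub hn0, ← Real.rpow_natCast, Nat.cast_sub (by omega)]
    simp
  have hpos : 0 < (n : ℝ) ^ (r - 1) / (2 ^ (r - 1) * (r - 1).factorial) := by positivity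
  calc _ = ((n : ℝ) ^ ε / c) / ((n - 1).choose (r - 1) : ℝ) := by rw [div_div]
    _ ≤ ((n : ℝ) ^ ε / c) / ((n : ℝ) ^ (r - 1) / (2 ^ (r - 1) * (r - 1).factorial)) := by
      apply div_le_div_of_nonneg_left _ hpos hch
      positivity
    _ = _ := by
      rw [hrp, div_div_eq_mul_div]
      ring

/-- For two distinct, overlapping clean `F`-cycles `C₁, C₂` with at most
`e(F)` `F`-edges each, the expected number of copies of `C₁ ∪ C₂` in `H_F(n,π)` with
`π ≤ n^ε/((r!/aut F)·C(n-1,r-1))` is `O(n^(-1+2e(F)ε))`. -/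
theorem overlapping_clean_cycles_bigO {r : ℕ} (hr : 3 ≤ r) (F : SimpleGraph (Fin r))
    (hF : Strictly1Balanced F) (ε : ℝ) (hε : 0 < ε) (π : ℕ → ℝ) (hπ0 : ∀ n, 0 ≤ π n)
    (hπ : ∀ n : ℕ, π n ≤ (n : ℝ) ^ ε /
      (((r.factorial : ℝ) / (autCard F : ℝ)) * ((n - 1).choose (r - 1) : ℝ)))
    (C₁ C₂ : FGraph ℕ) (h₁ : IsCleanCycle F C₁) (h₂ : IsCleanCycle F C₂)
    (hne : C₁ ≠ C₂) (he₁ : C₁.2.card ≤ edgeCnt F) (he₂ : C₂.2.card ≤ edgeCnt F)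
    (hover : (C₁.1 ∩ C₂.1).Nonempty) :
    (fun n : ℕ => hfExp r n F (π n) fun S => (copyCount (FGraph.union C₁ C₂) S : ℝ))
      =O[Filter.atTop] fun n : ℕ => (n : ℝ) ^ (-1 + 2 * (edgeCnt F : ℝ) * ε) := by
  set H := FGraph.union C₁ C₂ with hH
  have hwf : FGraph.Wf H F := by
    obtain ⟨k₁, w₁, -⟩ := h₁
    obtain ⟨k₂, w₂, -⟩ := h₂
    intro h hh
    rcases Finset.mem_union.1 (show h ∈ C₁.2 ∪ C₂.2 from hh) with h' | h'
    · exact ⟨(w₁ h h').1, (w₁ h h').2.trans Finset.subset_union_left⟩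
    · exact ⟨(w₂ h h').1, (w₂ h h').2.trans Finset.subset_union_right⟩
  have hb : H.1.card + 1 ≤ (r - 1) * H.2.card := aux_union_bound hr h₁ h₂ hne hover
  have he : H.2.card ≤ 2 * edgeCnt F := by
    have : H.2.card ≤ C₁.2.card + C₂.2.card := Finset.card_union_le C₁.2 C₂.2
    omega
  set c : ℝ := (r.factorial : ℝ) / (autCard F : ℝ) with hc
  have hc0 : 0 ≤ c := by positivity
  set D : ℝ := 2 ^ (r - 1) * ((r - 1).factorial : ℝ) / c with hD
  have hD0 : 0 ≤ D := by positivity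
  apply IsBigO.of_bound (D ^ H.2.card)
  filter_upwards [eventually_ge_atTop (2 * r)] with n hn
  have hn1 : (1 : ℝ) ≤ n := by exact_mod_cast (by omega : 1 ≤ n)
  have hn0 : (0 : ℝ) < n := by linarith
  obtain ⟨e0, e1⟩ := aux_exp_le hwf n (π n) (hπ0 n)
  rw [Real.norm_of_nonneg e0, Real.norm_of_nonneg (by positivity)]
  have hπn : π n ≤ D * (n : ℝ) ^ (ε - ((r : ℝ) - 1)) :=
    (hπ n).trans (aux_pi_bound hr c ε hc0 n hn)
  have hbR : (H.1.card : ℝ) + 1 ≤ ((r : ℝ) - 1) * H.2.card := by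
    have : ((H.1.card + 1 : ℕ) : ℝ) ≤ (((r - 1) * H.2.card : ℕ) : ℝ) := by exact_mod_cast hb
    rw [Nat.cast_mul, Nat.cast_sub (by omega)] at this
    simpa using this
  have heR : (H.2.card : ℝ) ≤ 2 * (edgeCnt F : ℝ) := by exact_mod_cast he
  calc _ ≤ (n : ℝ) ^ H.1.card * (π n) ^ H.2.card := e1
    _ ≤ (n : ℝ) ^ H.1.card * (D * (n : ℝ) ^ (ε - ((r : ℝ) - 1))) ^ H.2.card := by
      have := hπ0 n
      gcongr
    _ = D ^ H.2.card * (n : ℝ) ^ ((H.1.card : ℝ) + (ε - ((r : ℝ) - 1)) * (H.2.card : ℝ)) := by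
      rw [mul_pow, Real.rpow_add hn0, Real.rpow_natCast, Real.rpow_mul hn0.le, Real.rpow_natCast]
      ring
    _ ≤ _ := by
      apply mul_le_mul_of_nonneg_left _ (by positivity)
      apply Real.rpow_le_rpow_of_exponent_le hn1
      nlinarith [mul_le_mul_of_nonneg_right heR hε.le]

end
end

section
/- Let F be a strictly 1-balanced graph on r ≥ 3 vertices and let δ > 0 be a constant. There exists ε_0 > 0 (depending only on F) such that for every constant 0 < ε ≤ ε_0 the following holds with π = π(n) ≤ n^ε / ((r!/aut(F)) · C(n−1, r−1)) and p = (π/(1−n^{−δ}))^{1/e(F)}: for any two distinct clean d-cycles G_1, G_2 that are not vertex-disjoint and whose corresponding clean F-cycles have length at most e(F), the expected number of copies of the d-graph G_1 ∪ G_2 in the random d-graph G*(n,p) is o(1) as n → ∞. -/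
open scoped Classical
open Filter Asymptotics

noncomputable section

/-! ### Proof -/

theorem copy_mem {r : ℕ} {V : Type*} {F : SimpleGraph (Fin r)} {h : FEdge V}
    (hc : FEdge.IsCopyOf h F) {e : Sym2 V} (he : e ∈ h.2) {x : V} (hx : x ∈ e) : x ∈ h.1 := by
  obtain ⟨φ, hφ, h1, h2⟩ := hc
  have : e ∈ (↑h.2 : Set (Sym2 V)) := he
  rw [h2] at this
  obtain ⟨f, hf, rfl⟩ := this
  rw [Sym2.mem_map] at hx
  obtain ⟨a, _, rfl⟩ := hx
  have : φ a ∈ (↑h.1 : Set V) := by rw [h1]; exact ⟨a, rfl⟩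
  exact this

theorem copy_not_diag {r : ℕ} {V : Type*} {F : SimpleGraph (Fin r)} {h : FEdge V}
    (hc : FEdge.IsCopyOf h F) {e : Sym2 V} (he : e ∈ h.2) : ¬ e.IsDiag := by
  obtain ⟨φ, hφ, h1, h2⟩ := hc
  have : e ∈ (↑h.2 : Set (Sym2 V)) := he
  rw [h2] at this
  obtain ⟨f, hf, rfl⟩ := this
  rw [Sym2.isDiag_map hφ]
  exact F.not_isDiag_of_mem_edgeSet hf

theorem copy_card1 {r : ℕ} {V : Type*} {F : SimpleGraph (Fin r)} {h : FEdge V}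
    (hc : FEdge.IsCopyOf h F) : h.1.card = r := by
  obtain ⟨φ, hφ, h1, h2⟩ := hc
  rw [← Set.ncard_coe_finset, h1, ← Set.image_univ, Set.ncard_image_of_injective _ hφ]
  simp

theorem copy_card2 {r : ℕ} {V : Type*} {F : SimpleGraph (Fin r)} {h : FEdge V}
    (hc : FEdge.IsCopyOf h F) : h.2.card = edgeCnt F := by
  obtain ⟨φ, hφ, h1, h2⟩ := hc
  rw [← Set.ncard_coe_finset, h2, Set.ncard_image_of_injective _ (Sym2.map.injective hφ)]
  rfl

/-- The key consequence of strict 1-balancedness, for subgraphs of a copy of `F`. -/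
theorem copy_sub {r : ℕ} (hr : 3 ≤ r) {V : Type*} {F : SimpleGraph (Fin r)}
    (hF : Strictly1Balanced F) (he : 0 < edgeCnt F) {h : FEdge V}
    (hc : FEdge.IsCopyOf h F) (W : Finset V) (E : Finset (Sym2 V))
    (hE : E ⊆ h.2) (hW : W ⊆ h.1) (hs : ∀ e ∈ E, ∀ x ∈ e, x ∈ W) (hne : W.Nonempty) :
    (r - 1) * E.card + edgeCnt F ≤ edgeCnt F * W.card ∧
    (2 ≤ W.card → ¬ (W = h.1 ∧ E = h.2) →
      (r - 1) * E.card + edgeCnt F < edgeCnt F * W.card) := by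
  have hc' := hc
  by_cases hfull : W = h.1 ∧ E = h.2
  · refine ⟨?_, fun _ h => absurd hfull h⟩
    rw [hfull.1, hfull.2, copy_card1 hc, copy_card2 hc]
    obtain ⟨s, rfl⟩ : ∃ s, r = s + 1 := ⟨r - 1, by omega⟩
    simp only [Nat.add_sub_cancel]
    exact le_of_eq (by ring)
  by_cases h2 : 2 ≤ W.card
  · have key : (r - 1) * E.card + edgeCnt F < edgeCnt F * W.card := by
      rcases Nat.eq_zero_or_pos E.card with h0 | h0
      · rw [h0]; nlinarith
      obtain ⟨φ, hφ, h1, hh2⟩ := hc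
      let S : F.Subgraph :=
        { verts := φ ⁻¹' ↑W
          Adj := fun a b => s(φ a, φ b) ∈ E
          adj_sub := by
            intro a b hab
            have : s(φ a, φ b) ∈ (↑h.2 : Set (Sym2 V)) := hE hab
            rw [hh2] at this
            obtain ⟨f, hf, hfe⟩ := this
            have : f = s(a, b) := Sym2.map.injective hφ (by rw [hfe]; rfl)
            rw [this] at hf
            exact hf
          edge_vert := by
            intro a b hab
            exact hs _ hab _ (Sym2.mem_mk_left _ _)
          symm := ⟨by
            intro a b hab
            rw [Sym2.eq_swap]; exact hab⟩ }
      have hv : Set.image φ S.verts = ↑W := by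
        show φ '' (φ ⁻¹' ↑W) = ↑W
        apply Set.image_preimage_eq_of_subset
        rw [← h1]; exact_mod_cast hW
      have hes : Set.image (Sym2.map φ) S.edgeSet = ↑E := by
        ext e
        constructor
        · rintro ⟨f, hf, rfl⟩
          induction f using Sym2.ind with
          | _ a b => exact hf
        · intro hee
          have : e ∈ (↑h.2 : Set (Sym2 V)) := hE hee
          rw [hh2] at this
          obtain ⟨f, hf, rfl⟩ := this
          refine ⟨f, ?_, rfl⟩
          induction f using Sym2.ind with
          | _ a b => exact hee
      have hvc : S.verts.ncard = W.card := by
        rw [← Set.ncard_coe_finset, ← hv, Set.ncard_image_of_injective _ hφ]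
      have hec : S.edgeSet.ncard = E.card := by
        rw [← Set.ncard_coe_finset, ← hes, Set.ncard_image_of_injective _ (Sym2.map.injective hφ)]
      have hT : S ≠ ⊤ := by
        intro hT
        apply hfull
        constructor
        · apply Finset.coe_injective
          rw [h1, ← hv, hT]; simp
        · apply Finset.coe_injective
          rw [hh2, ← hes, hT]; simp
      have := hF S hT (by omega) (by omega)
      rw [hvc, hec, d1] at this
      have hr' : (0 : ℝ) < (r : ℝ) - 1 := by
        have : (3 : ℝ) ≤ r := by exact_mod_cast hr
        linarith
      have hw' : (0 : ℝ) < (W.card : ℝ) - 1 := by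
        have : (2 : ℝ) ≤ W.card := by exact_mod_cast h2
        linarith
      rw [div_lt_div_iff₀ hw' hr'] at this
      have h3 : (((r - 1 : ℕ) : ℝ)) = (r : ℝ) - 1 := by
        rw [Nat.cast_sub (by omega)]; simp
      have h4 : (((r - 1) * E.card + edgeCnt F : ℕ) : ℝ) < ((edgeCnt F * W.card : ℕ) : ℝ) := by
        push_cast
        rw [h3]; nlinarith
      exact_mod_cast h4
    exact ⟨key.le, fun _ _ => key⟩
  · have h1 : W.card = 1 := by
      have := hne.card_pos
      omega
    refine ⟨?_, fun h => absurd h h2⟩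
    have : E = ∅ := by
      rw [Finset.eq_empty_iff_forall_notMem]
      intro e hee
      have hd := copy_not_diag hc' (hE hee)
      obtain ⟨w, rfl⟩ := Finset.card_eq_one.1 h1
      induction e using Sym2.ind with
      | _ a b =>
        have ha := hs _ hee a (Sym2.mem_mk_left _ _)
        have hb := hs _ hee b (Sym2.mem_mk_right _ _)
        simp at ha hb
        subst ha; subst hb
        simp at hd
    rw [this, h1]; simp

/-- Uniform description of clean cycles. -/
theorem cycle_struct {r : ℕ} {V : Type*} [DecidableEq V] {F : SimpleGraph (Fin r)}
    {C : FGraph V} {k : ℕ} (hC : IsCleanCycleOfLen F C k) :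
    2 ≤ k ∧ ∃ (h : Fin k → FEdge V) (v : Fin k → V) (σ : Fin k → Fin k),
      Function.Injective h ∧ C.2 = Finset.image h Finset.univ ∧
      (∀ i, FEdge.IsCopyOf (h i) F) ∧
      Function.Injective v ∧ (∀ i, v i ∈ (h i).1) ∧ (∀ i, v i ∈ (h (σ i)).1) ∧
      (∀ i, σ i ≠ i) ∧
      (∀ P : Fin k → Prop, (∃ i, P i) → (∀ i, P i → P (σ i)) → ∀ i, P i) ∧
      (∀ i j, i ≠ j → Disjoint ((h i).1.erase (v i)) ((h j).1.erase (v j))) ∧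
      (3 ≤ k → ∀ i j, i ≠ j → ((h i).1 ∩ (h j).1).card ≤ 1) := by
  obtain ⟨hwf, h1, hh⟩ := hC
  rcases hh with ⟨rfl, h₁, h₂, hne, hC2, hcard⟩ | ⟨hk, h, hinj, hC2, v, vinj, hadj, hnon⟩
  · refine ⟨le_rfl, ?_⟩
    obtain ⟨x, y, hxy, hinter⟩ := Finset.card_eq_two.1 hcard
    have hx : x ∈ h₁.1 ∩ h₂.1 := by rw [hinter]; simp
    have hy : y ∈ h₁.1 ∩ h₂.1 := by rw [hinter]; simp
    rw [Finset.mem_inter] at hx hy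
    have hdis : Disjoint (h₁.1.erase x) (h₂.1.erase y) := by
      rw [Finset.disjoint_left]
      intro a ha hb
      rw [Finset.mem_erase] at ha hb
      have : a ∈ h₁.1 ∩ h₂.1 := Finset.mem_inter.2 ⟨ha.2, hb.2⟩
      rw [hinter] at this
      simp at this
      rcases this with h | h
      · exact ha.1 h
      · exact hb.1 h
    refine ⟨![h₁, h₂], ![x, y], ![1, 0], ?_, ?_, ?_, ?_, ?_, ?_, ?_, ?_, ?_, ?_⟩
    · intro i j hij
      fin_cases i <;> fin_cases j <;> simp_all
    · rw [hC2]; ext a; simp [Fin.exists_fin_two, eq_comm]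
    · intro i
      fin_cases i
      · exact (hwf h₁ (by rw [hC2]; simp)).1
      · exact (hwf h₂ (by rw [hC2]; simp)).1
    · intro i j hij
      fin_cases i <;> fin_cases j <;> simp_all
    · intro i; fin_cases i
      · exact hx.1
      · exact hy.2
    · intro i; fin_cases i
      · exact hx.2
      · exact hy.1
    · intro i; fin_cases i <;> simp
    · rintro P ⟨i, hi⟩ hs j
      have h0 := hs 0
      have h1 := hs 1
      simp at h0 h1
      fin_cases i <;> fin_cases j <;> simp_all
    · intro i j hij
      fin_cases i <;> fin_cases j
      · exact absurd rfl hij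
      · exact hdis
      · exact hdis.symm
      · exact absurd rfl hij
    · intro h; omega
  · refine ⟨by omega, h, v, fun i => ⟨((i : ℕ) + 1) % k, Nat.mod_lt _ (by omega)⟩, hinj, hC2,
      ?_, vinj, ?_, ?_, ?_, ?_, ?_, ?_⟩
    · intro i
      exact (hwf (h i) (by rw [hC2]; simp)).1
    · intro i
      have := hadj i ⟨((i : ℕ) + 1) % k, Nat.mod_lt _ (by omega)⟩ rfl
      have h2 : v i ∈ ({v i} : Finset V) := by simp
      rw [← this] at h2
      exact (Finset.mem_inter.1 h2).1
    · intro i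
      have := hadj i ⟨((i : ℕ) + 1) % k, Nat.mod_lt _ (by omega)⟩ rfl
      have h2 : v i ∈ ({v i} : Finset V) := by simp
      rw [← this] at h2
      exact (Finset.mem_inter.1 h2).2
    · intro i hi
      have := congrArg Fin.val hi
      simp only at this
      have hik := i.2
      rcases Nat.lt_or_ge ((i : ℕ) + 1) k with hlt | hge
      · rw [Nat.mod_eq_of_lt hlt] at this; omega
      · have hik' : (i : ℕ) + 1 = k := by omega
        rw [hik', Nat.mod_self] at this
        omega
    · rintro P ⟨i, hi⟩ hs j
      have : ∀ m : ℕ, P ⟨((i : ℕ) + m) % k, Nat.mod_lt _ (by omega)⟩ := by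
        intro m
        induction m with
        | zero =>
          have : (⟨((i : ℕ) + 0) % k, Nat.mod_lt _ (by omega)⟩ : Fin k) = i := by
            apply Fin.ext
            simp [Nat.mod_eq_of_lt i.2]
          rw [this]; exact hi
        | succ m ih =>
          have := hs _ ih
          convert this using 2
          simp [Nat.add_assoc]
      have h2 := this (k - i + j)
      have h3 : (⟨((i : ℕ) + (k - i + j)) % k, Nat.mod_lt _ (by omega)⟩ : Fin k) = j := by
        apply Fin.ext
        have : (i : ℕ) + (k - i + j) = j + k := by have := i.2; omega
        simp [this, Nat.mod_eq_of_lt j.2]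
      rw [h3] at h2
      exact h2
    · intro i j hij
      rw [Finset.disjoint_left]
      intro a ha hb
      rw [Finset.mem_erase] at ha hb
      have hab : a ∈ (h i).1 ∩ (h j).1 := Finset.mem_inter.2 ⟨ha.2, hb.2⟩
      by_cases c1 : ((i : ℕ) + 1) % k = (j : ℕ)
      · rw [hadj i j c1] at hab
        exact ha.1 (by simpa using hab)
      by_cases c2 : ((j : ℕ) + 1) % k = (i : ℕ)
      · rw [Finset.inter_comm, hadj j i c2] at hab
        exact hb.1 (by simpa using hab)
      rw [hnon i j hij c1 c2] at hab
      simp at hab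
    · intro _ i j hij
      by_cases c1 : ((i : ℕ) + 1) % k = (j : ℕ)
      · rw [hadj i j c1]; simp
      by_cases c2 : ((j : ℕ) + 1) % k = (i : ℕ)
      · rw [Finset.inter_comm, hadj j i c2]; simp
      rw [hnon i j hij c1 c2]; simp

theorem mem_shadow {V : Type*} [DecidableEq V] {C : FGraph V} {e : Sym2 V} :
    e ∈ shadowEdges C ↔ ∃ h ∈ C.2, e ∈ h.2 := by
  unfold shadowEdges
  rw [Finset.mem_sup]

theorem shadow_supp {r : ℕ} {V : Type*} [DecidableEq V] {F : SimpleGraph (Fin r)}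
    {C : FGraph V} (hwf : FGraph.Wf C F) {e : Sym2 V} (he : e ∈ shadowEdges C) {x : V}
    (hx : x ∈ e) : x ∈ C.1 := by
  obtain ⟨h, hh, heh⟩ := mem_shadow.1 he
  exact (hwf h hh).2 (copy_mem (hwf h hh).1 heh hx)

/-- Proper nonempty subgraphs of clean cycles are sparse. -/
theorem cycle_sub {r : ℕ} (hr : 3 ≤ r) {V : Type*} [DecidableEq V] {F : SimpleGraph (Fin r)}
    (hF : Strictly1Balanced F) (he : 0 < edgeCnt F) {C : FGraph V} {k : ℕ}
    (hC : IsCleanCycleOfLen F C k) (W : Finset V) (E : Finset (Sym2 V))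
    (hE : E ⊆ shadowEdges C) (hW : W ⊆ C.1) (hs : ∀ e ∈ E, ∀ x ∈ e, x ∈ W) (hne : W.Nonempty)
    (hnf : ¬ (W = C.1 ∧ E = shadowEdges C)) :
    (r - 1) * E.card < edgeCnt F * W.card := by
  obtain ⟨hk, h, v, σ, hinj, hC2, hcopy, vinj, hvi, hvs, hσ, htr, hdis, -⟩ := cycle_struct hC
  have hC1 : C.1 = C.2.sup Prod.fst := hC.2.1
  have hEc : E.card ≤ ∑ i, (E ∩ (h i).2).card := by
    have : E ⊆ Finset.univ.biUnion (fun i => E ∩ (h i).2) := by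
      intro e hee
      obtain ⟨g, hg, heg⟩ := mem_shadow.1 (hE hee)
      rw [hC2] at hg
      obtain ⟨i, _, rfl⟩ := Finset.mem_image.1 hg
      exact Finset.mem_biUnion.2 ⟨i, Finset.mem_univ _, Finset.mem_inter.2 ⟨hee, heg⟩⟩
    exact (Finset.card_le_card this).trans Finset.card_biUnion_le
  have hWc : ∑ i, ((W ∩ (h i).1).erase (v i)).card ≤ W.card := by
    rw [← Finset.card_biUnion]
    · apply Finset.card_le_card
      intro x hx
      obtain ⟨i, _, hx⟩ := Finset.mem_biUnion.1 hx
      exact (Finset.mem_inter.1 (Finset.mem_of_mem_erase hx)).1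
    · intro i _ j _ hij
      exact (hdis i j hij).mono (Finset.erase_subset_erase _ Finset.inter_subset_right)
        (Finset.erase_subset_erase _ Finset.inter_subset_right)
  have hsub : ∀ i, (W ∩ (h i).1).Nonempty → _ := fun i hi =>
    copy_sub hr hF he (hcopy i) (W ∩ (h i).1) (E ∩ (h i).2) Finset.inter_subset_right
      Finset.inter_subset_right (by
        intro e hee x hx
        rw [Finset.mem_inter] at hee
        exact Finset.mem_inter.2 ⟨hs e hee.1 x hx, copy_mem (hcopy i) hee.2 hx⟩) hi
  have hle : ∀ i, (r - 1) * (E ∩ (h i).2).card ≤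
      edgeCnt F * ((W ∩ (h i).1).erase (v i)).card := by
    intro i
    by_cases hi : (W ∩ (h i).1).Nonempty
    · have h1 := (hsub i hi).1
      have h2 := Finset.pred_card_le_card_erase (s := W ∩ (h i).1) (a := v i)
      have h3 : edgeCnt F * (W ∩ (h i).1).card ≤
          edgeCnt F * ((W ∩ (h i).1).erase (v i)).card + edgeCnt F := by
        have : (W ∩ (h i).1).card ≤ ((W ∩ (h i).1).erase (v i)).card + 1 := by omega
        calc _ ≤ edgeCnt F * (((W ∩ (h i).1).erase (v i)).card + 1) := Nat.mul_le_mul_left _ this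
          _ = _ := by ring
      omega
    · have : E ∩ (h i).2 = ∅ := by
        rw [Finset.eq_empty_iff_forall_notMem]
        intro e hee
        rw [Finset.mem_inter] at hee
        apply hi
        induction e using Sym2.ind with
        | _ a b =>
          exact ⟨a, Finset.mem_inter.2 ⟨hs _ hee.1 a (Sym2.mem_mk_left _ _),
            copy_mem (hcopy i) hee.2 (Sym2.mem_mk_left _ _)⟩⟩
      rw [this]; simp

  have hstrict : ∃ i, (r - 1) * (E ∩ (h i).2).card <
      edgeCnt F * ((W ∩ (h i).1).erase (v i)).card := by
    by_contra hcon
    push Not at hcon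
    have hstep : ∀ i, (W ∩ (h i).1).Nonempty → v i ∈ W := by
      intro i hi
      by_contra hv
      have h1 := (hsub i hi).1
      have h2 := hcon i
      rw [Finset.erase_eq_of_notMem (by simp [hv])] at h2
      omega
    have hall : ∀ i, (W ∩ (h i).1).Nonempty := by
      apply htr
      · obtain ⟨x, hx⟩ := hne
        have := hW hx
        rw [hC1, Finset.mem_sup] at this
        obtain ⟨g, hg, hxg⟩ := this
        rw [hC2] at hg
        obtain ⟨i, _, rfl⟩ := Finset.mem_image.1 hg
        exact ⟨i, x, Finset.mem_inter.2 ⟨hx, hxg⟩⟩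
      · intro i hi
        exact ⟨v i, Finset.mem_inter.2 ⟨hstep i hi, hvs i⟩⟩
    have hsurj : ∀ j, ∃ i, σ i = j :=
      htr (fun j => ∃ i, σ i = j) ⟨σ ⟨0, by omega⟩, _, rfl⟩ (fun i _ => ⟨i, rfl⟩)
    have hfull : ∀ j, W ∩ (h j).1 = (h j).1 ∧ E ∩ (h j).2 = (h j).2 := by
      intro j
      by_contra hnj
      obtain ⟨i, hij⟩ := hsurj j
      have hvjW := hstep j (hall j)
      have hviW := hstep i (hall i)
      have hne' : v i ≠ v j := fun hv => hσ i (by rw [hij]; exact (vinj hv).symm)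
      have hm : v j ∈ W ∩ (h j).1 := Finset.mem_inter.2 ⟨hvjW, hvi j⟩
      have hm' : v i ∈ W ∩ (h j).1 := Finset.mem_inter.2 ⟨hviW, hij ▸ hvs i⟩
      have h2 : 2 ≤ (W ∩ (h j).1).card := Finset.one_lt_card.2 ⟨_, hm', _, hm, hne'⟩
      have h3 := (hsub j (hall j)).2 h2 hnj
      have h4 := hcon j
      rw [Finset.card_erase_of_mem hm, Nat.mul_sub] at h4
      omega
    apply hnf
    constructor
    · apply Finset.Subset.antisymm hW
      rw [hC1]
      apply Finset.sup_le
      intro g hg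
      rw [hC2] at hg
      obtain ⟨i, _, rfl⟩ := Finset.mem_image.1 hg
      exact Finset.inter_eq_right.1 (hfull i).1
    · apply Finset.Subset.antisymm hE
      apply Finset.sup_le
      intro g hg
      rw [hC2] at hg
      obtain ⟨i, _, rfl⟩ := Finset.mem_image.1 hg
      exact Finset.inter_eq_right.1 (hfull i).2
  obtain ⟨i0, hi0⟩ := hstrict
  calc (r - 1) * E.card ≤ (r - 1) * ∑ i, (E ∩ (h i).2).card := Nat.mul_le_mul_left _ hEc
    _ = ∑ i, (r - 1) * (E ∩ (h i).2).card := Finset.mul_sum _ _ _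
    _ < ∑ i, edgeCnt F * ((W ∩ (h i).1).erase (v i)).card :=
        Finset.sum_lt_sum (fun i _ => hle i) ⟨i0, Finset.mem_univ _, hi0⟩
    _ = edgeCnt F * ∑ i, ((W ∩ (h i).1).erase (v i)).card := (Finset.mul_sum _ _ _).symm
    _ ≤ _ := Nat.mul_le_mul_left _ hWc

theorem cycle_verts {r : ℕ} {V : Type*} [DecidableEq V] {F : SimpleGraph (Fin r)}
    {C : FGraph V} {k : ℕ} (hC : IsCleanCycleOfLen F C k) : C.1.card ≤ k * (r - 1) := by
  obtain ⟨hk, h, v, σ, hinj, hC2, hcopy, vinj, hvi, hvs, hσ, htr, hdis, -⟩ := cycle_struct hC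
  have hC1 : C.1 = C.2.sup Prod.fst := hC.2.1
  have : C.1 ⊆ Finset.univ.biUnion (fun i => (h i).1.erase (v i)) := by
    rw [hC1]
    apply Finset.sup_le
    intro g hg
    rw [hC2] at hg
    obtain ⟨i, _, rfl⟩ := Finset.mem_image.1 hg
    intro x hx
    by_cases hxv : x = v i
    · refine Finset.mem_biUnion.2 ⟨σ i, Finset.mem_univ _, Finset.mem_erase.2 ⟨?_, hxv ▸ hvs i⟩⟩
      rw [hxv]
      exact fun hv => hσ i (vinj hv).symm
    · exact Finset.mem_biUnion.2 ⟨i, Finset.mem_univ _, Finset.mem_erase.2 ⟨hxv, hx⟩⟩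
  calc C.1.card ≤ ∑ i, ((h i).1.erase (v i)).card :=
        (Finset.card_le_card this).trans Finset.card_biUnion_le
    _ = ∑ i : Fin k, (r - 1) := by
        apply Finset.sum_congr rfl
        intro i _
        rw [Finset.card_erase_of_mem (hvi i), copy_card1 (hcopy i)]
    _ = k * (r - 1) := by simp

theorem cycle_edges_le {r : ℕ} {V : Type*} [DecidableEq V] {F : SimpleGraph (Fin r)}
    {C : FGraph V} {k : ℕ} (hC : IsCleanCycleOfLen F C k) :
    (shadowEdges C).card ≤ k * edgeCnt F := by
  obtain ⟨hk, h, v, σ, hinj, hC2, hcopy, -⟩ := cycle_struct hC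
  have : shadowEdges C ⊆ Finset.univ.biUnion (fun i => (h i).2) := by
    intro e hee
    obtain ⟨g, hg, heg⟩ := mem_shadow.1 hee
    rw [hC2] at hg
    obtain ⟨i, _, rfl⟩ := Finset.mem_image.1 hg
    exact Finset.mem_biUnion.2 ⟨i, Finset.mem_univ _, heg⟩
  calc _ ≤ ∑ i, ((h i).2).card := (Finset.card_le_card this).trans Finset.card_biUnion_le
    _ = ∑ i : Fin k, edgeCnt F := Finset.sum_congr rfl fun i _ => copy_card2 (hcopy i)
    _ = _ := by simp

theorem dcycle_edges {r : ℕ} {V : Type*} [DecidableEq V] {F : SimpleGraph (Fin r)}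
    {C : FGraph V} {k : ℕ} {G : DGraph V} (hC : IsCleanCycleOfLen F C k)
    (hG : IsCleanDCycleOf F G C) : k * edgeCnt F ≤ G.2.1.card + G.2.2.card := by
  obtain ⟨hk, h, v, σ, hinj, hC2, hcopy, vinj, hvi, hvs, hσ, htr, hdis, hinter⟩ := cycle_struct hC
  rcases hG with ⟨-, hns, rfl⟩ | ⟨hsp, rfl⟩
  · simp only [Finset.card_empty, add_zero]
    have hd : ∀ i j, i ≠ j → Disjoint (h i).2 (h j).2 := by
      intro i j hij
      rw [Finset.disjoint_left]
      intro e hei hej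
      induction e using Sym2.ind with
      | _ a b =>
        have hab : a ≠ b := by
          have := copy_not_diag (hcopy i) hei
          simpa using this
        have ha : a ∈ (h i).1 ∩ (h j).1 := Finset.mem_inter.2
          ⟨copy_mem (hcopy i) hei (Sym2.mem_mk_left _ _),
            copy_mem (hcopy j) hej (Sym2.mem_mk_left _ _)⟩
        have hb : b ∈ (h i).1 ∩ (h j).1 := Finset.mem_inter.2
          ⟨copy_mem (hcopy i) hei (Sym2.mem_mk_right _ _),
            copy_mem (hcopy j) hej (Sym2.mem_mk_right _ _)⟩
        have hc2 : 1 < ((h i).1 ∩ (h j).1).card := Finset.one_lt_card.2 ⟨a, ha, b, hb, hab⟩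
        rcases Nat.lt_or_ge 2 k with h3 | h3
        · have := hinter h3 i j hij
          omega
        · have hk2 : k = 2 := by omega
          subst hk2
          apply hns
          have hC' := hC
          rcases hC with ⟨_, _, ⟨_, g₁, g₂, hg, hgC, hcard⟩ | ⟨h3, _⟩⟩
          · refine ⟨hC', g₁, g₂, hg, hgC, a, b, hab, ?_⟩
            have m : ∀ i, h i = g₁ ∨ h i = g₂ := by
              intro i
              have : h i ∈ C.2 := by rw [hC2]; simp
              rw [hgC] at this
              simpa using this
            have hne : h i ≠ h j := fun hh => hij (hinj hh)
            have : (h i = g₁ ∧ h j = g₂) ∨ (h i = g₂ ∧ h j = g₁) := by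
              rcases m i with h1 | h1 <;> rcases m j with h2 | h2
              · exact absurd (h1.trans h2.symm) hne
              · exact Or.inl ⟨h1, h2⟩
              · exact Or.inr ⟨h1, h2⟩
              · exact absurd (h1.trans h2.symm) hne
            have hsub : a ∈ g₁.1 ∩ g₂.1 ∧ b ∈ g₁.1 ∩ g₂.1 ∧ s(a, b) ∈ g₁.2 ∧ s(a, b) ∈ g₂.2 := by
              rcases this with ⟨h1, h2⟩ | ⟨h1, h2⟩
              · rw [← h1, ← h2]; exact ⟨ha, hb, hei, hej⟩
              · rw [← h1, ← h2, Finset.inter_comm]; exact ⟨ha, hb, hej, hei⟩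
            refine ⟨?_, hsub.2.2.1, hsub.2.2.2⟩
            symm
            apply Finset.eq_of_subset_of_card_le
            · intro x hx
              simp only [Finset.mem_insert, Finset.mem_singleton] at hx
              rcases hx with rfl | rfl
              · exact hsub.1
              · exact hsub.2.1
            · rw [hcard, Finset.card_pair hab]
          · omega
    have hsubs : Finset.univ.biUnion (fun i => (h i).2) ⊆ shadowEdges C := by
      intro e hee
      obtain ⟨i, _, hi⟩ := Finset.mem_biUnion.1 hee
      exact mem_shadow.2 ⟨h i, by rw [hC2]; simp, hi⟩
    calc k * edgeCnt F = ∑ i : Fin k, edgeCnt F := by simp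
      _ = ∑ i, ((h i).2).card := Finset.sum_congr rfl fun i _ => (copy_card2 (hcopy i)).symm
      _ = (Finset.univ.biUnion (fun i => (h i).2)).card :=
          (Finset.card_biUnion fun i _ j _ hij => hd i j hij).symm
      _ ≤ _ := Finset.card_le_card hsubs
  · simp only [Finset.card_singleton]
    obtain ⟨hlen, h₁, h₂, hne, hCe, x, y, hxy, hxyi, -, -⟩ := hsp
    have hk2 : k = 2 := by
      have h1 : C.2.card = k := by
        rw [hC2, Finset.card_image_of_injective _ hinj]; simp
      rw [hCe, Finset.card_pair hne] at h1
      exact h1.symm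
    subst hk2
    have c1 := (hC.1 h₁ (by rw [hCe]; simp)).1
    have c2 := (hC.1 h₂ (by rw [hCe]; simp)).1
    have hsh : shadowEdges C = h₁.2 ∪ h₂.2 := by
      ext e
      rw [mem_shadow, hCe]
      simp
    have hi : h₁.2 ∩ h₂.2 ⊆ {s(x, y)} := by
      intro e hee
      rw [Finset.mem_inter] at hee
      have hnd := copy_not_diag c1 hee.1
      induction e using Sym2.ind with
      | _ a b =>
        have hab : a ≠ b := by simpa using hnd
        have ha : a ∈ h₁.1 ∩ h₂.1 := Finset.mem_inter.2
          ⟨copy_mem c1 hee.1 (Sym2.mem_mk_left _ _), copy_mem c2 hee.2 (Sym2.mem_mk_left _ _)⟩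
        have hb : b ∈ h₁.1 ∩ h₂.1 := Finset.mem_inter.2
          ⟨copy_mem c1 hee.1 (Sym2.mem_mk_right _ _), copy_mem c2 hee.2 (Sym2.mem_mk_right _ _)⟩
        rw [hxyi] at ha hb
        simp only [Finset.mem_insert, Finset.mem_singleton] at ha hb
        rw [Finset.mem_singleton]
        rcases ha with rfl | rfl <;> rcases hb with rfl | rfl
        · exact absurd rfl hab
        · rfl
        · exact Sym2.eq_swap
        · exact absurd rfl hab
    have h1 := Finset.card_union_add_card_inter h₁.2 h₂.2
    have h2 := Finset.card_le_card hi
    rw [Finset.card_singleton] at h2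
    rw [copy_card2 c1, copy_card2 c2] at h1
    rw [hsh]
    omega

theorem dcycle_basic {r : ℕ} {V : Type*} [DecidableEq V] {F : SimpleGraph (Fin r)}
    {C : FGraph V} {G : DGraph V} (hG : IsCleanDCycleOf F G C) :
    G.1 = C.1 ∧ G.2.1 = shadowEdges C ∧ (G.2.2 = ∅ ∨ G.2.2 = {C}) := by
  rcases hG with ⟨-, hns, rfl⟩ | ⟨hsp, rfl⟩ <;> simp

/-- Density of the union. -/
theorem union_dense {r : ℕ} (hr : 3 ≤ r) {V : Type*} [DecidableEq V] {F : SimpleGraph (Fin r)}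
    (hF : Strictly1Balanced F) {G₁ G₂ : DGraph V} {C₁ C₂ : FGraph V} {k₁ k₂ : ℕ}
    (h1 : IsCleanDCycleOf F G₁ C₁) (h2 : IsCleanDCycleOf F G₂ C₂) (hne : G₁ ≠ G₂)
    (hk1 : k₁ ≤ edgeCnt F) (hk2 : k₂ ≤ edgeCnt F)
    (hC1 : IsCleanCycleOfLen F C₁ k₁) (hC2 : IsCleanCycleOfLen F C₂ k₂)
    (hinter : (G₁.1 ∩ G₂.1).Nonempty) :
    0 < edgeCnt F ∧
    edgeCnt F * (G₁.1 ∪ G₂.1).card <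
      (r - 1) * ((G₁.2.1 ∪ G₂.2.1).card + (G₁.2.2 ∪ G₂.2.2).card) ∧
    (G₁.2.1 ∪ G₂.2.1).card + (G₁.2.2 ∪ G₂.2.2).card ≤ 2 * edgeCnt F ^ 2 + 2 := by
  have he : 0 < edgeCnt F := by
    have := (cycle_struct hC1).1
    omega
  have hw1 : edgeCnt F * C₁.1.card ≤ (r - 1) * (G₁.2.1.card + G₁.2.2.card) := by
    calc _ ≤ edgeCnt F * (k₁ * (r - 1)) := Nat.mul_le_mul_left _ (cycle_verts hC1)
      _ = (r - 1) * (k₁ * edgeCnt F) := by ring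
      _ ≤ _ := Nat.mul_le_mul_left _ (dcycle_edges hC1 h1)
  have hw2 : edgeCnt F * C₂.1.card ≤ (r - 1) * (G₂.2.1.card + G₂.2.2.card) := by
    calc _ ≤ edgeCnt F * (k₂ * (r - 1)) := Nat.mul_le_mul_left _ (cycle_verts hC2)
      _ = (r - 1) * (k₂ * edgeCnt F) := by ring
      _ ≤ _ := Nat.mul_le_mul_left _ (dcycle_edges hC2 h2)
  obtain ⟨hV1, hU1, hD1⟩ := dcycle_basic h1
  obtain ⟨hV2, hU2, hD2⟩ := dcycle_basic h2
  refine ⟨he, ?_, ?_⟩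
  · by_cases heq : G₁.1 = G₂.1 ∧ G₁.2.1 = G₂.2.1
    · have hDne : G₁.2.2 ≠ G₂.2.2 := fun h => hne (Prod.ext heq.1 (Prod.ext heq.2 h))
      rw [← heq.1, ← heq.2, Finset.union_self, Finset.union_self, hV1]
      have hlt : G₁.2.2.card + 1 ≤ (G₁.2.2 ∪ G₂.2.2).card ∨
          G₂.2.2.card + 1 ≤ (G₁.2.2 ∪ G₂.2.2).card := by
        by_contra hcon
        push Not at hcon
        have e1 := Finset.eq_of_subset_of_card_le
          (Finset.subset_union_left : G₁.2.2 ⊆ G₁.2.2 ∪ G₂.2.2) (by omega)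
        have e2 := Finset.eq_of_subset_of_card_le
          (Finset.subset_union_right : G₂.2.2 ⊆ G₁.2.2 ∪ G₂.2.2) (by omega)
        exact hDne (e1.trans e2.symm)
      rw [← hV2, ← heq.1, ← heq.2, hV1] at hw2
      rcases hlt with hlt | hlt
      · have : (r - 1) * (G₁.2.1.card + (G₁.2.2.card + 1)) ≤
            (r - 1) * (G₁.2.1.card + (G₁.2.2 ∪ G₂.2.2).card) := by gcongr
        have e : (r - 1) * (G₁.2.1.card + (G₁.2.2.card + 1)) =
          (r - 1) * (G₁.2.1.card + G₁.2.2.card) + (r - 1) := by ring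
        omega
      · have : (r - 1) * (G₁.2.1.card + (G₂.2.2.card + 1)) ≤
            (r - 1) * (G₁.2.1.card + (G₁.2.2 ∪ G₂.2.2).card) := by gcongr
        have e : (r - 1) * (G₁.2.1.card + (G₂.2.2.card + 1)) =
          (r - 1) * (G₁.2.1.card + G₂.2.2.card) + (r - 1) := by ring
        omega
    · have hDd : (G₁.2.2 ∪ G₂.2.2).card = G₁.2.2.card + G₂.2.2.card := by
        rcases hD1 with hD1 | hD1
        · rw [hD1]; simp
        rcases hD2 with hD2 | hD2
        · rw [hD2]; simp
        rw [Finset.card_union_of_disjoint]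
        rw [hD1, hD2, Finset.disjoint_singleton]
        rintro rfl
        exact heq ⟨hV1.trans hV2.symm, hU1.trans hU2.symm⟩
      have hs : ∀ e ∈ G₁.2.1 ∩ G₂.2.1, ∀ x ∈ e, x ∈ G₁.1 ∩ G₂.1 := by
        intro e hee x hx
        rw [Finset.mem_inter] at hee ⊢
        rw [hU1, hU2] at hee
        rw [hV1, hV2]
        exact ⟨shadow_supp hC1.1 hee.1 hx, shadow_supp hC2.1 hee.2 hx⟩
      have hJ : (r - 1) * (G₁.2.1 ∩ G₂.2.1).card < edgeCnt F * (G₁.1 ∩ G₂.1).card := by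
        by_cases hc : G₁.1 ∩ G₂.1 = C₁.1 ∧ G₁.2.1 ∩ G₂.2.1 = shadowEdges C₁
        · by_cases hc' : G₁.1 ∩ G₂.1 = C₂.1 ∧ G₁.2.1 ∩ G₂.2.1 = shadowEdges C₂
          · exfalso
            apply heq
            exact ⟨hV1.trans (hc.1.symm.trans (hc'.1.trans hV2.symm)),
              hU1.trans (hc.2.symm.trans (hc'.2.trans hU2.symm))⟩
          · exact cycle_sub hr hF he hC2 _ _ (hU2 ▸ Finset.inter_subset_right)
              (hV2 ▸ Finset.inter_subset_right) hs hinter hc'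
        · exact cycle_sub hr hF he hC1 _ _ (hU1 ▸ Finset.inter_subset_left)
              (hV1 ▸ Finset.inter_subset_left) hs hinter hc
      have a1 := congrArg (fun t => edgeCnt F * t) (Finset.card_union_add_card_inter G₁.1 G₂.1)
      have a2 := congrArg (fun t => (r - 1) * t) (Finset.card_union_add_card_inter G₁.2.1 G₂.2.1)
      rw [← hV1] at hw1
      rw [← hV2] at hw2
      rw [hDd]
      simp only [mul_add] at *
      omega
  · have b1 := cycle_edges_le hC1
    have b2 := cycle_edges_le hC2
    rw [← hU1] at b1
    rw [← hU2] at b2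
    have c1 : k₁ * edgeCnt F ≤ edgeCnt F ^ 2 := by nlinarith
    have c2 : k₂ * edgeCnt F ≤ edgeCnt F ^ 2 := by nlinarith
    have d1 : G₁.2.2.card ≤ 1 := by rcases hD1 with h | h <;> rw [h] <;> simp
    have d2 : G₂.2.2.card ≤ 1 := by rcases hD2 with h | h <;> rw [h] <;> simp
    have e1 := Finset.card_union_le G₁.2.1 G₂.2.1
    have e2 := Finset.card_union_le G₁.2.2 G₂.2.2
    omega

theorem sum_powerset_ind {α : Type*} [DecidableEq α] (A S : Finset α) (p : ℝ) :
    ∑ U ∈ A.powerset, p ^ U.card * (1 - p) ^ (A.card - U.card) * (if S ⊆ U then (1 : ℝ) else 0) =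
      if S ⊆ A then p ^ S.card else 0 := by
  by_cases hS : S ⊆ A
  · rw [if_pos hS]
    simp only [mul_ite, mul_one, mul_zero]
    rw [← Finset.sum_filter]
    have : ∑ U ∈ A.powerset.filter (fun U => S ⊆ U), p ^ U.card * (1 - p) ^ (A.card - U.card) =
        ∑ T ∈ (A \ S).powerset, p ^ S.card * (p ^ T.card * (1 - p) ^ ((A \ S).card - T.card)) := by
      refine Finset.sum_bij' (fun U _ => U \ S) (fun T _ => S ∪ T) ?_ ?_ ?_ ?_ ?_
      · intro U hU
        simp only [Finset.mem_filter, Finset.mem_powerset] at hU ⊢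
        exact Finset.sdiff_subset_sdiff hU.1 (Finset.Subset.refl S)
      · intro T hT
        simp only [Finset.mem_filter, Finset.mem_powerset] at hT ⊢
        exact ⟨Finset.union_subset hS (hT.trans Finset.sdiff_subset), Finset.subset_union_left⟩
      · intro U hU
        simp only [Finset.mem_filter, Finset.mem_powerset] at hU
        exact Finset.union_sdiff_of_subset hU.2
      · intro T hT
        simp only [Finset.mem_powerset] at hT
        ext x
        simp only [Finset.mem_sdiff, Finset.mem_union]
        constructor
        · rintro ⟨h1 | h1, h2⟩
          · exact absurd h1 h2
          · exact h1
        · intro hx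
          exact ⟨Or.inr hx, (Finset.mem_sdiff.1 (hT hx)).2⟩
      · intro U hU
        simp only [Finset.mem_filter, Finset.mem_powerset] at hU
        have h1 := Finset.card_sdiff_add_card_eq_card hU.2
        have h2 := Finset.card_sdiff_add_card_eq_card hS
        have h3 := Finset.card_le_card hU.1
        rw [← mul_assoc, ← pow_add]
        congr 2 <;> omega
    rw [this, ← Finset.mul_sum, Finset.sum_pow_mul_eq_add_pow]
    simp
  · rw [if_neg hS]
    apply Finset.sum_eq_zero
    intro U hU
    rw [if_neg, mul_zero]
    intro h
    exact hS (h.trans (Finset.mem_powerset.1 hU))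

/-- Everything in the d-graph lives on its vertex set. -/
def DSupp {V : Type*} (K : DGraph V) : Prop :=
  (∀ e ∈ K.2.1, ∀ x ∈ e, x ∈ K.1) ∧
  ∀ C ∈ K.2.2, (∀ x ∈ C.1, x ∈ K.1) ∧
    ∀ h ∈ C.2, (∀ x ∈ h.1, x ∈ K.1) ∧ ∀ e ∈ h.2, ∀ x ∈ e, x ∈ K.1

theorem image_congr' {α β : Type*} [DecidableEq β] {s : Finset α} {f g : α → β}
    (h : ∀ x ∈ s, f x = g x) : s.image f = s.image g :=
  Finset.image_congr h

theorem dmap_congr {V W : Type*} [DecidableEq V] [DecidableEq W] {K : DGraph V}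
    (hK : DSupp K) {f g : V → W} (h : ∀ x ∈ K.1, f x = g x) :
    DGraph.map f K = DGraph.map g K := by
  have hS : ∀ e : Sym2 V, (∀ x ∈ e, x ∈ K.1) → Sym2.map f e = Sym2.map g e := by
    intro e he
    exact Sym2.map_congr fun x hx => h x (he x hx)
  unfold DGraph.map
  refine Prod.ext (image_congr' h) (Prod.ext (image_congr' fun e he => hS e (hK.1 e he)) ?_)
  refine image_congr' fun C hC => ?_
  unfold FGraph.map
  refine Prod.ext (image_congr' fun x hx => h x ((hK.2 C hC).1 x hx)) (image_congr' fun a ha => ?_)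
  unfold FEdge.map
  exact Prod.ext (image_congr' fun x hx => h x (((hK.2 C hC).2 a ha).1 x hx))
    (image_congr' fun e he => hS e (((hK.2 C hC).2 a ha).2 e he))

theorem emap_comp {V W X : Type*} [DecidableEq V] [DecidableEq W] [DecidableEq X]
    (f : V → W) (g : W → X) (h : FEdge V) : FEdge.map g (FEdge.map f h) = FEdge.map (g ∘ f) h := by
  unfold FEdge.map
  refine Prod.ext ?_ ?_
  · simp [Finset.image_image]
  · simp only [Finset.image_image]
    refine image_congr' fun e _ => ?_
    simp [Sym2.map_map]

theorem fmap_comp {V W X : Type*} [DecidableEq V] [DecidableEq W] [DecidableEq X]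
    (f : V → W) (g : W → X) (h : FGraph V) :
    FGraph.map g (FGraph.map f h) = FGraph.map (g ∘ f) h := by
  unfold FGraph.map
  refine Prod.ext ?_ ?_
  · simp [Finset.image_image]
  · simp only [Finset.image_image]
    exact image_congr' fun e _ => emap_comp _ _ _

theorem dmap_comp {V W X : Type*} [DecidableEq V] [DecidableEq W] [DecidableEq X]
    (f : V → W) (g : W → X) (h : DGraph V) :
    DGraph.map g (DGraph.map f h) = DGraph.map (g ∘ f) h := by
  unfold DGraph.map
  refine Prod.ext ?_ (Prod.ext ?_ ?_)
  · simp [Finset.image_image]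
  · simp only [Finset.image_image]
    refine image_congr' fun e _ => ?_
    simp [Sym2.map_map]
  · simp only [Finset.image_image]
    exact image_congr' fun e _ => fmap_comp _ _ _

theorem dmap_id {V : Type*} [DecidableEq V] (K : DGraph V) : DGraph.map id K = K := by
  have h1 : ∀ h : FEdge V, FEdge.map id h = h := fun h => by
    unfold FEdge.map; simp
  have h2 : ∀ h : FGraph V, FGraph.map id h = h := fun h => by
    unfold FGraph.map
    have : (FEdge.map id : FEdge V → FEdge V) = id := funext h1
    rw [this]; simp
  unfold DGraph.map
  have : (FGraph.map id : FGraph V → FGraph V) = id := funext h2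
  rw [this]; simp

theorem iso_card {V W : Type*} [DecidableEq V] [DecidableEq W] [Nonempty V] {K : DGraph V}
    (hK : DSupp K) {L : DGraph W} (h : DGraph.IsoTo K L) :
    L.2.1.card = K.2.1.card ∧ L.2.2.card = K.2.2.card := by
  obtain ⟨ψ, hinj, rfl⟩ := h
  have hb : DGraph.map (Function.invFunOn ψ ↑K.1) (DGraph.map ψ K) = K := by
    rw [dmap_comp]
    rw [dmap_congr hK (g := id), dmap_id]
    intro x hx
    exact hinj.leftInvOn_invFunOn hx
  have h1 : K.2.1.card ≤ (DGraph.map ψ K).2.1.card := by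
    conv_lhs => rw [← hb]
    exact Finset.card_image_le
  have h2 : K.2.2.card ≤ (DGraph.map ψ K).2.2.card := by
    conv_lhs => rw [← hb]
    exact Finset.card_image_le
  exact ⟨le_antisymm Finset.card_image_le h1, le_antisymm Finset.card_image_le h2⟩

theorem iso_count {V : Type*} [DecidableEq V] {K : DGraph V} (hK : DSupp K) {n : ℕ} (hn : 0 < n) :
    (Finset.univ.filter fun L : DGraph (Fin n) => DGraph.IsoTo K L).card ≤ n ^ K.1.card := by
  let ext : (K.1 → Fin n) → V → Fin n := fun g x => if h : x ∈ K.1 then g ⟨x, h⟩ else ⟨0, hn⟩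
  have hsub : (Finset.univ.filter fun L : DGraph (Fin n) => DGraph.IsoTo K L) ⊆
      Finset.univ.image (fun g : K.1 → Fin n => DGraph.map (ext g) K) := by
    intro L hL
    obtain ⟨ψ, -, rfl⟩ := (Finset.mem_filter.1 hL).2
    refine Finset.mem_image.2 ⟨fun x => ψ x, Finset.mem_univ _, ?_⟩
    apply dmap_congr hK
    intro x hx
    simp [ext, hx]
  refine (Finset.card_le_card hsub).trans (Finset.card_image_le.trans ?_)
  simp

theorem dgExp_le {V : Type*} [DecidableEq V] [Nonempty V] {K : DGraph V} (hK : DSupp K)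
    {r n : ℕ} (F : SimpleGraph (Fin r)) (hn : 0 < n) {p : ℝ} (hp : 0 ≤ p) :
    0 ≤ dgExp r n F p (fun U D => (dCopyCount K U D : ℝ)) ∧
    dgExp r n F p (fun U D => (dCopyCount K U D : ℝ)) ≤
      (n : ℝ) ^ K.1.card * p ^ (K.2.1.card + K.2.2.card) := by
  set T := Finset.univ.filter fun L : DGraph (Fin n) => DGraph.IsoTo K L with hT
  have hcount : ∀ U D, (dCopyCount K U D : ℝ) =
      ∑ L ∈ T, (if L.2.1 ⊆ U then (1 : ℝ) else 0) * (if L.2.2 ⊆ D then (1 : ℝ) else 0) := by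
    intro U D
    unfold dCopyCount
    rw [Nat.subtype_card (T.filter fun L => L.2.1 ⊆ U ∧ L.2.2 ⊆ D) (by
      intro L
      rw [hT]
      simp only [Finset.mem_filter, Finset.mem_univ, true_and]
      tauto)]
    rw [Finset.card_filter, Nat.cast_sum]
    apply Finset.sum_congr rfl
    intro L _
    by_cases h1 : L.2.1 ⊆ U <;> by_cases h2 : L.2.2 ⊆ D <;>
      simp [h1, h2]
  have heq : dgExp r n F p (fun U D => (dCopyCount K U D : ℝ)) =
      ∑ L ∈ T, (∑ U ∈ (allUsual n).powerset, p ^ U.card * (1 - p) ^ ((allUsual n).card - U.card) *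
        (if L.2.1 ⊆ U then (1 : ℝ) else 0)) *
      (∑ D ∈ (allDummies r n F).powerset,
        p ^ D.card * (1 - p) ^ ((allDummies r n F).card - D.card) *
        (if L.2.2 ⊆ D then (1 : ℝ) else 0)) := by
    unfold dgExp
    simp only [hcount, Finset.sum_mul_sum]
    rw [Finset.sum_comm (s := T)]
    apply Finset.sum_congr rfl
    intro U _
    rw [Finset.sum_comm (s := T)]
    apply Finset.sum_congr rfl
    intro D _
    rw [Finset.mul_sum]
    apply Finset.sum_congr rfl
    intro L _
    rw [pow_add, pow_add]
    ring
  rw [heq]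
  simp only [sum_powerset_ind]
  refine ⟨Finset.sum_nonneg fun L _ => ?_, ?_⟩
  · apply mul_nonneg <;> split_ifs <;> positivity
  have hle : ∀ L ∈ T, (if L.2.1 ⊆ allUsual n then p ^ L.2.1.card else 0) *
      (if L.2.2 ⊆ allDummies r n F then p ^ L.2.2.card else 0) ≤
      p ^ (K.2.1.card + K.2.2.card) := by
    intro L hL
    obtain ⟨h1, h2⟩ := iso_card hK (Finset.mem_filter.1 hL).2
    rw [h1, h2, pow_add]
    have q1 : 0 ≤ p ^ K.2.1.card := by positivity
    have q2 : 0 ≤ p ^ K.2.2.card := by positivity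
    split_ifs
    · exact le_rfl
    · rw [mul_zero]; positivity
    · rw [zero_mul]; positivity
    · rw [zero_mul]; positivity
  calc _ ≤ ∑ L ∈ T, p ^ (K.2.1.card + K.2.2.card) := Finset.sum_le_sum hle
    _ = T.card * p ^ (K.2.1.card + K.2.2.card) := by simp
    _ ≤ _ := by
      have := iso_count hK hn
      have h2 : (T.card : ℝ) ≤ (n : ℝ) ^ K.1.card := by
        rw [hT]; exact_mod_cast this
      gcongr

theorem asym {R e v m : ℕ} (he : 0 < e) (hd : e * v < R * m) {ε δ B : ℝ} (hδ : 0 < δ)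
    (hεm : ε * m < 1) (hB : 0 < B) (π : ℕ → ℝ) (h0 : ∀ n, 0 ≤ π n)
    (hπ : ∀ n : ℕ, π n ≤ (n : ℝ) ^ ε / (B * ((n - 1).choose R : ℝ))) :
    Tendsto (fun n : ℕ => (n : ℝ) ^ v * ((π n / (1 - (n : ℝ) ^ (-δ))) ^ ((1 : ℝ) / (e : ℝ))) ^ m)
      atTop (nhds 0) := by
  have heR : (0 : ℝ) < e := by exact_mod_cast he
  set A : ℝ := 2 * (R.factorial * 2 ^ R) / B with hA
  have hApos : 0 < A := by positivity
  have h1 : ∀ᶠ n : ℕ in atTop, (n : ℝ) ^ (-δ) ≤ 1 / 2 := by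
    have := (tendsto_rpow_neg_atTop hδ).comp (tendsto_natCast_atTop_atTop (R := ℝ))
    exact (this.eventually (eventually_le_nhds (by norm_num : (0 : ℝ) < 1 / 2)))
  have key : ∀ᶠ n : ℕ in atTop,
      0 ≤ (n : ℝ) ^ v * ((π n / (1 - (n : ℝ) ^ (-δ))) ^ ((1 : ℝ) / (e : ℝ))) ^ m ∧
      (n : ℝ) ^ v * ((π n / (1 - (n : ℝ) ^ (-δ))) ^ ((1 : ℝ) / (e : ℝ))) ^ m ≤
        A ^ ((m : ℝ) / e) * (n : ℝ) ^ (-((R - ε) * (m / e) - v)) := by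
    filter_upwards [h1, eventually_ge_atTop (2 * R + 1)] with n hn1 hn2
    have hnpos : (0 : ℝ) < n := by
      have : 0 < n := by omega
      exact_mod_cast this
    have hden : (1 : ℝ) / 2 ≤ 1 - (n : ℝ) ^ (-δ) := by linarith
    have hch : ((n : ℝ) / 2) ^ R ≤ R.factorial * ((n - 1).choose R : ℝ) := by
      have h2 : ((n - 1 + 1 - R : ℕ) ^ R : ℕ) ≤ R.factorial * (n - 1).choose R := by
        rw [← Nat.descFactorial_eq_factorial_mul_choose]
        exact Nat.pow_sub_le_descFactorial _ _
      have h3 : (((n - 1 + 1 - R : ℕ) ^ R : ℕ) : ℝ) ≤ R.factorial * ((n - 1).choose R : ℝ) := by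
        exact_mod_cast h2
      refine le_trans ?_ h3
      push_cast
      have h4 : ((n : ℝ) / 2) ≤ ((n - 1 + 1 - R : ℕ) : ℝ) := by
        have h5 : n ≤ 2 * (n - 1 + 1 - R) := by omega
        have h6 : (n : ℝ) ≤ 2 * ((n - 1 + 1 - R : ℕ) : ℝ) := by exact_mod_cast h5
        linarith
      gcongr
    have hx0 : 0 ≤ π n / (1 - (n : ℝ) ^ (-δ)) := div_nonneg (h0 n) (by linarith)
    have hx : π n / (1 - (n : ℝ) ^ (-δ)) ≤ A * (n : ℝ) ^ (ε - R) := by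
      have hf : (0 : ℝ) < R.factorial := by positivity
      have hc : (n : ℝ) ^ R / (R.factorial * 2 ^ R) ≤ ((n - 1).choose R : ℝ) := by
        rw [div_le_iff₀ (by positivity)]
        rw [div_pow, div_le_iff₀ (by positivity)] at hch
        linarith
      calc π n / (1 - (n : ℝ) ^ (-δ)) ≤ π n / (1 / 2) :=
            div_le_div_of_nonneg_left (h0 n) (by norm_num) hden
        _ = 2 * π n := by ring
        _ ≤ 2 * ((n : ℝ) ^ ε / (B * ((n - 1).choose R : ℝ))) := by
            have := hπ n
            linarith
        _ ≤ 2 * ((n : ℝ) ^ ε / (B * ((n : ℝ) ^ R / (R.factorial * 2 ^ R)))) := by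
            gcongr
        _ = A * (n : ℝ) ^ (ε - R) := by
            rw [Real.rpow_sub hnpos, Real.rpow_natCast, hA]
            field_simp
    refine ⟨by positivity, ?_⟩
    have hpm : ((π n / (1 - (n : ℝ) ^ (-δ))) ^ ((1 : ℝ) / (e : ℝ))) ^ m =
        (π n / (1 - (n : ℝ) ^ (-δ))) ^ ((m : ℝ) / e) := by
      rw [← Real.rpow_natCast, ← Real.rpow_mul hx0]
      congr 1; ring
    rw [hpm]
    calc (n : ℝ) ^ v * (π n / (1 - (n : ℝ) ^ (-δ))) ^ ((m : ℝ) / e)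
        ≤ (n : ℝ) ^ v * (A * (n : ℝ) ^ (ε - R)) ^ ((m : ℝ) / e) := by gcongr
      _ = A ^ ((m : ℝ) / e) * ((n : ℝ) ^ (v : ℝ) * (n : ℝ) ^ ((ε - R) * ((m : ℝ) / e))) := by
          rw [Real.mul_rpow hApos.le (by positivity), ← Real.rpow_mul hnpos.le, Real.rpow_natCast]
          ring
      _ = _ := by
          rw [← Real.rpow_add hnpos]
          congr 2; ring
  have hpos : 0 < (R - ε) * ((m : ℝ) / e) - v := by
    have h2 : (e : ℝ) * v + 1 ≤ R * m := by exact_mod_cast hd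
    have : (R - ε) * ((m : ℝ) / e) - v = ((R * m - ε * m) - e * v) / e := by field_simp
    rw [this]
    apply div_pos _ heR
    linarith
  have hlim : Tendsto (fun n : ℕ => A ^ ((m : ℝ) / e) *
      (n : ℝ) ^ (-((R - ε) * ((m : ℝ) / e) - v))) atTop (nhds 0) := by
    have := ((tendsto_rpow_neg_atTop hpos).comp (tendsto_natCast_atTop_atTop (R := ℝ))).const_mul
      (A ^ ((m : ℝ) / e))
    simpa using this
  exact squeeze_zero' (key.mono fun n h => h.1) (key.mono fun n h => h.2) hlim

theorem dcycle_supp {r : ℕ} {V : Type*} [DecidableEq V] {F : SimpleGraph (Fin r)}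
    {C : FGraph V} {G : DGraph V} (hwf : FGraph.Wf C F) (hG : IsCleanDCycleOf F G C) :
    DSupp G := by
  obtain ⟨hV, hU, hD⟩ := dcycle_basic hG
  refine ⟨?_, ?_⟩
  · intro e he x hx
    rw [hU] at he
    rw [hV]
    exact shadow_supp hwf he hx
  · intro C' hC'
    have : C' = C := by
      rcases hD with h | h <;> rw [h] at hC' <;> simpa using hC'
    subst this
    rw [hV]
    refine ⟨fun x hx => hx, fun h hh => ⟨fun x hx => (hwf h hh).2 hx, fun e he x hx => ?_⟩⟩
    exact (hwf h hh).2 (copy_mem (hwf h hh).1 he hx)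

theorem dsupp_union {V : Type*} [DecidableEq V] {G₁ G₂ : DGraph V} (h1 : DSupp G₁)
    (h2 : DSupp G₂) : DSupp (DGraph.union G₁ G₂) := by
  unfold DGraph.union DSupp
  simp only [Finset.mem_union]
  refine ⟨?_, ?_⟩
  · rintro e (he | he) x hx
    · exact Or.inl (h1.1 e he x hx)
    · exact Or.inr (h2.1 e he x hx)
  · rintro C (hC | hC)
    · exact ⟨fun x hx => Or.inl ((h1.2 C hC).1 x hx), fun h hh =>
        ⟨fun x hx => Or.inl (((h1.2 C hC).2 h hh).1 x hx),
          fun e he x hx => Or.inl (((h1.2 C hC).2 h hh).2 e he x hx)⟩⟩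
    · exact ⟨fun x hx => Or.inr ((h2.2 C hC).1 x hx), fun h hh =>
        ⟨fun x hx => Or.inr (((h2.2 C hC).2 h hh).1 x hx),
          fun e he x hx => Or.inr (((h2.2 C hC).2 h hh).2 e he x hx)⟩⟩

theorem autCard_pos {r : ℕ} (F : SimpleGraph (Fin r)) : 0 < autCard F := by
  unfold autCard
  have : Finite (F ≃g F) :=
    Finite.of_injective (fun f : F ≃g F => (f : Fin r → Fin r)) DFunLike.coe_injective
  have : Nonempty (F ≃g F) := ⟨SimpleGraph.Iso.refl⟩
  exact Nat.card_pos

/-- There is `ε₀ > 0` such that for all `0 < ε ≤ ε₀`, with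
`π ≤ n^ε/((r!/aut F)·C(n-1,r-1))` and `p = (π/(1-n^(-δ)))^(1/e(F))`, for any two distinct
overlapping clean d-cycles `G₁, G₂` whose corresponding clean `F`-cycles have length at
most `e(F)`, the expected number of copies of `G₁ ∪ G₂` in `G*(n,p)` is `o(1)`. -/
theorem overlapping_clean_dcycles_little_o {r : ℕ} (hr : 3 ≤ r) (F : SimpleGraph (Fin r))
    (hF : Strictly1Balanced F) (δ : ℝ) (hδ : 0 < δ) :
    ∃ ε₀ : ℝ, 0 < ε₀ ∧ ∀ ε : ℝ, 0 < ε → ε ≤ ε₀ →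
      ∀ π : ℕ → ℝ, (∀ n, 0 ≤ π n) →
        (∀ n : ℕ, π n ≤ (n : ℝ) ^ ε /
          (((r.factorial : ℝ) / (autCard F : ℝ)) * ((n - 1).choose (r - 1) : ℝ))) →
        ∀ (G₁ G₂ : DGraph ℕ) (C₁ C₂ : FGraph ℕ),
          IsCleanDCycleOf F G₁ C₁ → IsCleanDCycleOf F G₂ C₂ → G₁ ≠ G₂ →
          (∃ k₁, k₁ ≤ edgeCnt F ∧ IsCleanCycleOfLen F C₁ k₁) →
          (∃ k₂, k₂ ≤ edgeCnt F ∧ IsCleanCycleOfLen F C₂ k₂) →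
          (G₁.1 ∩ G₂.1).Nonempty →
          Filter.Tendsto
            (fun n : ℕ => dgExp r n F ((π n / (1 - (n : ℝ) ^ (-δ))) ^ ((1 : ℝ) / (edgeCnt F : ℝ)))
              fun U D => (dCopyCount (DGraph.union G₁ G₂) U D : ℝ))
            Filter.atTop (nhds 0) := by
  refine ⟨1 / (2 * (edgeCnt F : ℝ) ^ 2 + 3), by positivity, ?_⟩
  intro ε hε hε0 π hπ0 hπ G₁ G₂ C₁ C₂ h1 h2 hne ⟨k₁, hk1, hC1⟩ ⟨k₂, hk2, hC2⟩ hinter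
  obtain ⟨he, hd, hm⟩ := union_dense hr hF h1 h2 hne hk1 hk2 hC1 hC2 hinter
  have hK : DSupp (DGraph.union G₁ G₂) := dsupp_union (dcycle_supp hC1.1 h1) (dcycle_supp hC2.1 h2)
  have hB : 0 < (r.factorial : ℝ) / (autCard F : ℝ) := by
    have := autCard_pos F
    positivity
  have hεm : ε * (((G₁.2.1 ∪ G₂.2.1).card + (G₁.2.2 ∪ G₂.2.2).card : ℕ) : ℝ) < 1 := by
    have hm' : (((G₁.2.1 ∪ G₂.2.1).card + (G₁.2.2 ∪ G₂.2.2).card : ℕ) : ℝ) ≤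
        2 * (edgeCnt F : ℝ) ^ 2 + 2 := by exact_mod_cast hm
    rw [le_div_iff₀ (by positivity)] at hε0
    nlinarith
  have hlim := asym he hd hδ hεm hB π hπ0 hπ
  have hev : ∀ᶠ n : ℕ in atTop, 0 ≤ dgExp r n F
      ((π n / (1 - (n : ℝ) ^ (-δ))) ^ ((1 : ℝ) / (edgeCnt F : ℝ)))
        (fun U D => (dCopyCount (DGraph.union G₁ G₂) U D : ℝ)) ∧
      dgExp r n F ((π n / (1 - (n : ℝ) ^ (-δ))) ^ ((1 : ℝ) / (edgeCnt F : ℝ)))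
        (fun U D => (dCopyCount (DGraph.union G₁ G₂) U D : ℝ)) ≤
      (n : ℝ) ^ (G₁.1 ∪ G₂.1).card *
        ((π n / (1 - (n : ℝ) ^ (-δ))) ^ ((1 : ℝ) / (edgeCnt F : ℝ))) ^
          ((G₁.2.1 ∪ G₂.2.1).card + (G₁.2.2 ∪ G₂.2.2).card) := by
    filter_upwards [eventually_ge_atTop 1] with n hn
    refine dgExp_le hK F hn (Real.rpow_nonneg (div_nonneg (hπ0 n) ?_) _)
    have : (n : ℝ) ^ (-δ) ≤ 1 :=
      Real.rpow_le_one_of_one_le_of_nonpos (by exact_mod_cast hn) (by linarith)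
    linarith
  exact squeeze_zero' (hev.mono fun n h => h.1) (hev.mono fun n h => h.2) hlim

end
end
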